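/- Let N ≥ 3 and (N-4)/(N-2) < m < (N-2)/N. Let u be a solution of the fast diffusion equation on ℝ^N × (0,T) whose initial value u₀ satisfies (C*T/(k₁+|x|²))^{1/(1-m)} ≤ u₀(x) ≤ (C*T/(k₂+|x|²))^{1/(1-m)} for all x ∈ ℝ^N, for some constants k₁ > k₂ > 0, and suppose that B_{k₁}(x,t) ≤ u(x,t) ≤ B_{k₂}(x,t) for all (x,t) ∈ ℝ^N × (0,T) (as follows from the maximum principle). Then the rescaled solution ũ(·,τ) converges, as τ → ∞, uniformly on ℝ^N and in L¹(ℝ^N), to the rescaled Barenblatt profile B̃_{k₀}, where k₀ > 0 is the unique constant satisfying ∫_{ℝ^N} (u₀(x) - B_{k₀}(x,0)) dx = 0. -/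

import Mathlib

/-!
Write `p = 1/(1-m)`. The condition `m > (N-4)/(N-2)` says exactly that the weight
`(1 + |x|²) ^ (-(p+1))`, to the order of which any two Barenblatt profiles differ at infinity, is
integrable (`Par.tail`). Hence `u - B_k` is integrable for all `k`, its integral is conserved in time
(`Trap.mass`), and as it is strictly monotone and continuous in `k`, there is exactly one `k₀` for
which it vanishes (`Trap.exists_k0`).

*Convergence in `L¹`.* The rescaled solution equals `B̃_K(y)` at `y` for a function `K = K(y, τ)` with
values in `[k₂, k₁]` (`Trap.resc_eq`). The function `K` satisfies a parabolic equation
(`Trap.Kf_evol`), for which a relative entropy `∫ Ψ(K)`, comparable to the integral of `(K - k₀)²`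
against the weight, is nonincreasing and dissipates at the rate of a weighted Dirichlet energy of `K`
(`Trap.ent_local`, `Trap.ent_anti`). The entropy being bounded below, there are arbitrarily late times
at which the Dirichlet energy on a given ball is as small as desired (`Trap.exists_small`), so that by
the Poincaré inequality `K` is close to a constant there (`Trap.near_const`). Conservation of mass
forces this constant to be near `k₀`. So the entropy is small at some late time, hence at all later
times (`Setup.ent_tendsto`), and it controls the `L¹` distance (`Setup.L1_tendsto`).

*Uniform convergence.* Testing the equation for `u - B_{k₀}` with regularized Newtonian kernels
centred at `x₀`, whose Laplacians form an approximate identity, expresses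
`∫ (u^m - B_{k₀}^m)(x₀, t) dt` over a time interval through the Newtonian potentials of `u - B_{k₀}` at
the end points. These are small at the self-similar rate, by the `L¹` convergence and the uniform
bound coming from the trapping (`Setup.newton_small`, `Setup.avg_small`). A comparison argument shows
that `t ↦ t ^ (-p) u(x, t)` is nonincreasing (`Trap.time_mono`), and `B_{k₀}` is explicit, so that
neither function can vary much over an interval of length `δ (T - t)` in the relevant direction:
smallness of time averages gives smallness at each time (`Setup.sandwich`). Uniform continuity of
`z ↦ z ^ (1/m)` finishes the proof.
-/

open MeasureTheory Real Filter Topology RealInnerProductSpace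

noncomputable section

abbrev Euc (N : ℕ) := EuclideanSpace ℝ (Fin N)

/-- Laplacian: trace of the second derivative. -/
def lapl {N : ℕ} (f : Euc N → ℝ) (x : Euc N) : ℝ :=
  ∑ i : Fin N, iteratedFDeriv ℝ 2 f x ![EuclideanSpace.single i 1, EuclideanSpace.single i 1]

/-- The constant C* = 2m(N-2-mN)/(1-m). -/
def Cst (N : ℕ) (m : ℝ) : ℝ := 2 * m * ((N : ℝ) - 2 - m * N) / (1 - m)

/-- β = N/(N-2-Nm). -/
def betaC (N : ℕ) (m : ℝ) : ℝ := (N : ℝ) / ((N : ℝ) - 2 - N * m)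

/-- γ = -β/N. -/
def gammaC (N : ℕ) (m : ℝ) : ℝ := -betaC N m / N

/-- Barenblatt solution with extinction time T. -/
def Bb (N : ℕ) (m T k : ℝ) (x : Euc N) (t : ℝ) : ℝ :=
  (Cst N m * (T - t) / (k * (T - t) ^ (2 * gammaC N m) + ‖x‖ ^ 2)) ^ (1 / (1 - m))

/-- Rescaled Barenblatt profile. -/
def BbTil (N : ℕ) (m k : ℝ) (x : Euc N) : ℝ :=
  (Cst N m / (k + ‖x‖ ^ 2)) ^ (1 / (1 - m))

/-- u is a solution of the fast diffusion equation on ℝ^N × (0,T) with initial value u₀. -/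
def IsFDESol (N : ℕ) (m T : ℝ) (u : Euc N → ℝ → ℝ) (u₀ : Euc N → ℝ) : Prop :=
  (∀ x : Euc N, ∀ t ∈ Set.Ioo (0:ℝ) T, 0 < u x t) ∧
  ContDiffOn ℝ (⊤ : ℕ∞) (fun p : Euc N × ℝ => u p.1 p.2) (Set.univ ×ˢ Set.Ioo (0:ℝ) T) ∧
  ContinuousOn (fun p : Euc N × ℝ => u p.1 p.2) (Set.univ ×ˢ Set.Ico (0:ℝ) T) ∧
  (∀ x, u x 0 = u₀ x) ∧
  (∀ x : Euc N, ∀ t ∈ Set.Ioo (0:ℝ) T,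
    deriv (fun s => u x s) t = lapl (fun y => u y t ^ m) x)

/-- Rescaled solution ũ(x,τ) = (T-t)^(-β) u(x (T-t)^γ, t), τ = -log(T-t). -/
def rescaleSol (N : ℕ) (m T : ℝ) (u : Euc N → ℝ → ℝ) (x : Euc N) (τ : ℝ) : ℝ :=
  Real.exp (betaC N m * τ) * u (Real.exp (-gammaC N m * τ) • x) (T - Real.exp (-τ))

/-- f is radially symmetric. -/
def IsRadial {N : ℕ} (f : Euc N → ℝ) : Prop := ∀ x y : Euc N, ‖x‖ = ‖y‖ → f x = f y

/-! ### Partial derivatives and the Laplacian on Euclidean space -/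

/-- The `i`-th partial derivative on Euclidean space. -/
def pd {N : ℕ} (i : Fin N) (f : Euc N → ℝ) (x : Euc N) : ℝ :=
  fderiv ℝ f x (EuclideanSpace.single i 1)

section calculus
variable {N : ℕ}

lemma lapl_eq {f : Euc N → ℝ} (hf : ContDiff ℝ 2 f) (x : Euc N) :
    lapl f x = ∑ i, pd i (pd i f) x := by
  unfold lapl
  refine Finset.sum_congr rfl fun i _ => ?_
  rw [iteratedFDeriv_two_apply]
  unfold pd
  have h1 : DifferentiableAt ℝ (fderiv ℝ f) x :=
    (hf.fderiv_right (m := 1) (by norm_num)).differentiable (by norm_num) x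
  have h2 : HasFDerivAt (fun y => fderiv ℝ f y (EuclideanSpace.single i 1))
      ((ContinuousLinearMap.apply ℝ ℝ (EuclideanSpace.single i (1:ℝ))).comp
        (fderiv ℝ (fderiv ℝ f) x)) x :=
    (ContinuousLinearMap.apply ℝ ℝ (EuclideanSpace.single i (1:ℝ))).hasFDerivAt.comp x
      h1.hasFDerivAt
  rw [h2.fderiv]
  simp

lemma ContDiff.pd {n : WithTop ℕ∞} {k : WithTop ℕ∞} {f : Euc N → ℝ} (hf : ContDiff ℝ n f)
    (hk : k + 1 ≤ n) (i : Fin N) : ContDiff ℝ k (pd i f) :=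
  (hf.fderiv_right hk).clm_apply contDiff_const

lemma pd_add {f g : Euc N → ℝ} {x : Euc N} (i : Fin N) (hf : DifferentiableAt ℝ f x)
    (hg : DifferentiableAt ℝ g x) : pd i (fun y => f y + g y) x = pd i f x + pd i g x := by
  unfold pd; rw [fderiv_fun_add hf hg]; rfl

lemma pd_sub {f g : Euc N → ℝ} {x : Euc N} (i : Fin N) (hf : DifferentiableAt ℝ f x)
    (hg : DifferentiableAt ℝ g x) : pd i (fun y => f y - g y) x = pd i f x - pd i g x := by
  unfold pd; rw [fderiv_fun_sub hf hg]; rfl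

lemma pd_mul {f g : Euc N → ℝ} {x : Euc N} (i : Fin N) (hf : DifferentiableAt ℝ f x)
    (hg : DifferentiableAt ℝ g x) :
    pd i (fun y => f y * g y) x = f x * pd i g x + pd i f x * g x := by
  unfold pd; rw [fderiv_fun_mul hf hg]; simp [mul_comm]

lemma pd_const_mul {f : Euc N → ℝ} {x : Euc N} (i : Fin N) (c : ℝ) :
    pd i (fun y => c * f y) x = c * pd i f x := by
  unfold pd
  have : (fun y => c * f y) = c • f := rfl
  rw [this, fderiv_const_smul_field]; simp

lemma pd_const (i : Fin N) (c : ℝ) (x : Euc N) : pd i (fun _ => c) x = 0 := by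
  unfold pd; simp

lemma pd_comp {f : Euc N → ℝ} {x : Euc N} (i : Fin N) {g : ℝ → ℝ} {g' : ℝ}
    (hg : HasDerivAt g g' (f x)) (hf : DifferentiableAt ℝ f x) :
    pd i (fun y => g (f y)) x = g' * pd i f x := by
  unfold pd
  have h : HasFDerivAt (fun y => g (f y)) (g' • fderiv ℝ f x) x :=
    hg.comp_hasFDerivAt x hf.hasFDerivAt
  rw [h.fderiv]; simp

lemma pd_rpow {f : Euc N → ℝ} {x : Euc N} (i : Fin N) (r : ℝ) (hx : 0 < f x)
    (hf : DifferentiableAt ℝ f x) :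
    pd i (fun y => f y ^ r) x = r * f x ^ (r - 1) * pd i f x :=
  pd_comp i (Real.hasDerivAt_rpow_const (Or.inl hx.ne')) hf

lemma pd_normsq (i : Fin N) (x : Euc N) : pd i (fun y => ‖y‖ ^ 2) x = 2 * x i := by
  unfold pd
  rw [(hasStrictFDerivAt_norm_sq x).hasFDerivAt.fderiv]
  simp [EuclideanSpace.inner_single_right]

lemma pd_coord (i : Fin N) (x : Euc N) : pd i (fun y : Euc N => y i) x = 1 := by
  unfold pd
  have h : HasFDerivAt (fun y : Euc N => y i) (EuclideanSpace.proj i : Euc N →L[ℝ] ℝ) x :=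
    (EuclideanSpace.proj i : Euc N →L[ℝ] ℝ).hasFDerivAt
  rw [h.fderiv]; simp

lemma pd_affine {f : Euc N → ℝ} {x : Euc N} (i : Fin N) (a : ℝ) (b : Euc N)
    (hf : DifferentiableAt ℝ f (a • x + b)) :
    pd i (fun y => f (a • y + b)) x = a * pd i f (a • x + b) := by
  unfold pd
  have h : HasFDerivAt (fun y : Euc N => a • y + b) (a • ContinuousLinearMap.id ℝ (Euc N)) x := by
    exact ((hasFDerivAt_id x).const_smul a).add_const b
  have h2 : HasFDerivAt (fun y => f (a • y + b)) ((fderiv ℝ f (a • x + b)).comp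
      (a • ContinuousLinearMap.id ℝ (Euc N))) x := hf.hasFDerivAt.comp x h
  rw [h2.fderiv]
  simp

lemma fderiv_eq_sum (f : Euc N → ℝ) (x v : Euc N) :
    fderiv ℝ f x v = ∑ i, v i * pd i f x := by
  have hv : v = ∑ i, v i • (EuclideanSpace.single i (1:ℝ) : Euc N) := by
    have := (EuclideanSpace.basisFun (Fin N) ℝ).sum_repr v
    simpa using this.symm
  conv_lhs => rw [hv]
  simp [pd, map_sum]

lemma normsq_eq_sum (x : Euc N) : ‖x‖ ^ 2 = ∑ i, x i ^ 2 := by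
  rw [EuclideanSpace.norm_sq_eq]; simp

lemma pd_ext_ev {f g : Euc N → ℝ} {x : Euc N} (i : Fin N) (h : f =ᶠ[𝓝 x] g) :
    pd i f x = pd i g x := by
  unfold pd; rw [h.fderiv_eq]

lemma abs_coord_le (x : Euc N) (i : Fin N) : |x i| ≤ ‖x‖ := by
  have := PiLp.norm_apply_le x i
  simpa using this

/-- The Laplacian of a product. -/
lemma lapl_mul {f g : Euc N → ℝ} (hf : ContDiff ℝ 2 f) (hg : ContDiff ℝ 2 g) (x : Euc N) :
    lapl (fun y => f y * g y) x
      = f x * lapl g x + 2 * ∑ i, pd i f x * pd i g x + lapl f x * g x := by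
  rw [lapl_eq (hf.mul hg), lapl_eq hf, lapl_eq hg, Finset.mul_sum, Finset.mul_sum, Finset.sum_mul,
    ← Finset.sum_add_distrib, ← Finset.sum_add_distrib]
  refine Finset.sum_congr rfl fun i _ => ?_
  have df := hf.differentiable (by norm_num)
  have dg := hg.differentiable (by norm_num)
  have df' := (hf.pd (k := 1) (by norm_num) i).differentiable (by norm_num)
  have dg' := (hg.pd (k := 1) (by norm_num) i).differentiable (by norm_num)
  have h1 : pd i (fun y => f y * g y) = fun y => f y * pd i g y + pd i f y * g y := by
    funext y; exact pd_mul i (df y) (dg y)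
  rw [h1, pd_add i (f := fun y => f y * pd i g y) (g := fun y => pd i f y * g y)
    ((df x).mul (dg' x)) ((df' x).mul (dg x)), pd_mul i (df x) (dg' x),
    pd_mul i (df' x) (dg x)]
  ring

lemma lapl_sub {f g : Euc N → ℝ} (hf : ContDiff ℝ 2 f) (hg : ContDiff ℝ 2 g) (x : Euc N) :
    lapl (fun y => f y - g y) x = lapl f x - lapl g x := by
  rw [lapl_eq (hf.sub hg), lapl_eq hf, lapl_eq hg, ← Finset.sum_sub_distrib]
  refine Finset.sum_congr rfl fun i _ => ?_
  have df := hf.differentiable (by norm_num)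
  have dg := hg.differentiable (by norm_num)
  have df' := (hf.pd (k := 1) (by norm_num) i).differentiable (by norm_num)
  have dg' := (hg.pd (k := 1) (by norm_num) i).differentiable (by norm_num)
  have h1 : pd i (fun y => f y - g y) = fun y => pd i f y - pd i g y := by
    funext y; exact pd_sub i (df y) (dg y)
  rw [h1, pd_sub i (df' x) (dg' x)]

lemma lapl_const_mul {f : Euc N → ℝ} (hf : ContDiff ℝ 2 f) (c : ℝ) (x : Euc N) :
    lapl (fun y => c * f y) x = c * lapl f x := by
  rw [lapl_eq (contDiff_const.mul hf), lapl_eq hf, Finset.mul_sum]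
  refine Finset.sum_congr rfl fun i _ => ?_
  have h1 : pd i (fun y => c * f y) = fun y => c * pd i f y := by
    funext y; exact pd_const_mul i c
  rw [h1, pd_const_mul]

lemma lapl_affine {f : Euc N → ℝ} (hf : ContDiff ℝ 2 f) (a : ℝ) (b x : Euc N) :
    lapl (fun y => f (a • y + b)) x = a ^ 2 * lapl f (a • x + b) := by
  have hA : ContDiff ℝ 2 (fun y : Euc N => a • y + b) :=
    (contDiff_id.const_smul a).add contDiff_const
  have hc : ContDiff ℝ 2 (fun y : Euc N => f (a • y + b)) := hf.comp hA
  rw [lapl_eq hc, lapl_eq hf, Finset.mul_sum]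
  refine Finset.sum_congr rfl fun i _ => ?_
  have df := hf.differentiable (by norm_num)
  have df' := (hf.pd (k := 1) (by norm_num) i).differentiable (by norm_num)
  have h1 : pd i (fun y => f (a • y + b)) = fun y => a * pd i f (a • y + b) := by
    funext y; exact pd_affine i a b (df _)
  rw [h1, pd_const_mul, pd_affine i a b (df' _)]
  ring

/-- Laplacian of the bubbles `(a + |x|²)^r`, which covers both the Barenblatt profiles and the
regularized fundamental solution. -/
lemma lapl_bubble {a : ℝ} (ha : 0 < a) (r : ℝ) (x : Euc N) :
    lapl (fun y => (a + ‖y‖ ^ 2) ^ r) x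
      = 2 * r * N * (a + ‖x‖ ^ 2) ^ (r - 1)
        + 4 * r * (r - 1) * ‖x‖ ^ 2 * (a + ‖x‖ ^ 2) ^ (r - 2) := by
  have hpos : ∀ y : Euc N, 0 < a + ‖y‖ ^ 2 := fun y => by positivity
  have hq : ContDiff ℝ 2 (fun y : Euc N => a + ‖y‖ ^ 2) :=
    contDiff_const.add (contDiff_norm_sq ℝ)
  have dq := hq.differentiable (by norm_num)
  have hr : ∀ s : ℝ, ContDiff ℝ 2 (fun y : Euc N => (a + ‖y‖ ^ 2) ^ s) :=
    fun s => hq.rpow_const_of_ne fun y => (hpos y).ne'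
  rw [lapl_eq (hr r)]
  have pdq : ∀ (i : Fin N) y, pd i (fun y : Euc N => a + ‖y‖ ^ 2) y = 2 * y i := by
    intro i y
    rw [pd_add i (differentiableAt_const _) ((contDiff_norm_sq ℝ).differentiable (n := 2)
      (by norm_num) y), pd_const, pd_normsq, zero_add]
  have h1 : ∀ i : Fin N, pd i (fun y : Euc N => (a + ‖y‖ ^ 2) ^ r)
      = fun y => (2 * r) * (y i * (a + ‖y‖ ^ 2) ^ (r - 1)) := by
    intro i; funext y
    rw [pd_rpow i r (hpos y) (dq y), pdq]; ring
  have h2 : ∀ i : Fin N, pd i (pd i (fun y : Euc N => (a + ‖y‖ ^ 2) ^ r)) x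
      = 2 * r * (a + ‖x‖ ^ 2) ^ (r - 1)
        + 4 * r * (r - 1) * (a + ‖x‖ ^ 2) ^ (r - 2) * x i ^ 2 := by
    intro i
    have hc : DifferentiableAt ℝ (fun y : Euc N => y i) x :=
      (EuclideanSpace.proj i : Euc N →L[ℝ] ℝ).differentiableAt
    rw [h1, pd_const_mul, pd_mul i hc ((hr (r - 1)).differentiable (by norm_num) x), pd_coord,
      pd_rpow i (r - 1) (hpos x) (dq x), pdq, show r - 1 - 1 = r - 2 by ring]
    ring
  simp_rw [h2]
  rw [Finset.sum_add_distrib, ← Finset.mul_sum, ← Finset.mul_sum, ← normsq_eq_sum]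
  simp
  ring

/-- Second-derivative test at a global minimum. -/
lemma lapl_nonneg_of_min {f : Euc N → ℝ} (hf : ContDiff ℝ 2 f) {x : Euc N}
    (hx : ∀ y, f x ≤ f y) : 0 ≤ lapl f x := by
  rw [lapl_eq hf]
  refine Finset.sum_nonneg fun i _ => ?_
  by_contra hneg
  push Not at hneg
  set e : Euc N := EuclideanSpace.single i 1
  set φ : ℝ → ℝ := fun s => f (x + s • e)
  have hl : ∀ s : ℝ, HasDerivAt (fun s : ℝ => x + s • e) e s := by
    intro s
    simpa using ((hasDerivAt_id s).smul_const e).const_add x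
  have hder : ∀ (g : Euc N → ℝ), Differentiable ℝ g → ∀ s,
      HasDerivAt (fun s : ℝ => g (x + s • e)) (pd i g (x + s • e)) s := by
    intro g hg s
    exact (hg (x + s • e)).hasFDerivAt.comp_hasDerivAt s (hl s)
  have d1 : deriv φ = fun s => pd i f (x + s • e) := by
    funext s; exact (hder f (hf.differentiable (by norm_num)) s).deriv
  have d2 : deriv (deriv φ) 0 = pd i (pd i f) x := by
    rw [d1, (hder (pd i f) ((hf.pd (k := 1) (by norm_num) i).differentiable (by norm_num)) 0).deriv]
    simp
  have hmin : IsLocalMin φ 0 := by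
    refine Filter.Eventually.of_forall fun s => ?_
    simpa [φ] using hx (x + s • e)
  have hcont : ContinuousAt φ 0 :=
    (hder f (hf.differentiable (by norm_num)) 0).continuousAt
  have hmax : IsLocalMax φ 0 :=
    isLocalMax_of_deriv_deriv_neg (by rw [d2]; exact hneg) hmin.deriv_eq_zero hcont
  have hconst : φ =ᶠ[𝓝 0] fun _ => φ 0 := by
    filter_upwards [hmin, hmax] with s h1 h2 using le_antisymm h2 h1
  have : deriv (deriv φ) 0 = 0 := by
    have h3 : deriv φ =ᶠ[𝓝 0] deriv (fun _ => φ 0) := hconst.deriv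
    rw [h3.deriv_eq]; simp
  rw [d2] at this
  exact hneg.ne this

/-- Integration by parts against a compactly supported factor. -/
lemma ibp {f g : Euc N → ℝ} (hf : ContDiff ℝ 1 f) (hg : ContDiff ℝ 1 g)
    (hc : HasCompactSupport f) (i : Fin N) :
    ∫ x, f x * pd i g x = - ∫ x, pd i f x * g x := by
  have cf := hf.continuous
  have cg := hg.continuous
  have cf' : Continuous (pd i f) := (hf.pd (k := 0) (by norm_num) i).continuous
  have cg' : Continuous (pd i g) := (hg.pd (k := 0) (by norm_num) i).continuous
  have hc' : HasCompactSupport (pd i f) := by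
    exact (hc.fderiv_apply ℝ (EuclideanSpace.single i 1))
  refine integral_mul_fderiv_eq_neg_fderiv_mul_of_integrable
    ((cf'.mul cg).integrable_of_hasCompactSupport hc'.mul_right)
    ((cf.mul cg').integrable_of_hasCompactSupport hc.mul_right)
    ((cf.mul cg).integrable_of_hasCompactSupport hc.mul_right)
    (fun x _ => hf.differentiable (by norm_num) x) (fun x _ => hg.differentiable (by norm_num) x)

lemma HasCompactSupport.pd {f : Euc N → ℝ} (hc : HasCompactSupport f) (i : Fin N) :
    HasCompactSupport (pd i f) := hc.fderiv_apply ℝ (EuclideanSpace.single i 1)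

/-- The symmetry of the Laplacian, one of the two factors being compactly supported. -/
lemma lapl_ibp {f g : Euc N → ℝ} (hf : ContDiff ℝ 2 f) (hg : ContDiff ℝ 2 g)
    (hc : HasCompactSupport f) :
    ∫ x, f x * lapl g x = ∫ x, g x * lapl f x := by
  have cf := hf.continuous
  have cg := hg.continuous
  have hf1 := hf.of_le (show (1 : WithTop ℕ∞) ≤ 2 by norm_num)
  have hg1 := hg.of_le (show (1 : WithTop ℕ∞) ≤ 2 by norm_num)
  have hfi := fun i => hf.pd (k := 1) (by norm_num) i
  have hgi := fun i => hg.pd (k := 1) (by norm_num) i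
  have hgii := fun i => ((hgi i).pd (k := 0) (by norm_num) i).continuous
  have hfii := fun i => ((hfi i).pd (k := 0) (by norm_num) i).continuous
  simp_rw [lapl_eq hf, lapl_eq hg, Finset.mul_sum]
  rw [integral_finsetSum (f := fun i x => f x * pd i (pd i g) x) _ fun i _ =>
      (cf.mul (hgii i)).integrable_of_hasCompactSupport hc.mul_right,
    integral_finsetSum (f := fun i x => g x * pd i (pd i f) x) _ fun i _ =>
      (cg.mul (hfii i)).integrable_of_hasCompactSupport ((hc.pd i).pd i).mul_left]
  refine Finset.sum_congr rfl fun i _ => ?_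
  rw [ibp hf1 (hgi i) hc i]
  have := ibp (hfi i) hg1 (hc.pd i) i
  rw [this, neg_neg]
  exact integral_congr_ae (Eventually.of_forall fun x => mul_comm _ _)

end calculus

/-! ### Space-time calculus and cutoff functions -/

section spacetime
variable {N : ℕ}

lemma slice_contDiff {w : Euc N → ℝ → ℝ} {S : Set ℝ}
    (hw : ContDiffOn ℝ (⊤ : ℕ∞) (fun p : Euc N × ℝ => w p.1 p.2) (Set.univ ×ˢ S))
    {t : ℝ} (ht : t ∈ S) : ContDiff ℝ (⊤ : ℕ∞) (fun x => w x t) := by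
  have h : ContDiff ℝ (⊤ : ℕ∞) (fun x : Euc N => (x, t)) := contDiff_id.prodMk contDiff_const
  have := hw.comp (s := Set.univ) h.contDiffOn (fun x _ => ⟨trivial, ht⟩)
  exact contDiffOn_univ.1 this

lemma joint_hasFDerivAt {w : Euc N → ℝ → ℝ} {S : Set ℝ} (hS : IsOpen S)
    (hw : ContDiffOn ℝ (⊤ : ℕ∞) (fun p : Euc N × ℝ => w p.1 p.2) (Set.univ ×ˢ S))
    {t : ℝ} (ht : t ∈ S) (x : Euc N) :
    HasFDerivAt (fun p : Euc N × ℝ => w p.1 p.2)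
      (fderiv ℝ (fun p : Euc N × ℝ => w p.1 p.2) (x, t)) (x, t) :=
  ((hw.contDiffAt ((isOpen_univ.prod hS).mem_nhds ⟨trivial, ht⟩)).differentiableAt
    (by simp)).hasFDerivAt

lemma slice_hasDerivAt' {w : Euc N → ℝ → ℝ} {S : Set ℝ} (hS : IsOpen S)
    (hw : ContDiffOn ℝ (⊤ : ℕ∞) (fun p : Euc N × ℝ => w p.1 p.2) (Set.univ ×ˢ S))
    {t : ℝ} (ht : t ∈ S) (x : Euc N) :
    HasDerivAt (fun s => w x s) (fderiv ℝ (fun p : Euc N × ℝ => w p.1 p.2) (x, t) (0, 1)) t := by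
  have h : HasDerivAt (fun s : ℝ => ((x, s) : Euc N × ℝ)) (0, 1) t :=
    (hasDerivAt_const t x).prodMk (hasDerivAt_id t)
  exact (joint_hasFDerivAt hS hw ht x).comp_hasDerivAt t h

lemma slice_hasDerivAt {w : Euc N → ℝ → ℝ} {S : Set ℝ} (hS : IsOpen S)
    (hw : ContDiffOn ℝ (⊤ : ℕ∞) (fun p : Euc N × ℝ => w p.1 p.2) (Set.univ ×ˢ S))
    {t : ℝ} (ht : t ∈ S) (x : Euc N) :
    HasDerivAt (fun s => w x s) (deriv (fun s => w x s) t) t :=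
  (slice_hasDerivAt' hS hw ht x).differentiableAt.hasDerivAt

lemma slice_deriv_continuousOn {w : Euc N → ℝ → ℝ} {S : Set ℝ} (hS : IsOpen S)
    (hw : ContDiffOn ℝ (⊤ : ℕ∞) (fun p : Euc N × ℝ => w p.1 p.2) (Set.univ ×ˢ S)) :
    ContinuousOn (fun p : Euc N × ℝ => deriv (fun s => w p.1 s) p.2) (Set.univ ×ˢ S) := by
  have h := hw.continuousOn_fderiv_of_isOpen (isOpen_univ.prod hS) (by simp)
  refine (h.clm_apply (continuousOn_const (c := ((0 : Euc N), (1:ℝ))))).congr ?_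
  rintro ⟨x, t⟩ ⟨-, ht⟩
  exact (slice_hasDerivAt' hS hw ht x).deriv

/-- Chain rule for a smooth space-time function along a differentiable curve. -/
lemma joint_hasDerivAt_curve {w : Euc N → ℝ → ℝ} {S : Set ℝ} (hS : IsOpen S)
    (hw : ContDiffOn ℝ (⊤ : ℕ∞) (fun p : Euc N × ℝ => w p.1 p.2) (Set.univ ×ˢ S))
    {X : ℝ → Euc N} {θ : ℝ → ℝ} {X' : Euc N} {θ' r : ℝ} (hr : θ r ∈ S)
    (hX : HasDerivAt X X' r) (hθ : HasDerivAt θ θ' r) :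
    HasDerivAt (fun s => w (X s) (θ s))
      ((∑ i, X' i * pd i (fun y => w y (θ r)) (X r))
        + θ' * deriv (fun s => w (X r) s) (θ r)) r := by
  have h := (joint_hasFDerivAt hS hw hr (X r))
  have h1 := h.comp_hasDerivAt r (hX.prodMk hθ)
  have h2 : fderiv ℝ (fun y => w y (θ r)) (X r) X'
      = fderiv ℝ (fun p : Euc N × ℝ => w p.1 p.2) (X r, θ r) (X', 0) := by
    have h3 : HasFDerivAt (fun y : Euc N => (y, θ r)) (ContinuousLinearMap.inl ℝ (Euc N) ℝ) (X r) :=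
      hasFDerivAt_prodMk_left (X r) (θ r)
    have h4 : HasFDerivAt (fun y => w y (θ r))
      ((fderiv ℝ (fun p : Euc N × ℝ => w p.1 p.2) (X r, θ r)).comp
        (ContinuousLinearMap.inl ℝ (Euc N) ℝ)) (X r) :=
      HasFDerivAt.comp (g := fun p : Euc N × ℝ => w p.1 p.2) (X r) h h3
    rw [h4.fderiv]; simp
  rw [← fderiv_eq_sum, h2, (slice_hasDerivAt' hS hw hr (X r)).deriv]
  have h5 : ((X', θ') : Euc N × ℝ) = (X', 0) + θ' • (0, 1) := by simp
  rw [h5, map_add, map_smul, smul_eq_mul] at h1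
  exact h1

/-- The fundamental theorem of calculus in time combined with Fubini, for a time derivative that
is supported in a fixed ball. -/
lemma fub {F G : Euc N → ℝ → ℝ} {a b R : ℝ} (hab : a ≤ b)
    (hF : ∀ x, ∀ t ∈ Set.Icc a b, HasDerivAt (F x) (G x t) t)
    (hG : ContinuousOn (fun p : Euc N × ℝ => G p.1 p.2) (Set.univ ×ˢ Set.Icc a b))
    (hs : ∀ x, R < ‖x‖ → ∀ t ∈ Set.Icc a b, G x t = 0)
    (ia : Integrable (fun x => F x a)) (ib : Integrable (fun x => F x b)) :
    (∫ x, F x b) - ∫ x, F x a = (∫ t in a..b, ∫ x, G x t) ∧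
      IntervalIntegrable (fun t => ∫ x, G x t) volume a b := by
  have hK : IntegrableOn (fun p : Euc N × ℝ => G p.1 p.2)
      (Metric.closedBall (0 : Euc N) R ×ˢ Set.Icc a b) (volume.prod volume) :=
    (hG.mono (Set.prod_mono_left (Set.subset_univ _))).integrableOn_compact
      ((isCompact_closedBall _ _).prod isCompact_Icc)
  have hU : IntegrableOn (fun p : Euc N × ℝ => G p.1 p.2)
      (Set.univ ×ˢ Set.Icc a b) (volume.prod volume) := by
    refine hK.of_forall_sdiff_eq_zero (MeasurableSet.univ.prod measurableSet_Icc) ?_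
    rintro ⟨x, t⟩ ⟨⟨-, ht⟩, hn⟩
    refine hs x ?_ t ht
    by_contra hle
    exact hn ⟨by simpa using hle, ht⟩
  have hI : Integrable (fun p : Euc N × ℝ => G p.1 p.2)
      (volume.prod (volume.restrict (Set.uIoc a b))) := by
    have : IntegrableOn (fun p : Euc N × ℝ => G p.1 p.2)
      (Set.univ ×ˢ Set.Ioc a b) (volume.prod volume) :=
      hU.mono_set (Set.prod_mono_right Set.Ioc_subset_Icc_self)
    rwa [IntegrableOn, ← Measure.prod_restrict, Measure.restrict_univ, ← Set.uIoc_of_le hab] at this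
  have hI' : Integrable (Function.uncurry fun t x => G x t)
      ((volume.restrict (Set.uIoc a b)).prod volume) := hI.swap
  constructor
  · rw [intervalIntegral_integral_swap hI', ← integral_sub ib ia]
    refine integral_congr_ae (Eventually.of_forall fun x => ?_)
    have hc : ContinuousOn (fun t => G x t) (Set.uIcc a b) := by
      rw [Set.uIcc_of_le hab]
      exact hG.comp (f := fun t => (x, t)) (by fun_prop) (fun t ht => ⟨trivial, ht⟩)
    exact (intervalIntegral.integral_eq_sub_of_hasDerivAt
      (fun t ht => hF x t (by rwa [Set.uIcc_of_le hab] at ht)) hc.intervalIntegrable).symm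
  · rw [intervalIntegrable_iff]
    exact hI'.integral_prod_left

end spacetime

section cutoff
variable {N : ℕ}

/-- A fixed smooth bump equal to `1` on the unit ball and supported in the ball of radius `2`. -/
def bump0 (N : ℕ) : ContDiffBump (0 : Euc N) := ⟨1, 2, one_pos, one_lt_two⟩

/-- The cutoff function at scale `R`. -/
def cutR (N : ℕ) (R : ℝ) (x : Euc N) : ℝ := bump0 N (R⁻¹ • x + 0)

lemma cutR_contDiff (R : ℝ) {n : ℕ∞} : ContDiff ℝ n (cutR N R) := by
  unfold cutR
  have : ContDiff ℝ n (fun x : Euc N => R⁻¹ • x + 0) :=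
    (contDiff_id.const_smul R⁻¹).add contDiff_const
  exact (bump0 N).contDiff.comp this

lemma cutR_nonneg (R : ℝ) (x : Euc N) : 0 ≤ cutR N R x := (bump0 N).nonneg

lemma cutR_le_one (R : ℝ) (x : Euc N) : cutR N R x ≤ 1 := (bump0 N).le_one

lemma cutR_eq_one {R : ℝ} (hR : 0 < R) {x : Euc N} (hx : ‖x‖ ≤ R) : cutR N R x = 1 := by
  unfold cutR
  refine (bump0 N).one_of_mem_closedBall ?_
  simp only [add_zero, Metric.mem_closedBall, dist_zero_right, norm_smul, norm_inv, Real.norm_eq_abs,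
    abs_of_pos hR, bump0]
  rw [inv_mul_le_iff₀ hR]; linarith

lemma cutR_eq_zero {R : ℝ} (hR : 0 < R) {x : Euc N} (hx : 2 * R ≤ ‖x‖) : cutR N R x = 0 := by
  unfold cutR
  refine (bump0 N).zero_of_le_dist ?_
  simp only [add_zero, dist_zero_right, norm_smul, norm_inv, Real.norm_eq_abs,
    abs_of_pos hR, bump0]
  rw [le_inv_mul_iff₀ hR]; linarith

lemma cutR_compact {R : ℝ} (hR : 0 < R) : HasCompactSupport (cutR N R) := by
  refine HasCompactSupport.of_support_subset_isCompact (isCompact_closedBall (0 : Euc N) (2 * R)) ?_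
  intro x hx
  by_contra h
  refine hx (cutR_eq_zero hR ?_)
  simp at h; exact h.le

lemma cutR_ev_one {R : ℝ} (hR : 0 < R) {x : Euc N} (hx : ‖x‖ < R) :
    cutR N R =ᶠ[𝓝 x] fun _ => 1 := by
  filter_upwards [(isOpen_lt continuous_norm continuous_const).mem_nhds hx] with y hy
  exact cutR_eq_one hR (le_of_lt hy)

lemma cutR_ev_zero {R : ℝ} (hR : 0 < R) {x : Euc N} (hx : 2 * R < ‖x‖) :
    cutR N R =ᶠ[𝓝 x] fun _ => 0 := by
  filter_upwards [(isOpen_lt continuous_const continuous_norm).mem_nhds hx] with y hy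
  exact cutR_eq_zero hR (le_of_lt hy)

lemma pd_cutR_inner {R : ℝ} (hR : 0 < R) {x : Euc N} (hx : ‖x‖ < R) (i : Fin N) :
    pd i (cutR N R) x = 0 := by
  rw [pd_ext_ev i (cutR_ev_one hR hx), pd_const]

lemma pd_cutR_outer {R : ℝ} (hR : 0 < R) {x : Euc N} (hx : 2 * R < ‖x‖) (i : Fin N) :
    pd i (cutR N R) x = 0 := by
  rw [pd_ext_ev i (cutR_ev_zero hR hx), pd_const]

lemma lapl_ext_ev {f g : Euc N → ℝ} (hf : ContDiff ℝ 2 f) (hg : ContDiff ℝ 2 g) {x : Euc N}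
    (h : f =ᶠ[𝓝 x] g) : lapl f x = lapl g x := by
  rw [lapl_eq hf, lapl_eq hg]
  refine Finset.sum_congr rfl fun i _ => pd_ext_ev i ?_
  filter_upwards [h.eventuallyEq_nhds] with y hy using pd_ext_ev i hy

lemma lapl_const (c : ℝ) (x : Euc N) : lapl (fun _ : Euc N => c) x = 0 := by
  rw [lapl_eq contDiff_const]
  refine Finset.sum_eq_zero fun i _ => ?_
  have : pd i (fun _ : Euc N => c) = fun _ => 0 := by funext y; exact pd_const i c y
  rw [this, pd_const]

lemma lapl_cutR_inner {R : ℝ} (hR : 0 < R) {x : Euc N} (hx : ‖x‖ < R) :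
    lapl (cutR N R) x = 0 := by
  rw [lapl_ext_ev (cutR_contDiff R) contDiff_const (cutR_ev_one hR hx), lapl_const]

lemma lapl_cutR_outer {R : ℝ} (hR : 0 < R) {x : Euc N} (hx : 2 * R < ‖x‖) :
    lapl (cutR N R) x = 0 := by
  rw [lapl_ext_ev (cutR_contDiff R) contDiff_const (cutR_ev_zero hR hx), lapl_const]

lemma lapl_continuous {f : Euc N → ℝ} (hf : ContDiff ℝ 2 f) : Continuous (lapl f) := by
  have : lapl f = fun x => ∑ i, pd i (pd i f) x := funext (lapl_eq hf)
  rw [this]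
  exact continuous_finsetSum _ fun i _ =>
    ((hf.pd (k := 1) (by norm_num) i).pd (k := 0) (by norm_num) i).continuous

/-- The cutoffs have scale-invariant derivative bounds. -/
lemma cutR_bounds (N : ℕ) : ∃ M : ℝ, 0 < M ∧ ∀ R : ℝ, 1 ≤ R → ∀ x : Euc N,
    (∀ i, (pd i (cutR N R) x) ^ 2 * (1 + ‖x‖ ^ 2) ≤ M) ∧
    |lapl (cutR N R) x| * (1 + ‖x‖ ^ 2) ≤ M := by
  have hb : ContDiff ℝ 2 (bump0 N) := (bump0 N).contDiff
  have hbc : HasCompactSupport (bump0 N) := (bump0 N).hasCompactSupport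
  have h1 : ∀ i : Fin N, ∃ A, ∀ x, ‖pd i (bump0 N) x‖ ≤ A := fun i =>
    (hbc.pd i).exists_bound_of_continuous (hb.pd (k := 1) (by norm_num) i).continuous
  choose A hA using h1
  have hlc : HasCompactSupport (lapl (bump0 N)) := by
    refine HasCompactSupport.of_support_subset_isCompact
      (isCompact_closedBall (0 : Euc N) 2) fun x hx => ?_
    by_contra h
    refine hx ?_
    have hx2 : 2 < ‖x‖ := by simpa using h
    have : (bump0 N : Euc N → ℝ) =ᶠ[𝓝 x] fun _ => 0 := by
      filter_upwards [(isOpen_lt continuous_const continuous_norm).mem_nhds hx2] with y hy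
      exact (bump0 N).zero_of_le_dist (by simpa [bump0] using (le_of_lt hy))
    rw [lapl_ext_ev hb contDiff_const this, lapl_const]
  obtain ⟨L, hL⟩ := hlc.exists_bound_of_continuous (lapl_continuous hb)
  have hL0 : 0 ≤ L := (norm_nonneg _).trans (hL 0)
  refine ⟨5 * (∑ i, A i ^ 2 + L) + 1, by positivity, fun R hR x => ?_⟩
  have hR0 : 0 < R := by linarith
  have hx5 : ‖x‖ ≤ 2 * R → 1 + ‖x‖ ^ 2 ≤ 5 * R ^ 2 := by
    intro h; nlinarith [norm_nonneg x]
  constructor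
  · intro i
    rcases lt_or_ge (2 * R) ‖x‖ with h | h
    · rw [pd_cutR_outer hR0 h]; simp; positivity
    · have e : pd i (cutR N R) x = R⁻¹ * pd i (bump0 N) (R⁻¹ • x + 0) :=
        pd_affine i R⁻¹ 0 (hb.differentiable (by norm_num) _)
      rw [e]
      have hAi : (pd i (bump0 N) (R⁻¹ • x + 0)) ^ 2 ≤ A i ^ 2 := by
        rw [← sq_abs]; exact pow_le_pow_left₀ (abs_nonneg _) (hA i _) 2
      have hs : A i ^ 2 ≤ ∑ i, A i ^ 2 :=
        Finset.single_le_sum (f := fun i => A i ^ 2) (fun _ _ => sq_nonneg _) (Finset.mem_univ i)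
      calc (R⁻¹ * pd i (bump0 N) (R⁻¹ • x + 0)) ^ 2 * (1 + ‖x‖ ^ 2)
          ≤ (R⁻¹ * pd i (bump0 N) (R⁻¹ • x + 0)) ^ 2 * (5 * R ^ 2) := by gcongr; exact hx5 h
        _ = 5 * (pd i (bump0 N) (R⁻¹ • x + 0)) ^ 2 := by field_simp
        _ ≤ _ := by linarith
  · rcases lt_or_ge (2 * R) ‖x‖ with h | h
    · rw [lapl_cutR_outer hR0 h]; simp; positivity
    · have e : lapl (cutR N R) x = R⁻¹ ^ 2 * lapl (bump0 N) (R⁻¹ • x + 0) :=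
        lapl_affine hb R⁻¹ 0 x
      rw [e, abs_mul, abs_of_nonneg (by positivity)]
      have hl := hL (R⁻¹ • x + 0)
      rw [Real.norm_eq_abs] at hl
      have hs : 0 ≤ ∑ i, A i ^ 2 := Finset.sum_nonneg fun _ _ => sq_nonneg _
      calc R⁻¹ ^ 2 * |lapl (bump0 N) (R⁻¹ • x + 0)| * (1 + ‖x‖ ^ 2)
          ≤ R⁻¹ ^ 2 * |lapl (bump0 N) (R⁻¹ • x + 0)| * (5 * R ^ 2) := by gcongr; exact hx5 h
        _ = 5 * |lapl (bump0 N) (R⁻¹ • x + 0)| := by field_simp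
        _ ≤ _ := by linarith

end cutoff

/-! ### The parameter range and the weak formulation for differences of solutions -/

/-- The admissible range of dimension and exponent. -/
structure Par (N : ℕ) (m : ℝ) : Prop where
  hN : 3 ≤ N
  hml : ((N : ℝ) - 4) / ((N : ℝ) - 2) < m
  hm1 : m < ((N : ℝ) - 2) / N
  hm0 : 0 < m

namespace Par
variable {N : ℕ} {m : ℝ}

lemma N3 (h : Par N m) : (3:ℝ) ≤ N := by exact_mod_cast h.hN

lemma D_pos (h : Par N m) : 0 < (N : ℝ) - 2 - N * m := by
  have h3 := h.N3
  have := h.hm1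
  rw [lt_div_iff₀ (by linarith)] at this
  linarith

lemma m_lt_one (h : Par N m) : m < 1 := by
  have h3 := h.N3
  have := h.D_pos
  by_contra hc
  nlinarith

lemma one_lt_p (h : Par N m) : 1 < 1 / (1 - m) := by
  rw [lt_div_iff₀ (by linarith [h.m_lt_one])]; linarith [h.hm0]

lemma p_pos (h : Par N m) : 0 < 1 / (1 - m) := by linarith [h.one_lt_p]

lemma pm (h : Par N m) : 1 / (1 - m) * m = 1 / (1 - m) - 1 := by
  have := h.m_lt_one
  field_simp [show (1 - m) ≠ 0 by linarith]; ring

/-- The tail exponent of the difference of two profiles is integrable. -/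
lemma tail (h : Par N m) : (N : ℝ) < 2 * (1 / (1 - m) + 1) := by
  have h3 := h.N3
  have hm := h.m_lt_one
  have := h.hml
  rw [div_lt_iff₀ (by linarith)] at this
  have h2 : ((N : ℝ) - 2) / 2 < 1 / (1 - m) := by
    rw [lt_div_iff₀ (by linarith)]; nlinarith
  linarith

lemma C_pos (h : Par N m) : 0 < Cst N m := by
  unfold Cst
  have := h.D_pos
  have := h.hm0
  have := h.m_lt_one
  apply div_pos _ (by linarith)
  have : 0 < (N:ℝ) - 2 - m * N := by linarith [mul_comm m (N:ℝ)]
  positivity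

lemma gamma_eq (h : Par N m) : gammaC N m = -(1 / ((N : ℝ) - 2 - N * m)) := by
  unfold gammaC betaC
  have := h.D_pos
  have := h.N3
  field_simp

lemma gamma_neg (h : Par N m) : gammaC N m < 0 := by
  rw [h.gamma_eq]; have := h.D_pos
  have : 0 < 1 / ((N : ℝ) - 2 - N * m) := by positivity
  linarith

lemma beta_eq (h : Par N m) : betaC N m = -(N * gammaC N m) := by
  unfold gammaC; have := h.N3; field_simp

lemma C_gamma (h : Par N m) : 2 * gammaC N m * Cst N m = -(4 * (1 / (1 - m) - 1)) := by
  rw [h.gamma_eq]; unfold Cst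
  have h1 := h.D_pos
  have h2 := h.m_lt_one
  have e : (N:ℝ) - 2 - m * N = N - 2 - N * m := by ring
  rw [e]
  have : (1 - m) ≠ 0 := by linarith
  field_simp
  ring

lemma C_eq (h : Par N m) : 1 / (1 - m) * Cst N m
    = (1 / (1 - m) - 1) * (2 * N - 4 * (1 / (1 - m))) := by
  unfold Cst
  have h2 := h.m_lt_one
  have : (1 - m) ≠ 0 := by linarith
  field_simp
  ring

/-- `β m + 1 = -(N-2) γ`. -/
lemma beta_m (h : Par N m) : betaC N m * m + 1 = -((N - 2) * gammaC N m) := by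
  rw [h.beta_eq, h.gamma_eq]
  have h1 := h.D_pos
  field_simp
  ring

/-- `β (1 - m) = 1 - 2γ`. -/
lemma beta_one_sub (h : Par N m) : betaC N m * (1 - m) = 1 - 2 * gammaC N m := by
  rw [h.beta_eq, h.gamma_eq]
  have h1 := h.D_pos
  field_simp
  ring

lemma beta_p (h : Par N m) : (1 - 2 * gammaC N m) * (1 / (1 - m)) = betaC N m := by
  have := h.m_lt_one
  rw [← h.beta_one_sub]
  field_simp [show (1 - m) ≠ 0 by linarith]

end Par

lemma two_le_top : (2 : WithTop ℕ∞) ≤ ((⊤ : ℕ∞) : WithTop ℕ∞) :=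
  WithTop.coe_le_coe.2 (le_top : (2 : ℕ∞) ≤ ⊤)

section weak
variable {N : ℕ}

/-- A positive classical solution on the open time interval, without initial data. -/
structure ClassSol (N : ℕ) (m T : ℝ) (u : Euc N → ℝ → ℝ) : Prop where
  pos : ∀ x, ∀ t ∈ Set.Ioo (0:ℝ) T, 0 < u x t
  smooth : ContDiffOn ℝ (⊤ : ℕ∞) (fun p : Euc N × ℝ => u p.1 p.2) (Set.univ ×ˢ Set.Ioo (0:ℝ) T)
  pde : ∀ x, ∀ t ∈ Set.Ioo (0:ℝ) T, deriv (fun s => u x s) t = lapl (fun y => u y t ^ m) x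

lemma IsFDESol.classSol {m T : ℝ} {u : Euc N → ℝ → ℝ} {u₀ : Euc N → ℝ}
    (h : IsFDESol N m T u u₀) : ClassSol N m T u := ⟨h.1, h.2.1, h.2.2.2.2⟩

lemma ClassSol.slice {m T : ℝ} {u : Euc N → ℝ → ℝ} (hu : ClassSol N m T u) {t : ℝ}
    (ht : t ∈ Set.Ioo (0:ℝ) T) : ContDiff ℝ (⊤ : ℕ∞) (fun x => u x t) :=
  slice_contDiff hu.smooth ht

lemma ClassSol.slice_rpow {m T : ℝ} {u : Euc N → ℝ → ℝ} (hu : ClassSol N m T u) {t : ℝ}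
    (ht : t ∈ Set.Ioo (0:ℝ) T) (r : ℝ) : ContDiff ℝ (⊤ : ℕ∞) (fun x => u x t ^ r) :=
  (hu.slice ht).rpow_const_of_ne fun x => (hu.pos x t ht).ne.symm

/-- The weak formulation against a compactly supported test function. -/
lemma ClassSol.weak {m T : ℝ} {u : Euc N → ℝ → ℝ} (hu : ClassSol N m T u) {ψ : Euc N → ℝ}
    (hψ : ContDiff ℝ (⊤ : ℕ∞) ψ) (hc : HasCompactSupport ψ) {t₀ t₁ : ℝ} (h0 : 0 < t₀)
    (h01 : t₀ ≤ t₁) (h1 : t₁ < T) :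
    ((∫ x, u x t₁ * ψ x) - ∫ x, u x t₀ * ψ x)
        = (∫ t in t₀..t₁, ∫ x, u x t ^ m * lapl ψ x) ∧
      IntervalIntegrable (fun t => ∫ x, u x t ^ m * lapl ψ x) volume t₀ t₁ := by
  have hsub : Set.Icc t₀ t₁ ⊆ Set.Ioo 0 T := fun t ht => ⟨h0.trans_le ht.1, ht.2.trans_lt h1⟩
  obtain ⟨R, hR⟩ := hc.isCompact.isBounded.subset_closedBall (0 : Euc N)
  have hψ0 : ∀ x, R < ‖x‖ → ψ x = 0 := by
    intro x hx
    by_contra h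
    have := hR (subset_tsupport ψ h)
    simp at this; linarith
  have hInt : ∀ t ∈ Set.Icc t₀ t₁, Integrable (fun x => u x t * ψ x) := fun t ht =>
    ((hu.slice (hsub ht)).continuous.mul hψ.continuous).integrable_of_hasCompactSupport hc.mul_left
  have key := fub (F := fun x t => u x t * ψ x)
    (G := fun x t => deriv (fun s => u x s) t * ψ x) (R := R) h01
    (fun x t ht => (slice_hasDerivAt isOpen_Ioo hu.smooth (hsub ht) x).mul_const _)
    (((slice_deriv_continuousOn isOpen_Ioo hu.smooth).mono (Set.prod_mono_right hsub)).mul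
      (hψ.continuous.comp continuous_fst).continuousOn)
    (fun x hx t _ => by rw [hψ0 x hx, mul_zero])
    (hInt _ ⟨le_rfl, h01⟩) (hInt _ ⟨h01, le_rfl⟩)
  have hcongr : ∀ t ∈ Set.Icc t₀ t₁,
      (∫ x, deriv (fun s => u x s) t * ψ x) = ∫ x, u x t ^ m * lapl ψ x := by
    intro t ht
    have e := lapl_ibp (hψ.of_le two_le_top)
      ((hu.slice_rpow (hsub ht) m).of_le two_le_top) hc
    rw [← e]
    refine integral_congr_ae (Eventually.of_forall fun x => ?_)
    simp only
    rw [hu.pde x t (hsub ht), mul_comm]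
  constructor
  · rw [key.1]
    refine intervalIntegral.integral_congr fun t ht => ?_
    rw [Set.uIcc_of_le h01] at ht
    exact hcongr t ht
  · refine key.2.congr ?_
    rw [Set.uIoc_of_le h01]
    intro t ht
    exact hcongr t (Set.Ioc_subset_Icc_self ht)

/-- The integrable weight `(1 + |x|²)^{-(p+1)}`, which controls differences of profiles. -/
def qw (N : ℕ) (m : ℝ) (x : Euc N) : ℝ := (1 + ‖x‖ ^ 2) ^ (-(1 / (1 - m) + 1))

lemma qw_pos {m : ℝ} (x : Euc N) : 0 < qw N m x := by unfold qw; positivity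

lemma qw_continuous {m : ℝ} : Continuous (qw N m) := by
  unfold qw
  exact Continuous.rpow_const (by fun_prop) fun x => Or.inl (by positivity)

lemma Par.qw_integrable {m : ℝ} (h : Par N m) : Integrable (qw N m) := by
  have := integrable_rpow_neg_one_add_norm_sq (E := Euc N) (μ := volume)
    (r := 2 * (1 / (1 - m) + 1)) (by simpa using h.tail)
  refine this.congr (Eventually.of_forall fun x => ?_)
  unfold qw
  simp only
  congr 1; ring

lemma qw_eq {m : ℝ} (x : Euc N) :
    (1 + ‖x‖ ^ 2) ^ (-(1 / (1 - m))) * (1 + ‖x‖ ^ 2)⁻¹ = qw N m x := by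
  unfold qw
  rw [← Real.rpow_neg_one, ← Real.rpow_add (by positivity)]
  congr 1; ring

/-- The weak formulation for the difference of two solutions that agree to the order of the
profiles at infinity; the test function need only be bounded, with scale-invariant bounds on its
derivatives. -/
lemma weakdiff {m T : ℝ} (hp : Par N m) {u b : Euc N → ℝ → ℝ} (hu : ClassSol N m T u)
    (hb : ClassSol N m T b) {t₀ t₁ A B : ℝ} (h0 : 0 < t₀) (h01 : t₀ ≤ t₁) (h1 : t₁ < T)
    (hf : ∀ t ∈ Set.Icc t₀ t₁, ∀ x, |u x t - b x t| ≤ A * qw N m x)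
    (hg : ∀ t ∈ Set.Icc t₀ t₁, ∀ x,
      |u x t ^ m - b x t ^ m| ≤ A * (1 + ‖x‖ ^ 2) ^ (-(1 / (1 - m))))
    {φ : Euc N → ℝ} (hφ : ContDiff ℝ (⊤ : ℕ∞) φ) (hφ0 : ∀ x, |φ x| ≤ B)
    (hφ1 : ∀ x i, (pd i φ x) ^ 2 * (1 + ‖x‖ ^ 2) ≤ B)
    (hφ2 : ∀ x, |lapl φ x| * (1 + ‖x‖ ^ 2) ≤ B) :
    (∫ x, (u x t₁ - b x t₁) * φ x) - ∫ x, (u x t₀ - b x t₀) * φ x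
      = ∫ t in t₀..t₁, ∫ x, (u x t ^ m - b x t ^ m) * lapl φ x := by
  have hsub : Set.Icc t₀ t₁ ⊆ Set.Ioo 0 T := fun t ht => ⟨h0.trans_le ht.1, ht.2.trans_lt h1⟩
  obtain ⟨M, hM0, hM⟩ := cutR_bounds N
  have hB0 : 0 ≤ B := (abs_nonneg _).trans (hφ0 0)
  have hA0 : 0 ≤ A := by
    have := (abs_nonneg _).trans (hf t₀ ⟨le_rfl, h01⟩ 0)
    exact nonneg_of_mul_nonneg_left this (qw_pos 0)
  have hφ2' : ContDiff ℝ 2 φ := hφ.of_le two_le_top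
  set η : ℕ → Euc N → ℝ := fun n => cutR N (n + 1)
  have hη2 : ∀ n, ContDiff ℝ 2 (η n) := fun n => cutR_contDiff (n := 2) _
  set ψ : ℕ → Euc N → ℝ := fun n x => φ x * η n x
  have hψ : ∀ n, ContDiff ℝ (⊤ : ℕ∞) (ψ n) := fun n => hφ.mul (cutR_contDiff _)
  have hψc : ∀ n, HasCompactSupport (ψ n) := fun n =>
    (cutR_compact (by positivity)).mul_left
  set L : ℝ := B * M + (∑ _i : Fin N, (B + M)) + B
  have hL0 : 0 ≤ L := by positivity
  have hψ2 : ∀ n x, |lapl (ψ n) x| ≤ L * (1 + ‖x‖ ^ 2)⁻¹ := by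
    intro n x
    have hx : 0 < 1 + ‖x‖ ^ 2 := by positivity
    rw [← div_eq_mul_inv, le_div_iff₀ hx, lapl_mul hφ2' (hη2 n)]
    obtain ⟨hM1, hM2⟩ := hM (n + 1) (by linarith [(Nat.cast_nonneg n : (0:ℝ) ≤ n)]) x
    have a1 : |φ x * lapl (η n) x| * (1 + ‖x‖ ^ 2) ≤ B * M := by
      rw [abs_mul, mul_assoc]
      exact mul_le_mul (hφ0 x) hM2 (by positivity) hB0
    have a2 : |2 * ∑ i, pd i φ x * pd i (η n) x| * (1 + ‖x‖ ^ 2) ≤ ∑ _i : Fin N, (B + M) := by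
      rw [Finset.mul_sum]
      calc |∑ i, 2 * (pd i φ x * pd i (η n) x)| * (1 + ‖x‖ ^ 2)
          ≤ (∑ i, |2 * (pd i φ x * pd i (η n) x)|) * (1 + ‖x‖ ^ 2) := by
            gcongr; exact Finset.abs_sum_le_sum_abs _ _
        _ = ∑ i, |2 * (pd i φ x * pd i (η n) x)| * (1 + ‖x‖ ^ 2) := Finset.sum_mul _ _ _
        _ ≤ _ := by
            refine Finset.sum_le_sum fun i _ => ?_
            have e : |2 * (pd i φ x * pd i (η n) x)| ≤ pd i φ x ^ 2 + pd i (η n) x ^ 2 := by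
              rw [abs_le]
              constructor <;>
                nlinarith [sq_nonneg (pd i φ x + pd i (η n) x), sq_nonneg (pd i φ x - pd i (η n) x)]
            have := hφ1 x i
            have := hM1 i
            calc _ ≤ (pd i φ x ^ 2 + pd i (η n) x ^ 2) * (1 + ‖x‖ ^ 2) := by gcongr
              _ ≤ B + M := by rw [add_mul]; exact add_le_add (hφ1 x i) (hM1 i)
    have a3 : |lapl φ x * η n x| * (1 + ‖x‖ ^ 2) ≤ B := by
      rw [abs_mul, abs_of_nonneg (cutR_nonneg _ x)]
      calc _ ≤ |lapl φ x| * 1 * (1 + ‖x‖ ^ 2) := by gcongr; exact cutR_le_one _ x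
        _ ≤ B := by rw [mul_one]; exact hφ2 x
    calc _ ≤ (|φ x * lapl (η n) x| + |2 * ∑ i, pd i φ x * pd i (η n) x|
          + |lapl φ x * η n x|) * (1 + ‖x‖ ^ 2) := by
            gcongr; exact abs_add_three _ _ _
      _ ≤ L := by rw [add_mul, add_mul]; exact add_le_add (add_le_add a1 a2) a3
  have hψev : ∀ x, ∀ᶠ n : ℕ in atTop, ψ n =ᶠ[𝓝 x] φ := by
    intro x
    filter_upwards [tendsto_natCast_atTop_atTop.eventually_gt_atTop ‖x‖] with n hn
    filter_upwards [cutR_ev_one (R := n + 1) (by positivity) (x := x) (by linarith)] with y hy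
    simp [ψ, η, hy]
  have hq := hp.qw_integrable
  have cont_f : ∀ t ∈ Set.Icc t₀ t₁, Continuous fun x => u x t - b x t := fun t ht =>
    (hu.slice (hsub ht)).continuous.sub (hb.slice (hsub ht)).continuous
  have cont_g : ∀ t ∈ Set.Icc t₀ t₁, Continuous fun x => u x t ^ m - b x t ^ m := fun t ht =>
    (hu.slice_rpow (hsub ht) m).continuous.sub (hb.slice_rpow (hsub ht) m).continuous
  have cl : ∀ n, Continuous (lapl (ψ n)) := fun n =>
    lapl_continuous ((hψ n).of_le two_le_top)
  have bnd_g : ∀ n, ∀ t ∈ Set.Icc t₀ t₁, ∀ x,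
      ‖(u x t ^ m - b x t ^ m) * lapl (ψ n) x‖ ≤ A * L * qw N m x := by
    intro n t ht x
    rw [norm_mul, Real.norm_eq_abs, Real.norm_eq_abs, ← qw_eq]
    calc _ ≤ (A * (1 + ‖x‖ ^ 2) ^ (-(1 / (1 - m)))) * (L * (1 + ‖x‖ ^ 2)⁻¹) :=
          mul_le_mul (hg t ht x) (hψ2 n x) (abs_nonneg _) (by positivity)
      _ = _ := by ring
  have lim_f : ∀ t ∈ Set.Icc t₀ t₁, Tendsto (fun n => ∫ x, (u x t - b x t) * ψ n x) atTop
      (𝓝 (∫ x, (u x t - b x t) * φ x)) := by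
    intro t ht
    refine tendsto_integral_of_dominated_convergence (fun x => A * B * qw N m x)
      (fun n => ((cont_f t ht).mul (hψ n).continuous).aestronglyMeasurable) (hq.const_mul _)
      (fun n => Eventually.of_forall fun x => ?_) (Eventually.of_forall fun x => ?_)
    · rw [norm_mul, Real.norm_eq_abs, Real.norm_eq_abs]
      have e : |ψ n x| ≤ B := by
        simp only [ψ]
        rw [abs_mul, abs_of_nonneg (cutR_nonneg _ x)]
        calc _ ≤ B * 1 := mul_le_mul (hφ0 x) (cutR_le_one _ x) (cutR_nonneg _ x) hB0
          _ = B := mul_one _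
      calc _ ≤ (A * qw N m x) * B :=
            mul_le_mul (hf t ht x) e (abs_nonneg _) (mul_nonneg hA0 (qw_pos x).le)
        _ = _ := by ring
    · refine tendsto_const_nhds.congr' ?_
      filter_upwards [hψev x] with n hn
      rw [hn.eq_of_nhds]
  have lim_g : ∀ t ∈ Set.Icc t₀ t₁,
      Tendsto (fun n => ∫ x, (u x t ^ m - b x t ^ m) * lapl (ψ n) x) atTop
      (𝓝 (∫ x, (u x t ^ m - b x t ^ m) * lapl φ x)) := by
    intro t ht
    refine tendsto_integral_of_dominated_convergence (fun x => A * L * qw N m x)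
      (fun n => ((cont_g t ht).mul (cl n)).aestronglyMeasurable) (hq.const_mul _)
      (fun n => Eventually.of_forall fun x => bnd_g n t ht x) (Eventually.of_forall fun x => ?_)
    refine tendsto_const_nhds.congr' ?_
    filter_upwards [hψev x] with n hn
    rw [lapl_ext_ev ((hψ n).of_le two_le_top) hφ2' hn]
  -- the identity with the truncated test function
  have hid : ∀ n, ((∫ x, (u x t₁ - b x t₁) * ψ n x) - ∫ x, (u x t₀ - b x t₀) * ψ n x
      = ∫ t in t₀..t₁, ∫ x, (u x t ^ m - b x t ^ m) * lapl (ψ n) x) ∧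
      IntervalIntegrable (fun t => ∫ x, (u x t ^ m - b x t ^ m) * lapl (ψ n) x) volume t₀ t₁ := by
    intro n
    obtain ⟨e1, i1⟩ := hu.weak (hψ n) (hψc n) h0 h01 h1
    obtain ⟨e2, i2⟩ := hb.weak (hψ n) (hψc n) h0 h01 h1
    have int1 : ∀ w : Euc N → ℝ, Continuous w → Integrable (fun x => w x * ψ n x) :=
      fun w hw => (hw.mul (hψ n).continuous).integrable_of_hasCompactSupport (hψc n).mul_left
    have hlc : HasCompactSupport (lapl (ψ n)) := by
      have : lapl (ψ n) = fun x => ∑ i, pd i (pd i (ψ n)) x :=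
        funext (lapl_eq ((hψ n).of_le two_le_top))
      refine HasCompactSupport.of_support_subset_isCompact (hψc n).isCompact ?_
      intro x hx
      by_contra hnx
      refine hx ?_
      rw [this]
      refine Finset.sum_eq_zero fun i _ => ?_
      have h1 : x ∉ tsupport (pd i (pd i (ψ n))) := by
        intro h2
        have s1 : tsupport (pd i (pd i (ψ n))) ⊆ tsupport (pd i (ψ n)) :=
          tsupport_fderiv_apply_subset ℝ _
        have s2 : tsupport (pd i (ψ n)) ⊆ tsupport (ψ n) :=
          tsupport_fderiv_apply_subset ℝ _
        exact hnx (s2 (s1 h2))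
      exact image_eq_zero_of_notMem_tsupport h1
    have int2 : ∀ w : Euc N → ℝ, Continuous w → Integrable (fun x => w x * lapl (ψ n) x) :=
      fun w hw => (hw.mul (cl n)).integrable_of_hasCompactSupport hlc.mul_left
    have s1 : ∀ t ∈ Set.Icc t₀ t₁, ∫ x, (u x t - b x t) * ψ n x
        = (∫ x, u x t * ψ n x) - ∫ x, b x t * ψ n x := by
      intro t ht
      rw [← integral_sub (int1 _ (hu.slice (hsub ht)).continuous)
        (int1 _ (hb.slice (hsub ht)).continuous)]
      simp_rw [sub_mul]
    have s2 : ∀ t ∈ Set.Icc t₀ t₁, ∫ x, (u x t ^ m - b x t ^ m) * lapl (ψ n) x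
        = (∫ x, u x t ^ m * lapl (ψ n) x) - ∫ x, b x t ^ m * lapl (ψ n) x := by
      intro t ht
      rw [← integral_sub (int2 _ (hu.slice_rpow (hsub ht) m).continuous)
        (int2 _ (hb.slice_rpow (hsub ht) m).continuous)]
      simp_rw [sub_mul]
    constructor
    · rw [s1 t₁ ⟨h01, le_rfl⟩, s1 t₀ ⟨le_rfl, h01⟩, sub_sub_sub_comm, e1, e2,
        ← intervalIntegral.integral_sub i1 i2]
      refine intervalIntegral.integral_congr fun t ht => ?_
      rw [Set.uIcc_of_le h01] at ht
      exact (s2 t ht).symm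
    · refine (i1.sub i2).congr ?_
      rw [Set.uIoc_of_le h01]
      intro t ht
      exact (s2 t (Set.Ioc_subset_Icc_self ht)).symm
  have lim1 := (lim_f t₁ ⟨h01, le_rfl⟩).sub (lim_f t₀ ⟨le_rfl, h01⟩)
  have lim2 : Tendsto (fun n => ∫ t in t₀..t₁, ∫ x, (u x t ^ m - b x t ^ m) * lapl (ψ n) x) atTop
      (𝓝 (∫ t in t₀..t₁, ∫ x, (u x t ^ m - b x t ^ m) * lapl φ x)) := by
    refine intervalIntegral.tendsto_integral_filter_of_dominated_convergence
      (fun _ => ∫ x, A * L * qw N m x)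
      (Eventually.of_forall fun n => (intervalIntegrable_iff.1 (hid n).2).aestronglyMeasurable)
      (Eventually.of_forall fun n => Eventually.of_forall fun t ht => ?_)
      intervalIntegrable_const (Eventually.of_forall fun t ht => ?_)
    · rw [Set.uIoc_of_le h01] at ht
      exact norm_integral_le_of_norm_le (hq.const_mul _) (Eventually.of_forall fun x =>
        bnd_g n t (Set.Ioc_subset_Icc_self ht) x)
    · rw [Set.uIoc_of_le h01] at ht
      exact lim_g t (Set.Ioc_subset_Icc_self ht)
  refine tendsto_nhds_unique (lim1.congr fun n => (hid n).1) lim2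

end weak

/-! ### Barenblatt solutions -/

section barenblatt
variable {N : ℕ} {m : ℝ}

lemma rpow_neg_lip {r a x y : ℝ} (hr : 0 < r) (ha : 0 < a) (hx : a ≤ x) (hy : a ≤ y) :
    |x ^ (-r) - y ^ (-r)| ≤ r * a ^ (-r - 1) * |x - y| := by
  have := (convex_Ici a).norm_image_sub_le_of_norm_hasDerivWithin_le
    (f := fun z : ℝ => z ^ (-r)) (f' := fun z => -r * z ^ (-r - 1)) (C := r * a ^ (-r - 1))
    (x := y) (y := x)
    (fun z hz => (Real.hasDerivAt_rpow_const
      (Or.inl (ha.trans_le (Set.mem_Ici.1 hz)).ne')).hasDerivWithinAt)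
    (fun z hz => by
      have hz' : a ≤ z := hz
      have hz0 : 0 < z := ha.trans_le hz'
      rw [norm_mul, norm_neg, Real.norm_eq_abs, Real.norm_eq_abs, abs_of_pos hr,
        abs_of_pos (Real.rpow_pos_of_pos hz0 _)]
      gcongr r * ?_
      exact Real.rpow_le_rpow_of_nonpos ha hz' (by linarith)) hy hx
  simpa [Real.norm_eq_abs] using this

/-- The denominator of the Barenblatt solution. -/
def Qd (N : ℕ) (m T k : ℝ) (x : Euc N) (t : ℝ) : ℝ :=
  k * (T - t) ^ (2 * gammaC N m) + ‖x‖ ^ 2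

lemma Qd_pos {T k t : ℝ} (hk : 0 < k) (ht : t < T) (x : Euc N) : 0 < Qd N m T k x t := by
  unfold Qd
  have : 0 < (T - t) ^ (2 * gammaC N m) := Real.rpow_pos_of_pos (by linarith) _
  positivity

lemma Bb_eq (hp : Par N m) {T k t : ℝ} (hk : 0 < k) (ht : t < T) (x : Euc N) :
    Bb N m T k x t = (Cst N m * (T - t)) ^ (1 / (1 - m)) * Qd N m T k x t ^ (-(1 / (1 - m))) := by
  have h1 := Qd_pos (N := N) (m := m) hk ht x
  have hC := hp.C_pos
  unfold Bb
  change (_ / Qd N m T k x t) ^ _ = _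
  rw [Real.div_rpow (mul_nonneg hC.le (by linarith)) h1.le, Real.rpow_neg h1.le, div_eq_mul_inv]

lemma Bb_pos (hp : Par N m) {T k t : ℝ} (hk : 0 < k) (ht : t < T) (x : Euc N) :
    0 < Bb N m T k x t := by
  have hC := hp.C_pos
  rw [Bb_eq hp hk ht]
  exact mul_pos (Real.rpow_pos_of_pos (mul_pos hC (by linarith)) _)
    (Real.rpow_pos_of_pos (Qd_pos hk ht x) _)

lemma Bb_rpow_m (hp : Par N m) {T k t : ℝ} (hk : 0 < k) (ht : t < T) (x : Euc N) :
    Bb N m T k x t ^ m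
      = (Cst N m * (T - t)) ^ (1 / (1 - m) - 1) * Qd N m T k x t ^ (-(1 / (1 - m) - 1)) := by
  have h1 := Qd_pos (N := N) (m := m) hk ht x
  have h2 : 0 < Cst N m * (T - t) := mul_pos hp.C_pos (by linarith)
  rw [Bb_eq hp hk ht, Real.mul_rpow (by positivity) (by positivity), ← Real.rpow_mul h2.le,
    ← Real.rpow_mul h1.le, hp.pm, neg_mul, hp.pm]

lemma Bb_antitone (hp : Par N m) {T k k' t : ℝ} (hk : 0 < k) (hkk : k ≤ k') (ht : t < T)
    (x : Euc N) : Bb N m T k' x t ≤ Bb N m T k x t := by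
  rw [Bb_eq hp hk ht, Bb_eq hp (hk.trans_le hkk) ht]
  have h2 : 0 < Cst N m * (T - t) := mul_pos hp.C_pos (by linarith)
  have h3 : 0 < (T - t) ^ (2 * gammaC N m) := Real.rpow_pos_of_pos (by linarith) _
  have := Real.rpow_le_rpow_of_nonpos (Qd_pos (N := N) (m := m) hk ht x)
    (show Qd N m T k x t ≤ Qd N m T k' x t by unfold Qd; gcongr)
    (show -(1 / (1 - m)) ≤ 0 by linarith [hp.p_pos])
  gcongr

lemma Bb_strictAnti (hp : Par N m) {T k k' t : ℝ} (hk : 0 < k) (hkk : k < k') (ht : t < T)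
    (x : Euc N) : Bb N m T k' x t < Bb N m T k x t := by
  rw [Bb_eq hp hk ht, Bb_eq hp (hk.trans hkk) ht]
  have h2 : 0 < Cst N m * (T - t) := mul_pos hp.C_pos (by linarith)
  have h3 : 0 < (T - t) ^ (2 * gammaC N m) := Real.rpow_pos_of_pos (by linarith) _
  have := Real.rpow_lt_rpow_of_neg (Qd_pos (N := N) (m := m) hk ht x)
    (show Qd N m T k x t < Qd N m T k' x t by unfold Qd; gcongr)
    (show -(1 / (1 - m)) < 0 by linarith [hp.p_pos])
  have : 0 < (Cst N m * (T - t)) ^ (1 / (1 - m)) := by positivity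
  gcongr

/-- Self-similarity of the Barenblatt solution. -/
lemma Bb_scale (hp : Par N m) {T k s : ℝ} (hk : 0 < k) (hs : 0 < s) (x : Euc N) :
    Bb N m T k x (T - s) = s ^ betaC N m * BbTil N m k (s ^ (-gammaC N m) • x) := by
  unfold Bb BbTil
  have hC := hp.C_pos
  have e1 : T - (T - s) = s := by ring
  rw [e1, norm_smul, Real.norm_eq_abs, abs_of_pos (Real.rpow_pos_of_pos hs _), mul_pow,
    ← Real.rpow_natCast (s ^ (-gammaC N m)), ← Real.rpow_mul hs.le, ← hp.beta_p, Real.rpow_mul hs.le (1 - 2 * gammaC N m) (1 / (1 - m)),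
    ← Real.mul_rpow (by positivity) (by positivity)]
  congr 1
  have e2 : s ^ (2 * gammaC N m) * s ^ (-gammaC N m * (2:ℕ)) = 1 := by
    rw [← Real.rpow_add hs]
    have : 2 * gammaC N m + -gammaC N m * (2:ℕ) = 0 := by push_cast; ring
    rw [this, Real.rpow_zero]
  rw [Real.rpow_sub hs, Real.rpow_one]
  have h3 : 0 < s ^ (2 * gammaC N m) := Real.rpow_pos_of_pos hs _
  rw [div_mul_div_comm, mul_comm s, mul_add, ← mul_assoc, e2, one_mul, mul_comm k]

/-- The rescaled Barenblatt solution is stationary. -/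
lemma rescale_Bb (hp : Par N m) {T k : ℝ} (hk : 0 < k) (x : Euc N) (τ : ℝ) :
    rescaleSol N m T (Bb N m T k) x τ = BbTil N m k x := by
  unfold rescaleSol
  rw [Bb_scale hp hk (Real.exp_pos _), ← Real.exp_mul, ← mul_assoc, ← Real.exp_add, smul_smul,
    ← Real.exp_mul, ← Real.exp_add]
  have e1 : betaC N m * τ + -τ * betaC N m = 0 := by ring
  have e2 : -τ * -gammaC N m + -gammaC N m * τ = 0 := by ring
  rw [e1, e2, Real.exp_zero, one_mul, one_smul]

/-- The Barenblatt functions solve the fast diffusion equation. -/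
lemma Bb_classSol (hp : Par N m) {T k : ℝ} (hk : 0 < k) : ClassSol N m T (Bb N m T k) where
  pos := fun x t ht => Bb_pos hp hk ht.2 x
  smooth := by
    unfold Bb
    have h0 : ContDiffOn ℝ (⊤ : ℕ∞) (fun q : Euc N × ℝ => T - q.2) (Set.univ ×ˢ Set.Ioo (0:ℝ) T) :=
      (contDiff_const.sub contDiff_snd).contDiffOn
    have h1 : ContDiffOn ℝ (⊤ : ℕ∞) (fun q : Euc N × ℝ => (T - q.2) ^ (2 * gammaC N m))
        (Set.univ ×ˢ Set.Ioo (0:ℝ) T) :=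
      h0.rpow_const_of_ne fun q hq => by
        have := hq.2.2
        intro h; linarith
    have h2 : ContDiffOn ℝ (⊤ : ℕ∞) (fun q : Euc N × ℝ => ‖q.1‖ ^ 2)
        (Set.univ ×ˢ Set.Ioo (0:ℝ) T) := (contDiff_fst.norm_sq ℝ).contDiffOn
    have h3 : ContDiffOn ℝ (⊤ : ℕ∞) (fun q : Euc N × ℝ =>
        Cst N m * (T - q.2) / (k * (T - q.2) ^ (2 * gammaC N m) + ‖q.1‖ ^ 2))
        (Set.univ ×ˢ Set.Ioo (0:ℝ) T) :=
      (contDiffOn_const.mul h0).div ((contDiffOn_const.mul h1).add h2)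
        fun q hq => (Qd_pos (N := N) (m := m) hk hq.2.2 q.1).ne'
    exact h3.rpow_const_of_ne fun q hq =>
      (div_pos (mul_pos hp.C_pos (by linarith [hq.2.2])) (Qd_pos (N := N) (m := m) hk hq.2.2 q.1)).ne'
  pde := by
    intro x t ht
    have hC := hp.C_pos
    set p := 1 / (1 - m) with hpdef
    set C := Cst N m
    set γ := gammaC N m
    have hs : 0 < T - t := by linarith [ht.2]
    have hQ : 0 < Qd N m T k x t := Qd_pos hk ht.2 x
    set Q := Qd N m T k x t with hQdef
    -- space side
    have e1 : (fun y => Bb N m T k y t ^ m) = fun y =>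
        (C * (T - t)) ^ (p - 1) * (k * (T - t) ^ (2 * γ) + ‖y‖ ^ 2) ^ (-(p - 1)) := by
      funext y; exact Bb_rpow_m hp hk ht.2 y
    have ha : 0 < k * (T - t) ^ (2 * γ) := mul_pos hk (Real.rpow_pos_of_pos hs _)
    have hcd : ContDiff ℝ 2 fun y : Euc N => (k * (T - t) ^ (2 * γ) + ‖y‖ ^ 2) ^ (-(p - 1)) :=
      (contDiff_const.add (contDiff_id.norm_sq ℝ)).rpow_const_of_ne
        fun y => by simp only [id]; positivity
    rw [e1, lapl_const_mul hcd, lapl_bubble ha]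
    -- time side
    have d0 : HasDerivAt (fun s : ℝ => T - s) (-1) t := by
      simpa using (hasDerivAt_id t).const_sub T
    have d1 : HasDerivAt (fun s : ℝ => (C * (T - s)) ^ p)
        (C * -1 * p * (C * (T - t)) ^ (p - 1)) t :=
      (d0.const_mul C).rpow_const (Or.inl (by positivity))
    have d2 : HasDerivAt (fun s : ℝ => k * (T - s) ^ (2 * γ) + ‖x‖ ^ 2)
        (k * (-1 * (2 * γ) * (T - t) ^ (2 * γ - 1))) t :=
      ((d0.rpow_const (Or.inl hs.ne')).const_mul k).add_const _
    have d3 := d1.mul (d2.rpow_const (p := -p) (Or.inl hQ.ne'))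
    have d4 : HasDerivAt (fun s => Bb N m T k x s) _ t := d3.congr_of_eventuallyEq (by
      filter_upwards [Iio_mem_nhds ht.2] with s hs'
      exact Bb_eq hp hk hs' x)
    rw [d4.deriv]
    change C * -1 * p * (C * (T - t)) ^ (p - 1) * Q ^ (-p) + (C * (T - t)) ^ p *
      (k * (-1 * (2 * γ) * (T - t) ^ (2 * γ - 1)) * -p * Q ^ (-p - 1)) =
      (C * (T - t)) ^ (p - 1) * (2 * -(p - 1) * N * Q ^ (-(p - 1) - 1)
        + 4 * -(p - 1) * (-(p - 1) - 1) * ‖x‖ ^ 2 * Q ^ (-(p - 1) - 2))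
    have r1 : (C * (T - t)) ^ p = (C * (T - t)) ^ (p - 1) * (C * (T - t)) := by
      rw [← Real.rpow_add_one (by positivity)]; ring_nf
    have r2 : (T - t) ^ (2 * γ - 1) * (T - t) = (T - t) ^ (2 * γ) := by
      rw [← Real.rpow_add_one (by positivity)]; ring_nf
    have r3 : Q ^ (-(p - 1) - 1) = Q ^ (-p - 1) * Q := by
      rw [← Real.rpow_add_one (by positivity)]; ring_nf
    have r4 : Q ^ (-(p - 1) - 2) = Q ^ (-p - 1) := by ring_nf
    have r5 : Q ^ (-p) = Q ^ (-p - 1) * Q := by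
      rw [← Real.rpow_add_one (by positivity)]; ring_nf
    have r6 : k * (T - t) ^ (2 * γ) = Q - ‖x‖ ^ 2 := by rw [hQdef]; unfold Qd; ring
    have c1 : 2 * γ * C = -(4 * (p - 1)) := hp.C_gamma
    have c2 : p * C = (p - 1) * (2 * N - 4 * p) := hp.C_eq
    rw [r1, r3, r4, r5]
    set E := (C * (T - t)) ^ (p - 1)
    set Y := Q ^ (-p - 1)
    have h1 : (E * (C * (T - t))) * (k * (-1 * (2 * γ) * (T - t) ^ (2 * γ - 1)) * -p * Y)
        = E * Y * p * (2 * γ * C) * (k * ((T - t) ^ (2 * γ - 1) * (T - t))) := by ring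
    rw [h1, r2, r6, c1]
    linear_combination (-E * Y * Q) * c2

/-- A lower bound uniform in time: as `γ < 0`, the coefficient `(T - t) ^ (2γ)` grows with `t`. -/
lemma min_le_Qd {T k t k₂ : ℝ} (hp : Par N m) (hk : 0 < k₂) (hkk : k₂ ≤ k) (h0 : 0 ≤ t)
    (ht : t < T) (x : Euc N) :
    min 1 (k₂ * T ^ (2 * gammaC N m)) * (1 + ‖x‖ ^ 2) ≤ Qd N m T k x t := by
  unfold Qd
  have h1 : T ^ (2 * gammaC N m) ≤ (T - t) ^ (2 * gammaC N m) :=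
    Real.rpow_le_rpow_of_nonpos (by linarith) (by linarith) (by linarith [hp.gamma_neg])
  have h2 : 0 < T ^ (2 * gammaC N m) := Real.rpow_pos_of_pos (by linarith) _
  have h3 := min_le_left 1 (k₂ * T ^ (2 * gammaC N m))
  have h4 := min_le_right 1 (k₂ * T ^ (2 * gammaC N m))
  have h5 : k₂ * T ^ (2 * gammaC N m) ≤ k * (T - t) ^ (2 * gammaC N m) :=
    mul_le_mul hkk h1 h2.le (hk.le.trans hkk)
  nlinarith [sq_nonneg ‖x‖]

/-- On compact subintervals of `[0,T)` two Barenblatt solutions differ by at most a multiple of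
the integrable weight, and their `m`-th powers by one order less. -/
lemma Bb_diff (hp : Par N m) {T t₁ k₁ k₂ : ℝ} (hk2 : 0 < k₂) (hk : k₂ ≤ k₁)
    (ht₁ : t₁ < T) : ∃ A, 0 < A ∧ ∀ t, 0 ≤ t → t ≤ t₁ → ∀ x : Euc N,
      Bb N m T k₂ x t - Bb N m T k₁ x t ≤ A * qw N m x ∧
      Bb N m T k₂ x t ^ m - Bb N m T k₁ x t ^ m ≤ A * (1 + ‖x‖ ^ 2) ^ (-(1 / (1 - m))) := by
  by_cases h1 : 0 ≤ t₁
  swap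
  · exact ⟨1, one_pos, fun t h h' => absurd (h.trans h') h1⟩
  set p := 1 / (1 - m) with hpdef
  have hp1 : 1 < p := hp.one_lt_p
  set μ := min 1 (k₂ * T ^ (2 * gammaC N m))
  have hT : 0 < T := h1.trans_lt ht₁
  have hμ : 0 < μ := lt_min one_pos (mul_pos hk2 (Real.rpow_pos_of_pos hT _))
  set d := (k₁ - k₂) * (T - t₁) ^ (2 * gammaC N m)
  have hC := hp.C_pos
  have hs1 : 0 < T - t₁ := by linarith
  have hd : 0 ≤ d := mul_nonneg (by linarith) (Real.rpow_nonneg hs1.le _)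
  have main : ∀ r : ℝ, 0 < r → ∃ A, 0 ≤ A ∧ ∀ t, 0 ≤ t → t ≤ t₁ → ∀ x : Euc N,
      (Cst N m * (T - t)) ^ r * Qd N m T k₂ x t ^ (-r)
        - (Cst N m * (T - t)) ^ r * Qd N m T k₁ x t ^ (-r) ≤ A * (1 + ‖x‖ ^ 2) ^ (-r - 1) := by
    intro r hr
    refine ⟨(Cst N m * T) ^ r * (r * μ ^ (-r - 1) * d), by positivity, fun t h0 ht x => ?_⟩
    have hx : 0 < 1 + ‖x‖ ^ 2 := by positivity
    have a2 := min_le_Qd hp hk2 le_rfl h0 (ht.trans_lt ht₁) x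
    have a1 := min_le_Qd hp hk2 hk h0 (ht.trans_lt ht₁) x
    have l := (le_abs_self _).trans (rpow_neg_lip hr (by positivity) a2 a1)
    have e : |Qd N m T k₂ x t - Qd N m T k₁ x t| ≤ d := by
      unfold Qd
      rw [add_sub_add_right_eq_sub, ← sub_mul, abs_mul, abs_sub_comm,
        abs_of_nonneg (by linarith : 0 ≤ k₁ - k₂), abs_of_nonneg (Real.rpow_nonneg (by linarith) _)]
      refine mul_le_mul_of_nonneg_left ?_ (by linarith)
      exact Real.rpow_le_rpow_of_nonpos (by linarith) (by linarith) (by linarith [hp.gamma_neg])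
    have f : (Cst N m * (T - t)) ^ r ≤ (Cst N m * T) ^ r :=
      Real.rpow_le_rpow (mul_nonneg hC.le (by linarith)) (by gcongr; linarith) hr.le
    have f0 : 0 ≤ (Cst N m * (T - t)) ^ r := Real.rpow_nonneg (mul_nonneg hC.le (by linarith)) _
    rw [← mul_sub]
    rw [Real.mul_rpow hμ.le hx.le] at l
    calc _ ≤ (Cst N m * (T - t)) ^ r *
          (r * (μ ^ (-r - 1) * (1 + ‖x‖ ^ 2) ^ (-r - 1)) * d) := by
          refine mul_le_mul_of_nonneg_left (l.trans ?_) f0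
          gcongr
      _ ≤ (Cst N m * T) ^ r *
          (r * (μ ^ (-r - 1) * (1 + ‖x‖ ^ 2) ^ (-r - 1)) * d) := by gcongr
      _ = _ := by ring
  obtain ⟨A, hA, hA'⟩ := main p (by linarith)
  obtain ⟨B, hB, hB'⟩ := main (p - 1) (by linarith)
  refine ⟨A + B + 1, by positivity, fun t h0 ht x => ⟨?_, ?_⟩⟩
  · rw [Bb_eq hp hk2 (by linarith), Bb_eq hp (hk2.trans_le hk) (by linarith)]
    refine (hA' t h0 ht x).trans ?_
    unfold qw
    rw [show -p - 1 = -(1 / (1 - m) + 1) by rw [← hpdef]; ring]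
    gcongr; linarith
  · rw [Bb_rpow_m hp hk2 (by linarith), Bb_rpow_m hp (hk2.trans_le hk) (by linarith)]
    refine (hB' t h0 ht x).trans ?_
    rw [show -(p - 1) - 1 = -p by ring]
    gcongr; linarith

end barenblatt

/-! ### Trapped solutions, the parameter `k₀` and conservation of relative mass -/

section trapped
variable {N : ℕ} {m : ℝ}

/-- A solution trapped between two Barenblatt solutions. -/
structure Trap (N : ℕ) (m T k₁ k₂ : ℝ) (u : Euc N → ℝ → ℝ) : Prop where
  par : Par N m
  hT : 0 < T
  hk2 : 0 < k₂
  hk12 : k₂ < k₁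
  sol : ClassSol N m T u
  lo : ∀ x, ∀ t ∈ Set.Ioo (0:ℝ) T, Bb N m T k₁ x t ≤ u x t
  hi : ∀ x, ∀ t ∈ Set.Ioo (0:ℝ) T, u x t ≤ Bb N m T k₂ x t

variable {T k₁ k₂ k : ℝ} {u : Euc N → ℝ → ℝ}

lemma abs_sub_le_of_between {a b c d : ℝ} (h1 : a ≤ b) (h2 : b ≤ d) (h3 : a ≤ c) (h4 : c ≤ d) :
    |b - c| ≤ d - a := by rw [abs_le]; constructor <;> linarith

/-- Trapping pins the solution to a Barenblatt solution up to the integrable weight `qw`, uniformly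
for times bounded away from `T`. This is what makes `weakdiff` applicable. -/
lemma Trap.diff (h : Trap N m T k₁ k₂ u) (hk : k ∈ Set.Icc k₂ k₁) {t₁ : ℝ} (ht₁ : t₁ < T) :
    ∃ A, 0 < A ∧ ∀ t, 0 < t → t ≤ t₁ → ∀ x : Euc N,
      |u x t - Bb N m T k x t| ≤ A * qw N m x ∧
      |u x t ^ m - Bb N m T k x t ^ m| ≤ A * (1 + ‖x‖ ^ 2) ^ (-(1 / (1 - m))) := by
  obtain ⟨A, hA, H⟩ := Bb_diff (N := N) h.par h.hk2 h.hk12.le ht₁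
  refine ⟨A, hA, fun t h0 ht x => ?_⟩
  have ht' : t ∈ Set.Ioo 0 T := ⟨h0, by linarith⟩
  obtain ⟨H1, H2⟩ := H t h0.le ht x
  have a1 := Bb_antitone h.par (h.hk2.trans_le hk.1) hk.2 ht'.2 x
  have a2 := Bb_antitone h.par h.hk2 hk.1 ht'.2 x
  have p1 := Bb_pos h.par (h.hk2.trans h.hk12) ht'.2 x
  have m0 := h.par.hm0.le
  constructor
  · exact (abs_sub_le_of_between (h.lo x t ht') (h.hi x t ht') a1 a2).trans H1
  · refine (abs_sub_le_of_between (Real.rpow_le_rpow p1.le (h.lo x t ht') m0)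
      (Real.rpow_le_rpow (h.sol.pos x t ht').le (h.hi x t ht') m0)
      (Real.rpow_le_rpow p1.le a1 m0)
      (Real.rpow_le_rpow (p1.le.trans a1) a2 m0)).trans H2

lemma Bb_continuousAt (hp : Par N m) (hk : 0 < k) (hT : 0 < T) (x : Euc N) :
    ContinuousAt (fun t => Bb N m T k x t) 0 := by
  have h1 : ContinuousAt (fun t : ℝ => T - t) 0 := by fun_prop
  have h2 : ContinuousAt (fun t : ℝ => (T - t) ^ (2 * gammaC N m)) 0 :=
    h1.rpow_const (Or.inl (by simpa using hT.ne'))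
  unfold Bb
  exact ((h1.const_mul _).div ((h2.const_mul _).add continuousAt_const)
    (Qd_pos (N := N) (m := m) hk hT x).ne').rpow_const (Or.inr hp.p_pos.le)

lemma Bb_continuous (hp : Par N m) (hk : 0 < k) {t : ℝ} (ht : t < T) :
    Continuous (fun x => Bb N m T k x t) := by
  unfold Bb
  refine Continuous.rpow_const (Continuous.div (by fun_prop) (by fun_prop)
    fun x => (Qd_pos (N := N) (m := m) hk ht x).ne') fun x => Or.inr hp.p_pos.le

lemma init_tendsto {u₀ : Euc N → ℝ} (hT : 0 < T) (hs : IsFDESol N m T u u₀) (x : Euc N) :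
    Tendsto (fun t => u x t) (𝓝[>] 0) (𝓝 (u₀ x)) := by
  have h1 := hs.2.2.1 (x, 0) ⟨trivial, le_rfl, hT⟩
  have h2 : Tendsto (fun t : ℝ => ((x, t) : Euc N × ℝ)) (𝓝[>] 0)
      (𝓝[Set.univ ×ˢ Set.Ico 0 T] (x, 0)) := by
    refine tendsto_nhdsWithin_iff.2 ⟨?_, ?_⟩
    · have : Continuous fun t : ℝ => ((x, t) : Euc N × ℝ) := by fun_prop
      exact (this.tendsto 0).mono_left nhdsWithin_le_nhds
    · filter_upwards [Ioo_mem_nhdsGT hT] with t ht using ⟨trivial, ht.1.le, ht.2⟩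
  have h3 := h1.tendsto.comp h2
  simp only at h3
  rw [hs.2.2.2.1] at h3
  exact h3

lemma init_continuous {u₀ : Euc N → ℝ} (hT : 0 < T) (hs : IsFDESol N m T u u₀) :
    Continuous u₀ := by
  have h := hs.2.2.1.comp (s := Set.univ) (f := fun x : Euc N => (x, (0:ℝ))) (by fun_prop)
    (fun x _ => ⟨trivial, le_rfl, hT⟩)
  rw [continuousOn_univ] at h
  refine h.congr fun x => ?_
  exact hs.2.2.2.1 x

/-- The trapping persists at the initial time. -/
lemma Trap.init {u₀ : Euc N → ℝ} (h : Trap N m T k₁ k₂ u) (hs : IsFDESol N m T u u₀) (x : Euc N) :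
    Bb N m T k₁ x 0 ≤ u₀ x ∧ u₀ x ≤ Bb N m T k₂ x 0 := by
  have e := init_tendsto h.hT hs x
  have b : ∀ k, 0 < k → Tendsto (fun t => Bb N m T k x t) (𝓝[>] 0) (𝓝 (Bb N m T k x 0)) :=
    fun k hk => (Bb_continuousAt h.par hk h.hT x).tendsto.mono_left nhdsWithin_le_nhds
  have ev : ∀ᶠ t in 𝓝[>] (0:ℝ), t ∈ Set.Ioo 0 T := Ioo_mem_nhdsGT h.hT
  exact ⟨le_of_tendsto_of_tendsto (b _ (h.hk2.trans h.hk12)) e (ev.mono fun t ht => h.lo x t ht),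
    le_of_tendsto_of_tendsto e (b _ h.hk2) (ev.mono fun t ht => h.hi x t ht)⟩

lemma Trap.init_diff {u₀ : Euc N → ℝ} (h : Trap N m T k₁ k₂ u) (hs : IsFDESol N m T u u₀) :
    ∃ A, 0 < A ∧ ∀ k ∈ Set.Icc k₂ k₁, ∀ x, |u₀ x - Bb N m T k x 0| ≤ A * qw N m x := by
  obtain ⟨A, hA, H⟩ := Bb_diff (N := N) (t₁ := 0) h.par h.hk2 h.hk12.le h.hT
  refine ⟨A, hA, fun k hk x => ?_⟩
  obtain ⟨i1, i2⟩ := h.init hs x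
  exact (abs_sub_le_of_between i1 i2 (Bb_antitone h.par (h.hk2.trans_le hk.1) hk.2 h.hT x)
    (Bb_antitone h.par h.hk2 hk.1 h.hT x)).trans (H 0 le_rfl le_rfl x).1

/-- Existence and uniqueness of the parameter with the right relative mass. -/
lemma Trap.exists_k0 {u₀ : Euc N → ℝ} (h : Trap N m T k₁ k₂ u) (hs : IsFDESol N m T u u₀) :
    ∃ k₀ ∈ Set.Icc k₂ k₁,
      Integrable (fun x => u₀ x - Bb N m T k₀ x 0) volume ∧
      (∫ x, (u₀ x - Bb N m T k₀ x 0)) = 0 ∧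
      (∀ k' : ℝ, 0 < k' → Integrable (fun x => u₀ x - Bb N m T k' x 0) volume →
        (∫ x, (u₀ x - Bb N m T k' x 0)) = 0 → k' = k₀) := by
  obtain ⟨A, hA, H⟩ := h.init_diff hs
  have hq := h.par.qw_integrable
  have hcont : ∀ k, 0 < k → Continuous (fun x => u₀ x - Bb N m T k x 0) := fun k hk =>
    (init_continuous h.hT hs).sub (Bb_continuous h.par hk h.hT)
  have hInt : ∀ k ∈ Set.Icc k₂ k₁, Integrable (fun x => u₀ x - Bb N m T k x 0) := fun k hk =>
    (hq.const_mul A).mono' (hcont k (h.hk2.trans_le hk.1)).aestronglyMeasurable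
      (Eventually.of_forall fun x => H k hk x)
  have hI : ContinuousOn (fun k => ∫ x, (u₀ x - Bb N m T k x 0)) (Set.Icc k₂ k₁) := by
    refine continuousOn_of_dominated (bound := fun x => A * qw N m x)
      (fun k hk => (hInt k hk).aestronglyMeasurable)
      (fun k hk => Eventually.of_forall fun x => H k hk x) (hq.const_mul A)
      (Eventually.of_forall fun x => ?_)
    have hT' : 0 < (T - 0) ^ (2 * gammaC N m) := Real.rpow_pos_of_pos (by linarith [h.hT]) _
    unfold Bb
    refine continuousOn_const.sub (ContinuousOn.rpow_const (ContinuousOn.div continuousOn_const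
      (by fun_prop) fun k hk => ?_) fun k hk => Or.inr h.par.p_pos.le)
    exact (Qd_pos (N := N) (m := m) (h.hk2.trans_le hk.1) h.hT x).ne'
  have h1 : (∫ x, (u₀ x - Bb N m T k₂ x 0)) ≤ 0 :=
    integral_nonpos fun x => by simpa using (h.init hs x).2
  have h2 : 0 ≤ ∫ x, (u₀ x - Bb N m T k₁ x 0) :=
    integral_nonneg fun x => by simpa using (h.init hs x).1
  obtain ⟨k₀, hk₀, hz⟩ := intermediate_value_Icc h.hk12.le hI ⟨h1, h2⟩
  refine ⟨k₀, hk₀, hInt k₀ hk₀, hz, fun k' hk' hi' hz' => ?_⟩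
  have key : ∀ a b : ℝ, 0 < a → a < b → Integrable (fun x => u₀ x - Bb N m T a x 0) →
      Integrable (fun x => u₀ x - Bb N m T b x 0) →
      (∫ x, (u₀ x - Bb N m T a x 0)) = 0 → (∫ x, (u₀ x - Bb N m T b x 0)) = 0 → False := by
    intro a b ha hab ia ib za zb
    have e := integral_sub ib ia
    rw [za, zb, sub_zero] at e
    have pos : ∀ x : Euc N, 0 < (u₀ x - Bb N m T b x 0) - (u₀ x - Bb N m T a x 0) := fun x => by
      linarith [Bb_strictAnti h.par ha hab h.hT x]
    have := (integral_eq_zero_iff_of_nonneg (fun x => (pos x).le) (ib.sub ia)).1 e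
    obtain ⟨x, hx⟩ := this.exists
    exact (pos x).ne' hx
  have hk0 : 0 < k₀ := h.hk2.trans_le hk₀.1
  rcases lt_trichotomy k' k₀ with hlt | heq | hgt
  · exact (key _ _ hk' hlt hi' (hInt k₀ hk₀) hz' hz).elim
  · exact heq
  · exact (key _ _ hk0 hgt (hInt k₀ hk₀) hi' hz hz').elim

lemma pd_const_fun (i : Fin N) (c : ℝ) : pd i (fun _ : Euc N => c) = fun _ => 0 :=
  funext fun x => pd_const i c x

/-- Conservation of relative mass. -/
lemma Trap.mass {u₀ : Euc N → ℝ} (h : Trap N m T k₁ k₂ u) (hs : IsFDESol N m T u u₀)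
    (hk : k ∈ Set.Icc k₂ k₁) (hz : (∫ x, (u₀ x - Bb N m T k x 0)) = 0) {t₁ : ℝ}
    (ht₁ : t₁ ∈ Set.Ioo 0 T) : (∫ x, (u x t₁ - Bb N m T k x t₁)) = 0 := by
  have hk0 : 0 < k := h.hk2.trans_le hk.1
  obtain ⟨A, hA, H⟩ := h.diff hk ht₁.2
  have hb := Bb_classSol (T := T) h.par hk0
  have e : ∀ t ∈ Set.Ioo 0 t₁, (∫ x, (u x t - Bb N m T k x t)) = ∫ x, (u x t₁ - Bb N m T k x t₁) := by
    intro t ht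
    have := weakdiff h.par h.sol hb (A := A) (B := 1) ht.1 ht.2.le ht₁.2
      (fun t' ht' x => (H t' (ht.1.trans_le ht'.1) ht'.2 x).1)
      (fun t' ht' x => (H t' (ht.1.trans_le ht'.1) ht'.2 x).2)
      (φ := fun _ => 1) contDiff_const (fun x => by simp) (fun x i => by simp [pd_const])
      (fun x => by simp [lapl_const])
    simp only [mul_one, lapl_const, mul_zero, integral_zero, intervalIntegral.integral_zero] at this
    linarith
  have lim : Tendsto (fun t => ∫ x, (u x t - Bb N m T k x t)) (𝓝[>] 0)
      (𝓝 (∫ x, (u₀ x - Bb N m T k x 0))) := by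
    refine tendsto_integral_filter_of_dominated_convergence (fun x => A * qw N m x) ?_ ?_
      (h.par.qw_integrable.const_mul A) (Eventually.of_forall fun x => ?_)
    · filter_upwards [Ioo_mem_nhdsGT h.hT] with t ht
      exact ((h.sol.slice ht).continuous.sub (hb.slice ht).continuous).aestronglyMeasurable
    · filter_upwards [Ioo_mem_nhdsGT ht₁.1] with t ht
      exact Eventually.of_forall fun x => (H t ht.1 ht.2.le x).1
    · exact (init_tendsto h.hT hs x).sub
        ((Bb_continuousAt h.par hk0 h.hT x).tendsto.mono_left nhdsWithin_le_nhds)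
  have lim2 : Tendsto (fun t => ∫ x, (u x t - Bb N m T k x t)) (𝓝[>] 0)
      (𝓝 (∫ x, (u x t₁ - Bb N m T k x t₁))) := by
    refine tendsto_const_nhds.congr' ?_
    filter_upwards [Ioo_mem_nhdsGT ht₁.1] with t ht
    exact (e t ht).symm
  rw [tendsto_nhds_unique lim2 lim, hz]

/-- A trapped solution whose mass relative to the profile of parameter `k₀` vanishes. -/
structure Setup (N : ℕ) (m T k₁ k₂ k₀ : ℝ) (u : Euc N → ℝ → ℝ) : Prop
    extends Trap N m T k₁ k₂ u where
  hk0 : k₀ ∈ Set.Icc k₂ k₁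
  mass : ∀ t ∈ Set.Ioo (0:ℝ) T, (∫ x, (u x t - Bb N m T k₀ x t)) = 0

end trapped

/-! ### The local Barenblatt parameter and its evolution equation -/

section pressure
variable {N : ℕ} {m : ℝ}

lemma lapl_rpow {f : Euc N → ℝ} (hf : ContDiff ℝ 2 f) (hpos : ∀ x, 0 < f x) (r : ℝ) (x : Euc N) :
    lapl (fun y => f y ^ r) x = r * f x ^ (r - 1) * lapl f x
      + r * (r - 1) * f x ^ (r - 2) * ∑ i, pd i f x ^ 2 := by
  have hd : Differentiable ℝ f := hf.differentiable (by norm_num)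
  have hfr : ∀ q : ℝ, ContDiff ℝ 2 (fun y => f y ^ q) := fun q =>
    hf.rpow_const_of_ne fun x => (hpos x).ne'
  rw [lapl_eq (hfr r), lapl_eq hf, Finset.mul_sum, Finset.mul_sum, ← Finset.sum_add_distrib]
  refine Finset.sum_congr rfl fun i _ => ?_
  have e : pd i (fun y => f y ^ r) = fun y => (r * f y ^ (r - 1)) * pd i f y :=
    funext fun y => pd_rpow i r (hpos y) (hd y)
  have h1 : DifferentiableAt ℝ (fun y => r * f y ^ (r - 1)) x :=
    ((hfr (r - 1)).differentiable (by norm_num) x).const_mul r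
  have h2 : DifferentiableAt ℝ (pd i f) x :=
    (hf.pd (k := 1) (by norm_num) i).differentiable (by norm_num) x
  rw [e, pd_mul i h1 h2, pd_const_mul, pd_rpow i (r - 1) (hpos x) (hd x)]
  have : r - 1 - 1 = r - 2 := by ring
  rw [this]; ring

lemma lapl_add {f g : Euc N → ℝ} (hf : ContDiff ℝ 2 f) (hg : ContDiff ℝ 2 g) (x : Euc N) :
    lapl (fun y => f y + g y) x = lapl f x + lapl g x := by
  have := lapl_sub hf (contDiff_const.mul hg : ContDiff ℝ 2 fun y => (-1) * g y) x
  rw [lapl_const_mul hg] at this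
  have e : (fun y => f y - (-1) * g y) = fun y => f y + g y := by funext y; ring
  rw [e] at this; rw [this]; ring

lemma lapl_normsq (x : Euc N) : lapl (fun y : Euc N => ‖y‖ ^ 2) x = 2 * N := by
  rw [lapl_eq (show ContDiff ℝ 2 fun y : Euc N => ‖y‖ ^ 2 from contDiff_id.norm_sq ℝ)]
  have : ∀ i : Fin N, pd i (pd i fun y : Euc N => ‖y‖ ^ 2) x = 2 := by
    intro i
    have e : pd i (fun y : Euc N => ‖y‖ ^ 2) = fun y => 2 * y i := funext (pd_normsq i)
    rw [e, pd_const_mul, pd_coord, mul_one]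
  simp [this, mul_comm]

lemma mem_time {T τ : ℝ} (hT : 0 < T) (hτ : τ ∈ Set.Ioi (-Real.log T)) :
    T - Real.exp (-τ) ∈ Set.Ioo 0 T := by
  have h1 : Real.exp (-τ) < T := by
    rw [← Real.lt_log_iff_exp_lt hT]; linarith [Set.mem_Ioi.1 hτ]
  exact ⟨by linarith, by linarith [Real.exp_pos (-τ)]⟩

/-- The rescaled pressure. -/
def Qf (N : ℕ) (m T : ℝ) (u : Euc N → ℝ → ℝ) (y : Euc N) (τ : ℝ) : ℝ :=
  Cst N m * rescaleSol N m T u y τ ^ (m - 1)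

/-- The local Barenblatt parameter: the rescaled solution equals `BbTil (Kf y τ)` at `y`. -/
def Kf (N : ℕ) (m T : ℝ) (u : Euc N → ℝ → ℝ) (y : Euc N) (τ : ℝ) : ℝ :=
  Qf N m T u y τ - ‖y‖ ^ 2

lemma BbTil_eq (hp : Par N m) {k : ℝ} (hk : 0 < k) (x : Euc N) :
    BbTil N m k x = Cst N m ^ (1 / (1 - m)) * (k + ‖x‖ ^ 2) ^ (-(1 / (1 - m))) := by
  unfold BbTil
  rw [Real.div_rpow hp.C_pos.le (by positivity), Real.rpow_neg (by positivity), div_eq_mul_inv]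

lemma BbTil_pos (hp : Par N m) {k : ℝ} (hk : 0 < k) (x : Euc N) : 0 < BbTil N m k x := by
  have := hp.C_pos
  unfold BbTil; positivity

lemma BbTil_pow (hp : Par N m) {k : ℝ} (hk : 0 < k) (x : Euc N) :
    Cst N m * BbTil N m k x ^ (m - 1) = k + ‖x‖ ^ 2 := by
  have hC := hp.C_pos
  have hx : 0 < k + ‖x‖ ^ 2 := by positivity
  have e : 1 / (1 - m) * (m - 1) = -1 := by
    have := hp.m_lt_one
    field_simp [show (1 - m) ≠ 0 by linarith]; ring
  unfold BbTil
  rw [← Real.rpow_mul (by positivity), e, Real.rpow_neg_one]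
  field_simp

variable {T k₁ k₂ k₀ : ℝ} {u : Euc N → ℝ → ℝ} {τ : ℝ}

lemma Trap.resc_pos (h : Trap N m T k₁ k₂ u) (hτ : τ ∈ Set.Ioi (-Real.log T)) (y : Euc N) :
    0 < rescaleSol N m T u y τ :=
  mul_pos (Real.exp_pos _) (h.sol.pos _ _ (mem_time h.hT hτ))

lemma Trap.resc_lo (h : Trap N m T k₁ k₂ u) (hτ : τ ∈ Set.Ioi (-Real.log T)) (y : Euc N) :
    BbTil N m k₁ y ≤ rescaleSol N m T u y τ := by
  rw [← rescale_Bb h.par (T := T) (h.hk2.trans h.hk12) y τ]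
  exact mul_le_mul_of_nonneg_left (h.lo _ _ (mem_time h.hT hτ)) (Real.exp_pos _).le

lemma Trap.resc_hi (h : Trap N m T k₁ k₂ u) (hτ : τ ∈ Set.Ioi (-Real.log T)) (y : Euc N) :
    rescaleSol N m T u y τ ≤ BbTil N m k₂ y := by
  rw [← rescale_Bb h.par (T := T) h.hk2 y τ]
  exact mul_le_mul_of_nonneg_left (h.hi _ _ (mem_time h.hT hτ)) (Real.exp_pos _).le

lemma Trap.Kf_mem (h : Trap N m T k₁ k₂ u) (hτ : τ ∈ Set.Ioi (-Real.log T)) (y : Euc N) :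
    Kf N m T u y τ ∈ Set.Icc k₂ k₁ := by
  have hC := h.par.C_pos
  have hm : m - 1 ≤ 0 := by linarith [h.par.m_lt_one]
  have a1 := mul_le_mul_of_nonneg_left (Real.rpow_le_rpow_of_nonpos
    (BbTil_pos h.par (h.hk2.trans h.hk12) y) (h.resc_lo hτ y) hm) hC.le
  have a2 := mul_le_mul_of_nonneg_left (Real.rpow_le_rpow_of_nonpos
    (h.resc_pos hτ y) (h.resc_hi hτ y) hm) hC.le
  rw [BbTil_pow h.par (h.hk2.trans h.hk12)] at a1
  rw [BbTil_pow h.par h.hk2] at a2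
  unfold Kf Qf
  constructor <;> linarith

lemma Trap.Qf_pos (h : Trap N m T k₁ k₂ u) (hτ : τ ∈ Set.Ioi (-Real.log T)) (y : Euc N) :
    0 < Qf N m T u y τ :=
  mul_pos h.par.C_pos (Real.rpow_pos_of_pos (h.resc_pos hτ y) _)

/-- The defining property of the local parameter `Kf`; together with `Trap.Kf_mem` it turns the
trapping into the statement `k₂ ≤ K ≤ k₁`. -/
lemma Trap.resc_eq (h : Trap N m T k₁ k₂ u) (hτ : τ ∈ Set.Ioi (-Real.log T)) (y : Euc N) :
    rescaleSol N m T u y τ = BbTil N m (Kf N m T u y τ) y := by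
  have hC := h.par.C_pos
  have hv := h.resc_pos hτ y
  unfold BbTil Kf
  rw [sub_add_cancel]
  unfold Qf
  set v := rescaleSol N m T u y τ
  have e : (m - 1) * -(1 / (1 - m)) = 1 := by
    have := h.par.m_lt_one
    field_simp [show (1 - m) ≠ 0 by linarith]; ring
  have : Cst N m / (Cst N m * v ^ (m - 1)) = (v ^ (m - 1))⁻¹ := by field_simp
  rw [this, ← Real.rpow_neg_one, ← Real.rpow_mul (by positivity), ← Real.rpow_mul hv.le]
  rw [show (m - 1) * (-1 * (1 / (1 - m))) = 1 by rw [neg_one_mul]; exact e, Real.rpow_one]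

lemma Trap.resc_smooth (h : Trap N m T k₁ k₂ u) :
    ContDiffOn ℝ (⊤ : ℕ∞) (fun q : Euc N × ℝ => rescaleSol N m T u q.1 q.2)
      (Set.univ ×ˢ Set.Ioi (-Real.log T)) := by
  unfold rescaleSol
  have h1 : ContDiff ℝ (⊤ : ℕ∞) (fun q : Euc N × ℝ => Real.exp (betaC N m * q.2)) :=
    (contDiff_const.mul contDiff_snd).exp
  have h2 : ContDiff ℝ (⊤ : ℕ∞) (fun q : Euc N × ℝ =>
      ((Real.exp (-gammaC N m * q.2) • q.1, T - Real.exp (-q.2)) : Euc N × ℝ)) :=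
    ((contDiff_const.mul contDiff_snd).exp.smul contDiff_fst).prodMk
      (contDiff_const.sub contDiff_snd.neg.exp)
  exact h1.contDiffOn.mul (h.sol.smooth.comp h2.contDiffOn
    fun q hq => ⟨trivial, mem_time h.hT hq.2⟩)

lemma Trap.Qf_smooth (h : Trap N m T k₁ k₂ u) :
    ContDiffOn ℝ (⊤ : ℕ∞) (fun q : Euc N × ℝ => Qf N m T u q.1 q.2)
      (Set.univ ×ˢ Set.Ioi (-Real.log T)) := by
  unfold Qf
  exact contDiffOn_const.mul (h.resc_smooth.rpow_const_of_ne
    fun q hq => (h.resc_pos hq.2 q.1).ne')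

lemma Trap.Kf_smooth (h : Trap N m T k₁ k₂ u) :
    ContDiffOn ℝ (⊤ : ℕ∞) (fun q : Euc N × ℝ => Kf N m T u q.1 q.2)
      (Set.univ ×ˢ Set.Ioi (-Real.log T)) := by
  unfold Kf
  exact h.Qf_smooth.sub (contDiff_fst.norm_sq ℝ).contDiffOn

/-- The pressure equation for `P = u^{m-1}`. -/
lemma ClassSol.pressure (hp : Par N m) (hu : ClassSol N m T u) {t : ℝ} (ht : t ∈ Set.Ioo 0 T)
    (x : Euc N) :
    deriv (fun s => u x s ^ (m - 1)) t
      = m * (u x t ^ (m - 1) * lapl (fun y => u y t ^ (m - 1)) x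
        - 1 / (1 - m) * ∑ i, pd i (fun y => u y t ^ (m - 1)) x ^ 2) := by
  set p := 1 / (1 - m) with hpd
  have hm1 : (1 - m) ≠ 0 := by linarith [hp.m_lt_one]
  have h1 := slice_hasDerivAt isOpen_Ioo hu.smooth ht x
  have hx := hu.pos x t ht
  have h2 := (h1.rpow_const (p := m - 1) (Or.inl hx.ne')).deriv
  rw [h2, hu.pde x t ht]
  have hP : ContDiff ℝ 2 fun y => u y t ^ (m - 1) := (hu.slice_rpow ht _).of_le two_le_top
  have e1 : (fun y => u y t ^ m) = fun y => (u y t ^ (m - 1)) ^ (-(p - 1)) := by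
    funext y
    rw [← Real.rpow_mul (hu.pos y t ht).le]
    congr 1; rw [hpd]; field_simp; ring
  rw [e1, lapl_rpow hP (fun y => Real.rpow_pos_of_pos (hu.pos y t ht) _)]
  set P := u x t ^ (m - 1) with hPd
  have hP0 : 0 < P := Real.rpow_pos_of_pos hx _
  have e2 : u x t ^ (m - 1 - 1) = P ^ (p + 1) := by
    rw [hPd, ← Real.rpow_mul hx.le]; congr 1; rw [hpd]; field_simp; ring
  have e3 : P ^ (p + 1) * P ^ (-(p - 1) - 1) = P := by
    rw [← Real.rpow_add hP0, show p + 1 + (-(p - 1) - 1) = 1 by ring, Real.rpow_one]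
  have e4 : P ^ (p + 1) * P ^ (-(p - 1) - 2) = 1 := by
    rw [← Real.rpow_add hP0, show p + 1 + (-(p - 1) - 2) = 0 by ring, Real.rpow_zero]
  have e5 : (m - 1) * (p - 1) = -m := by rw [hpd]; field_simp; ring
  rw [e2]
  set L := lapl (fun y => u y t ^ (m - 1)) x
  set G := ∑ i, pd i (fun y => u y t ^ (m - 1)) x ^ 2
  have : (-(p - 1) * P ^ (-(p - 1) - 1) * L + -(p - 1) * (-(p - 1) - 1) * P ^ (-(p - 1) - 2) * G)
      * (m - 1) * P ^ (p + 1) = ((m - 1) * (p - 1)) * (-(P ^ (p + 1) * P ^ (-(p - 1) - 1)) * L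
        + p * (P ^ (p + 1) * P ^ (-(p - 1) - 2)) * G) := by ring
  rw [this, e3, e4, e5]; ring

lemma Qf_eq (hu : ClassSol N m T u) (hp : Par N m) (hT : 0 < T)
    (hτ : τ ∈ Set.Ioi (-Real.log T)) (y : Euc N) :
    Qf N m T u y τ = Cst N m * Real.exp (-(1 - 2 * gammaC N m) * τ) *
      u (Real.exp (-gammaC N m * τ) • y) (T - Real.exp (-τ)) ^ (m - 1) := by
  unfold Qf rescaleSol
  rw [Real.mul_rpow (Real.exp_pos _).le (hu.pos _ _ (mem_time hT hτ)).le, ← Real.exp_mul,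
    ← hp.beta_one_sub, show betaC N m * τ * (m - 1) = -(betaC N m * (1 - m)) * τ by ring, mul_assoc]

/-- The evolution equation of the local parameter. -/
lemma Trap.Kf_evol (h : Trap N m T k₁ k₂ u) (hτ : τ ∈ Set.Ioi (-Real.log T)) (y : Euc N) :
    HasDerivAt (fun s => Kf N m T u y s)
      (m / Cst N m * (Qf N m T u y τ * lapl (fun z => Kf N m T u z τ) y
        - 1 / (1 - m) * ∑ i, pd i (fun z => Qf N m T u z τ) y * pd i (fun z => Kf N m T u z τ) y))
      τ := by
  have hp := h.par
  have hC := hp.C_pos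
  have hm0 := hp.hm0
  have ht := mem_time h.hT hτ
  have c1 : -gammaC N m * Cst N m = 2 * (1 / (1 - m)) * m := by
    rw [mul_assoc, hp.pm]; linarith [hp.C_gamma]
  have c2 : (1 - 2 * gammaC N m) * Cst N m = 2 * N * m := by
    have e := hp.C_eq
    have e2 := hp.pm
    rw [← e2] at e
    have hpp := hp.p_pos
    have : Cst N m = m * (2 * N - 4 * (1 / (1 - m))) := by
      apply mul_left_cancel₀ hpp.ne'; rw [e]; ring
    linear_combination this + 2 * c1
  set p := 1 / (1 - m) with hpd
  set C := Cst N m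
  set γ := gammaC N m
  set P : Euc N → ℝ → ℝ := fun x t => u x t ^ (m - 1) with hP
  have hPs : ContDiffOn ℝ (⊤ : ℕ∞) (fun q : Euc N × ℝ => P q.1 q.2) (Set.univ ×ˢ Set.Ioo (0:ℝ) T) :=
    h.sol.smooth.rpow_const_of_ne fun q hq => (h.sol.pos q.1 q.2 hq.2).ne'
  set X := Real.exp (-γ * τ) • y with hX
  set θ := T - Real.exp (-τ) with hθ
  have dX : HasDerivAt (fun s => Real.exp (-γ * s) • y) ((Real.exp (-γ * τ) * -γ) • y) τ := by
    have : HasDerivAt (fun s => Real.exp (-γ * s)) (Real.exp (-γ * τ) * -γ) τ := by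
      simpa using ((hasDerivAt_id τ).const_mul (-γ)).exp
    exact this.smul_const y
  have dθ : HasDerivAt (fun s => T - Real.exp (-s)) (Real.exp (-τ)) τ := by
    simpa using (((hasDerivAt_id τ).neg).exp).const_sub T
  have dP := joint_hasDerivAt_curve isOpen_Ioo hPs (θ := fun s => T - Real.exp (-s))
    (X := fun s => Real.exp (-γ * s) • y) (r := τ) ht dX dθ
  have dE : HasDerivAt (fun s => C * Real.exp (-(1 - 2 * γ) * s))
      (C * (Real.exp (-(1 - 2 * γ) * τ) * -(1 - 2 * γ))) τ := by
    have : HasDerivAt (fun s => Real.exp (-(1 - 2 * γ) * s))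
        (Real.exp (-(1 - 2 * γ) * τ) * -(1 - 2 * γ)) τ := by
      simpa using ((hasDerivAt_id τ).const_mul (-(1 - 2 * γ))).exp
    exact this.const_mul C
  have dQ := (dE.mul dP).sub_const (‖y‖ ^ 2)
  have dK : HasDerivAt (fun s => Kf N m T u y s) _ τ := dQ.congr_of_eventuallyEq (by
    filter_upwards [Ioi_mem_nhds (Set.mem_Ioi.1 hτ)] with s hs
    unfold Kf
    rw [Qf_eq h.sol hp h.hT hs]
    rfl)
  refine dK.congr_deriv ?_
  have hpr := h.sol.pressure hp ht X
  change deriv (fun s => P X s) θ = m * (P X θ * lapl (fun y => P y θ) X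
        - p * ∑ i, pd i (fun y => P y θ) X ^ 2) at hpr
  simp only [← hX, ← hθ]
  rw [hpr]
  -- spatial derivatives of the pressure and of the parameter
  set E := Real.exp (-(1 - 2 * γ) * τ) with hE
  set F := Real.exp (-γ * τ) with hF
  have hPsl : ContDiff ℝ 2 (fun x => P x θ) := (slice_contDiff hPs ht).of_le two_le_top
  have hPd : Differentiable ℝ (fun x => P x θ) := hPsl.differentiable (by norm_num)
  have hQfun : (fun z => Qf N m T u z τ) = fun z => (C * E) * P (F • z + 0) θ := by
    funext z
    rw [add_zero]
    exact Qf_eq h.sol hp h.hT hτ z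
  have hcomp : ContDiff ℝ 2 fun z : Euc N => P (F • z + 0) θ :=
    hPsl.comp ((contDiff_id.const_smul F).add contDiff_const)
  have hQs : ContDiff ℝ 2 (fun z => Qf N m T u z τ) := by
    rw [hQfun]; exact contDiff_const.mul hcomp
  have pdQ : ∀ i, pd i (fun z => Qf N m T u z τ) y = C * E * (F * pd i (fun x => P x θ) X) := by
    intro i
    rw [hQfun, pd_const_mul, pd_affine (f := fun x => P x θ) i F 0 (hPd _), add_zero]
  have lQ : lapl (fun z => Qf N m T u z τ) y = C * E * (F ^ 2 * lapl (fun x => P x θ) X) := by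
    rw [hQfun, lapl_const_mul hcomp, lapl_affine (f := fun x => P x θ) hPsl F 0, add_zero]
  have hn : ContDiff ℝ 2 fun z : Euc N => ‖z‖ ^ 2 := contDiff_id.norm_sq ℝ
  have pdK : ∀ i, pd i (fun z => Kf N m T u z τ) y = pd i (fun z => Qf N m T u z τ) y - 2 * y i := by
    intro i
    unfold Kf
    rw [pd_sub i (hQs.differentiable (by norm_num) y) (hn.differentiable (by norm_num) y), pd_normsq]
  have lK : lapl (fun z => Kf N m T u z τ) y = lapl (fun z => Qf N m T u z τ) y - 2 * N := by
    unfold Kf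
    rw [lapl_sub hQs hn, lapl_normsq]
  have hQy : Qf N m T u y τ = C * E * P X θ := Qf_eq h.sol hp h.hT hτ y
  have eEF : Real.exp (-τ) = E * F ^ 2 := by
    rw [hE, hF, ← Real.exp_nat_mul, ← Real.exp_add]; congr 1; push_cast; ring
  rw [lK, lQ, hQy, eEF]
  simp_rw [pdK, pdQ]
  set L := lapl (fun x => P x θ) X
  set D : Fin N → ℝ := fun i => pd i (fun x => P x θ) X
  have s1 : ∑ i, C * E * (F * D i) * (C * E * (F * D i) - 2 * y i)
      = C ^ 2 * E ^ 2 * F ^ 2 * (∑ i, D i ^ 2) - 2 * C * E * F * ∑ i, y i * D i := by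
    rw [Finset.mul_sum, Finset.mul_sum, ← Finset.sum_sub_distrib]
    exact Finset.sum_congr rfl fun i _ => by ring
  have s2 : ∑ i, (((F * -γ) • y : Euc N)) i * pd i (fun y => P y θ) X
      = F * -γ * ∑ i, y i * D i := by
    rw [Finset.mul_sum]
    exact Finset.sum_congr rfl fun i _ => by simp only [PiLp.smul_apply, smul_eq_mul, D]; ring
  change _ = m / C * (C * E * P X θ * (C * E * (F ^ 2 * L) - 2 * N) - p *
    ∑ i, C * E * (F * D i) * (C * E * (F * D i) - 2 * y i))
  rw [s1]
  change C * (E * -(1 - 2 * γ)) * P X θ + C * E * ((∑ i, (((F * -γ) • y : Euc N)) i * pd i (fun y => P y θ) X) + _) = _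
  rw [s2]
  set G := ∑ i, D i ^ 2
  set Y := ∑ i, y i * D i
  set Z := P X θ
  have hC' : C ≠ 0 := hC.ne'
  field_simp
  linear_combination (-E * Z) * c2 + E * F * Y * c1

end pressure

/-! ### The relative entropy density and the localized dissipation inequality -/

section entropy
variable {N : ℕ} {m : ℝ}

/-- The relative entropy density, the primitive in `k` of `(k - k₀) (k + a)^{-p-1}` vanishing at
`k₀`, where `p = 1/(1-m)`. -/
def Psi (m k₀ a k : ℝ) : ℝ :=
  (k + a) ^ (1 - 1 / (1 - m)) / (1 - 1 / (1 - m)) + (k₀ + a) * (k + a) ^ (-(1 / (1 - m))) / (1 / (1 - m))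
    - ((k₀ + a) ^ (1 - 1 / (1 - m)) / (1 - 1 / (1 - m))
      + (k₀ + a) * (k₀ + a) ^ (-(1 / (1 - m))) / (1 / (1 - m)))

lemma Psi_self (m k₀ a : ℝ) : Psi m k₀ a k₀ = 0 := by unfold Psi; ring

lemma Psi_hasDerivAt (hp : Par N m) {k₀ a k : ℝ} (hk : 0 < k + a) :
    HasDerivAt (fun s => Psi m k₀ a s) ((k - k₀) * (k + a) ^ (-(1 / (1 - m) + 1))) k := by
  have h1 := hp.one_lt_p
  unfold Psi
  set p := 1 / (1 - m)
  have hs : HasDerivAt (fun s => s + a) 1 k := (hasDerivAt_id k).add_const a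
  have d1 := (hs.rpow_const (p := 1 - p) (Or.inl hk.ne')).div_const (1 - p)
  have d2 := ((hs.rpow_const (p := -p) (Or.inl hk.ne')).const_mul (k₀ + a)).div_const p
  refine ((d1.add d2).sub_const _).congr_deriv ?_
  have e1 : (k + a) ^ (1 - p - 1) = (k + a) ^ (-(p + 1)) * (k + a) := by
    rw [← Real.rpow_add_one hk.ne']; congr 1; ring
  have e2 : (k + a) ^ (-p - 1) = (k + a) ^ (-(p + 1)) := by congr 1; ring
  rw [e1, e2]
  have : 1 - p ≠ 0 := by linarith
  have : p ≠ 0 := by linarith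
  field_simp
  ring

/-- A function of one variable whose derivative has the sign of `s - k₀` is minimal at `k₀`. -/
lemma le_of_sign {h h' : ℝ → ℝ} {k₀ k A B : ℝ} (hk₀ : k₀ ∈ Set.Icc A B) (hk : k ∈ Set.Icc A B)
    (hd : ∀ s ∈ Set.Icc A B, HasDerivAt h (h' s) s)
    (hs : ∀ s ∈ Set.Icc A B, 0 ≤ h' s * (s - k₀)) : h k₀ ≤ h k := by
  rcases lt_trichotomy k k₀ with hlt | heq | hgt
  · have sub : Set.Icc k k₀ ⊆ Set.Icc A B := Set.Icc_subset_Icc hk.1 hk₀.2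
    obtain ⟨ξ, hξ, e⟩ := exists_hasDerivAt_eq_slope h h' hlt
      (fun s hs' => (hd s (sub hs')).continuousAt.continuousWithinAt)
      (fun s hs' => hd s (sub (Set.Ioo_subset_Icc_self hs')))
    have := hs ξ (sub (Set.Ioo_subset_Icc_self hξ))
    have h1 : h' ξ ≤ 0 := by by_contra hc; nlinarith [hξ.2]
    rw [e, div_le_iff₀ (by linarith)] at h1
    linarith
  · rw [heq]
  · have sub : Set.Icc k₀ k ⊆ Set.Icc A B := Set.Icc_subset_Icc hk₀.1 hk.2
    obtain ⟨ξ, hξ, e⟩ := exists_hasDerivAt_eq_slope h h' hgt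
      (fun s hs' => (hd s (sub hs')).continuousAt.continuousWithinAt)
      (fun s hs' => hd s (sub (Set.Ioo_subset_Icc_self hs')))
    have := hs ξ (sub (Set.Ioo_subset_Icc_self hξ))
    have h1 : 0 ≤ h' ξ := by by_contra hc; nlinarith [hξ.1]
    rw [e, le_div_iff₀ (by linarith)] at h1
    linarith

/-- The weight `(k + |x|²)^{-r}` is comparable to `(1 + |x|²)^{-r}`. -/
lemma weight_bounds {r k₁ k₂ : ℝ} (hr : 0 ≤ r) (hk2 : 0 < k₂) :
    0 < max 1 k₁ ^ (-r) ∧ 0 < min 1 k₂ ^ (-r) ∧ ∀ k ∈ Set.Icc k₂ k₁, ∀ a : ℝ, 0 ≤ a →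
      max 1 k₁ ^ (-r) * (1 + a) ^ (-r) ≤ (k + a) ^ (-r) ∧
      (k + a) ^ (-r) ≤ min 1 k₂ ^ (-r) * (1 + a) ^ (-r) := by
  have h1 : 0 < max 1 k₁ := lt_of_lt_of_le one_pos (le_max_left _ _)
  have h2 : 0 < min 1 k₂ := lt_min one_pos hk2
  refine ⟨Real.rpow_pos_of_pos h1 _, Real.rpow_pos_of_pos h2 _, fun k hk a ha => ?_⟩
  have m1 := le_max_left 1 k₁
  have m2 := le_max_right 1 k₁
  have m3 := min_le_left 1 k₂
  have m4 := min_le_right 1 k₂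
  obtain ⟨hk1, hk3⟩ := hk
  rw [← Real.mul_rpow h1.le (by positivity), ← Real.mul_rpow h2.le (by positivity)]
  constructor
  · exact Real.rpow_le_rpow_of_nonpos (by linarith) (by nlinarith) (by linarith)
  · exact Real.rpow_le_rpow_of_nonpos (by positivity) (by nlinarith) (by linarith)

/-- The entropy density is comparable to `(k - k₀)² qw`. -/
lemma Psi_bounds (hp : Par N m) {k₁ k₂ k₀ : ℝ} (hk2 : 0 < k₂) (hk0 : k₀ ∈ Set.Icc k₂ k₁) :
    ∃ c₁ c₂ : ℝ, 0 < c₁ ∧ 0 < c₂ ∧ ∀ k ∈ Set.Icc k₂ k₁, ∀ x : Euc N,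
      c₁ * ((k - k₀) ^ 2 * qw N m x) ≤ Psi m k₀ (‖x‖ ^ 2) k ∧
      Psi m k₀ (‖x‖ ^ 2) k ≤ c₂ * ((k - k₀) ^ 2 * qw N m x) := by
  obtain ⟨h1, h2, H⟩ := weight_bounds (r := 1 / (1 - m) + 1) (k₁ := k₁)
    (by linarith [hp.p_pos]) hk2
  set A := max 1 k₁ ^ (-(1 / (1 - m) + 1))
  set B := min 1 k₂ ^ (-(1 / (1 - m) + 1))
  refine ⟨A / 2, B / 2, by positivity, by positivity, fun k hk x => ?_⟩
  have dsq : ∀ s : ℝ, ∀ c : ℝ, HasDerivAt (fun s => c * ((s - k₀) ^ 2 * qw N m x))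
      (c * (2 * (s - k₀) * qw N m x)) s := by
    intro s c
    have : HasDerivAt (fun s => (s - k₀) ^ 2) (2 * (s - k₀)) s := by
      have := ((hasDerivAt_id s).sub_const k₀).fun_pow 2
      simpa using this
    exact (this.mul_const _).const_mul c
  have hpos : ∀ s ∈ Set.Icc k₂ k₁, 0 < s + ‖x‖ ^ 2 := fun s hs => by
    have := hk2.trans_le hs.1; positivity
  constructor
  · have := le_of_sign (h := fun s => Psi m k₀ (‖x‖ ^ 2) s - A / 2 * ((s - k₀) ^ 2 * qw N m x))
      hk0 hk (fun s hs => (Psi_hasDerivAt hp (hpos s hs)).sub (dsq s (A / 2))) (fun s hs => by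
        have e := (H s hs _ (sq_nonneg ‖x‖)).1
        change A * qw N m x ≤ _ at e
        have : ((s - k₀) * (s + ‖x‖ ^ 2) ^ (-(1 / (1 - m) + 1)) - A / 2 * (2 * (s - k₀) * qw N m x))
          * (s - k₀) = (s - k₀) ^ 2 * ((s + ‖x‖ ^ 2) ^ (-(1 / (1 - m) + 1)) - A * qw N m x) := by ring
        rw [this]
        exact mul_nonneg (sq_nonneg _) (by linarith))
    simp only [Psi_self, sub_self] at this
    norm_num at this
    linarith
  · have := le_of_sign (h := fun s => B / 2 * ((s - k₀) ^ 2 * qw N m x) - Psi m k₀ (‖x‖ ^ 2) s)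
      hk0 hk (fun s hs => (dsq s (B / 2)).sub (Psi_hasDerivAt hp (hpos s hs))) (fun s hs => by
        have e := (H s hs _ (sq_nonneg ‖x‖)).2
        change _ ≤ B * qw N m x at e
        have : (B / 2 * (2 * (s - k₀) * qw N m x) - (s - k₀) * (s + ‖x‖ ^ 2) ^ (-(1 / (1 - m) + 1)))
          * (s - k₀) = (s - k₀) ^ 2 * (B * qw N m x - (s + ‖x‖ ^ 2) ^ (-(1 / (1 - m) + 1))) := by ring
        rw [this]
        exact mul_nonneg (sq_nonneg _) (by linarith))
    simp only [Psi_self, sub_self] at this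
    norm_num at this
    linarith

/-- The localized entropy dissipation inequality at a fixed time. -/
lemma diss_ineq {η K Q : Euc N → ℝ} {p k₀ : ℝ} (hη : ContDiff ℝ 2 η) (hc : HasCompactSupport η)
    (hK : ContDiff ℝ 2 K) (hQ : ContDiff ℝ 2 Q) (hQ0 : ∀ x, 0 < Q x) :
    ∫ x, η x ^ 2 * ((K x - k₀) * Q x ^ (-(p + 1)) *
        (Q x * lapl K x - p * ∑ i, pd i Q x * pd i K x))
      ≤ ∑ i, (2 * (∫ x, Q x ^ (-p) * (K x - k₀) ^ 2 * pd i η x ^ 2)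
        - 1 / 2 * ∫ x, η x ^ 2 * Q x ^ (-p) * pd i K x ^ 2) := by
  have hη1 : ContDiff ℝ 1 η := hη.of_le (by norm_num)
  have hκ : ContDiff ℝ 2 fun x => K x - k₀ := hK.sub contDiff_const
  have hκ1 : ContDiff ℝ 1 fun x => K x - k₀ := hκ.of_le (by norm_num)
  have hQp : ContDiff ℝ 2 fun x => Q x ^ (-p) := hQ.rpow_const_of_ne fun x => (hQ0 x).ne'
  have hQp1 : ContDiff ℝ 1 fun x => Q x ^ (-p) := hQp.of_le (by norm_num)
  have hpK : ∀ i, ContDiff ℝ 1 (pd i K) := fun i => hK.pd (by norm_num) i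
  have hpη : ∀ i, ContDiff ℝ 1 (pd i η) := fun i => hη.pd (by norm_num) i
  set f : Euc N → ℝ := fun x => η x ^ 2 * (K x - k₀)
  have hf : ContDiff ℝ 1 f := (hη1.pow 2).mul hκ1
  have hc2 : HasCompactSupport fun x => η x ^ 2 :=
    HasCompactSupport.comp_left (g := fun z : ℝ => z ^ 2) hc (by norm_num)
  have hfc : HasCompactSupport f := hc2.mul_right
  set g : Fin N → Euc N → ℝ := fun i x => Q x ^ (-p) * pd i K x
  have hg : ∀ i, ContDiff ℝ 1 (g i) := fun i => hQp1.mul (hpK i)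
  have e1 : ∀ x, η x ^ 2 * ((K x - k₀) * Q x ^ (-(p + 1)) *
        (Q x * lapl K x - p * ∑ i, pd i Q x * pd i K x)) = ∑ i, f x * pd i (g i) x := by
    intro x
    have pg : ∀ i, pd i (g i) x = Q x ^ (-p) * pd i (pd i K) x
        + (-p * Q x ^ (-(p + 1)) * pd i Q x) * pd i K x := by
      intro i
      rw [pd_mul i (hQp1.differentiable (by norm_num) x) ((hpK i).differentiable (by norm_num) x),
        pd_rpow i (-p) (hQ0 x) (hQ.differentiable (by norm_num) x),
        show -p - 1 = -(p + 1) by ring]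
    have er : Q x ^ (-p) = Q x ^ (-(p + 1)) * Q x := by
      rw [← Real.rpow_add_one (hQ0 x).ne']; congr 1; ring
    simp_rw [pg, er]
    rw [lapl_eq hK, ← Finset.mul_sum, Finset.sum_add_distrib, ← Finset.mul_sum]
    have : ∑ i, -p * Q x ^ (-(p + 1)) * pd i Q x * pd i K x
        = -p * Q x ^ (-(p + 1)) * ∑ i, pd i Q x * pd i K x := by
      rw [Finset.mul_sum]; exact Finset.sum_congr rfl fun i _ => by ring
    rw [this]
    simp only [f]; ring
  have i1 : ∀ i, Integrable fun x => f x * pd i (g i) x := fun i =>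
    (hf.continuous.mul ((hg i).pd (k := 0) (by norm_num) i).continuous).integrable_of_hasCompactSupport
      hfc.mul_right
  rw [integral_congr_ae (Eventually.of_forall e1), integral_finsetSum _ fun i _ => i1 i]
  refine Finset.sum_le_sum fun i _ => ?_
  rw [ibp hf (hg i) hfc i, ← integral_neg, ← integral_const_mul, ← integral_const_mul]
  have cη := hη.continuous
  have cK := hK.continuous
  have cQ := hQp.continuous
  have cpK := (hpK i).continuous
  have cpη := (hpη i).continuous
  have hpc := hc.pd i
  have i2 : Integrable fun x => 2 * (Q x ^ (-p) * (K x - k₀) ^ 2 * pd i η x ^ 2) := by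
    refine Continuous.integrable_of_hasCompactSupport (by fun_prop) ?_
    have : HasCompactSupport fun x => pd i η x ^ 2 :=
      HasCompactSupport.comp_left (g := fun z : ℝ => z ^ 2) hpc (by norm_num)
    exact (this.mul_left (f := fun x => Q x ^ (-p) * (K x - k₀) ^ 2)).mul_left (f := fun _ => (2:ℝ))
  have i3 : Integrable fun x => 1 / 2 * (η x ^ 2 * Q x ^ (-p) * pd i K x ^ 2) := by
    refine Continuous.integrable_of_hasCompactSupport (by fun_prop) ?_
    have h1 : HasCompactSupport fun x => η x ^ 2 * Q x ^ (-p) := hc2.mul_right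
    exact (h1.mul_right (f' := fun x => pd i K x ^ 2)).mul_left (f := fun _ => (1 / 2:ℝ))
  rw [← integral_sub i2 i3]
  refine integral_mono ?_ (i2.sub i3) fun x => ?_
  · exact (((hf.pd (k := 0) (by norm_num) i).continuous.mul
      (hg i).continuous).integrable_of_hasCompactSupport (hfc.pd i).mul_right).neg
  · have pf : pd i f x = η x ^ 2 * pd i K x + 2 * η x * pd i η x * (K x - k₀) := by
      have hdη : DifferentiableAt ℝ η x := hη1.differentiable (by norm_num) x
      have hdη2 : DifferentiableAt ℝ (fun x => η x ^ 2) x :=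
        (hη1.pow 2).differentiable (by norm_num) x
      rw [pd_mul i hdη2 (hκ1.differentiable (by norm_num) x),
        pd_sub i (hK.differentiable (by norm_num) x) (differentiableAt_const _), pd_const, sub_zero,
        pd_comp (g := fun z => z ^ 2) (g' := 2 * η x) i (by simpa using hasDerivAt_pow 2 (η x)) hdη]
    have hq : 0 ≤ Q x ^ (-p) := (Real.rpow_pos_of_pos (hQ0 x) _).le
    simp only [pf, g]
    have := mul_nonneg hq (sq_nonneg (η x * pd i K x + 2 * (K x - k₀) * pd i η x))
    nlinarith [this]

end entropy

/-! ### Decay of the relative entropy -/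

section entropyflow
variable {N : ℕ} {m T k₁ k₂ k₀ : ℝ} {u : Euc N → ℝ → ℝ}

/-- The mass of the weight outside the ball of radius `R`. -/
def tailq (N : ℕ) (m R : ℝ) : ℝ := ∫ x, Set.indicator {x : Euc N | R ≤ ‖x‖} (qw N m) x

lemma measurableSet_outer (R : ℝ) : MeasurableSet {x : Euc N | R ≤ ‖x‖} :=
  measurableSet_le measurable_const measurable_norm

lemma tailq_tendsto (hp : Par N m) : Tendsto (tailq N m) atTop (𝓝 0) := by
  have : Tendsto (fun R => ∫ x, Set.indicator {x : Euc N | R ≤ ‖x‖} (qw N m) x) atTop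
      (𝓝 (∫ _x : Euc N, (0:ℝ))) := by
    refine tendsto_integral_filter_of_dominated_convergence (qw N m) ?_ ?_ hp.qw_integrable ?_
    · exact Eventually.of_forall fun R =>
        (hp.qw_integrable.indicator (measurableSet_outer R)).aestronglyMeasurable
    · refine Eventually.of_forall fun R => Eventually.of_forall fun x => ?_
      rw [Real.norm_eq_abs, abs_of_nonneg (Set.indicator_nonneg (fun x _ => (qw_pos x).le) x)]
      exact Set.indicator_le_self' (fun x _ => (qw_pos x).le) x
    · refine Eventually.of_forall fun x => tendsto_const_nhds.congr' ?_
      filter_upwards [eventually_gt_atTop ‖x‖] with R hR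
      rw [Set.indicator_of_notMem]
      simpa using hR
  rw [integral_zero] at this
  exact this

lemma Trap.Kf_slice (h : Trap N m T k₁ k₂ u) {τ : ℝ} (hτ : τ ∈ Set.Ioi (-Real.log T)) :
    ContDiff ℝ 2 (fun y => Kf N m T u y τ) :=
  (slice_contDiff h.Kf_smooth hτ).of_le two_le_top

lemma Trap.Qf_slice (h : Trap N m T k₁ k₂ u) {τ : ℝ} (hτ : τ ∈ Set.Ioi (-Real.log T)) :
    ContDiff ℝ 2 (fun y => Qf N m T u y τ) :=
  (slice_contDiff h.Qf_smooth hτ).of_le two_le_top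

lemma Kf_add (y : Euc N) (τ : ℝ) : Kf N m T u y τ + ‖y‖ ^ 2 = Qf N m T u y τ := by
  unfold Kf; ring

/-- The relative entropy density along the flow. -/
def Ent (N : ℕ) (m T k₀ : ℝ) (u : Euc N → ℝ → ℝ) (τ : ℝ) (y : Euc N) : ℝ :=
  Psi m k₀ (‖y‖ ^ 2) (Kf N m T u y τ)

lemma Trap.Ent_continuous (h : Trap N m T k₁ k₂ u) (hk0 : 0 < k₀) {τ : ℝ}
    (hτ : τ ∈ Set.Ioi (-Real.log T)) : Continuous (Ent N m T k₀ u τ) := by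
  have hK := (h.Kf_slice hτ).continuous
  have h1 : ∀ y : Euc N, Kf N m T u y τ + ‖y‖ ^ 2 ≠ 0 := fun y => by
    rw [Kf_add]; exact (h.Qf_pos hτ y).ne'
  have h2 : ∀ y : Euc N, k₀ + ‖y‖ ^ 2 ≠ 0 := fun y => by positivity
  have c1 : Continuous fun y : Euc N => Kf N m T u y τ + ‖y‖ ^ 2 := by fun_prop
  have c2 : Continuous fun y : Euc N => k₀ + ‖y‖ ^ 2 := by fun_prop
  have r1 : ∀ r : ℝ, Continuous fun y : Euc N => (Kf N m T u y τ + ‖y‖ ^ 2) ^ r := fun r =>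
    c1.rpow_const fun y => Or.inl (h1 y)
  have r2 : ∀ r : ℝ, Continuous fun y : Euc N => (k₀ + ‖y‖ ^ 2) ^ r := fun r =>
    c2.rpow_const fun y => Or.inl (h2 y)
  unfold Ent Psi
  exact (((r1 _).div_const _).add ((c2.mul (r1 _)).div_const _)).sub
    (((r2 _).div_const _).add ((c2.mul (r2 _)).div_const _))

/-- The local Dirichlet energy of `K`. -/
def locE (N : ℕ) (m T R : ℝ) (u : Euc N → ℝ → ℝ) (τ : ℝ) : ℝ :=
  ∑ i, ∫ x, cutR N R x ^ 2 * Qf N m T u x τ ^ (-(1 / (1 - m))) * pd i (fun z => Kf N m T u z τ) x ^ 2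

/-- Entropy decrease for the entropy localized by the cutoff at scale `R`: over any time interval
on which the local Dirichlet energy is at least `b`, up to an error due to the mass of `qw` outside
the ball of radius `R`. -/
lemma Trap.ent_local (h : Trap N m T k₁ k₂ u) (hk0 : k₀ ∈ Set.Icc k₂ k₁) :
    ∃ A : ℝ, 0 ≤ A ∧ ∀ R, 1 ≤ R → ∀ τ₀ ∈ Set.Ioi (-Real.log T), ∀ τ₁, τ₀ ≤ τ₁ → ∀ b,
      (∀ t ∈ Set.Icc τ₀ τ₁, b ≤ locE N m T R u t) →
      (∫ x, cutR N R x ^ 2 * Ent N m T k₀ u τ₁ x) - (∫ x, cutR N R x ^ 2 * Ent N m T k₀ u τ₀ x)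
        ≤ (τ₁ - τ₀) * (m / Cst N m * (A * tailq N m R - b / 2)) := by
  have hp := h.par
  have hC := hp.C_pos
  have hm0 := hp.hm0
  obtain ⟨M, hM0, hM⟩ := cutR_bounds N
  obtain ⟨-, hB, HB⟩ := weight_bounds (r := 1 / (1 - m)) (k₁ := k₁) hp.p_pos.le h.hk2
  set B := min 1 k₂ ^ (-(1 / (1 - m)))
  set A1 := B * (k₁ - k₂) ^ 2 * M with hA1
  have hA10 : 0 ≤ A1 := by positivity
  refine ⟨∑ _i : Fin N, 2 * A1, by positivity, fun R hR τ₀ hτ₀ τ₁ h01 b hb => ?_⟩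
  have hR0 : 0 < R := by linarith
  have hsub : Set.Icc τ₀ τ₁ ⊆ Set.Ioi (-Real.log T) := fun t ht =>
    (Set.mem_Ioi.1 hτ₀).trans_le ht.1
  have hcη : Continuous (cutR N R) := (cutR_contDiff (n := 2) R).continuous
  have hc2 : HasCompactSupport fun x => cutR N R x ^ 2 :=
    HasCompactSupport.comp_left (g := fun z : ℝ => z ^ 2) (cutR_compact hR0) (by norm_num)
  have hki : 0 < k₀ := h.hk2.trans_le hk0.1
  have hInt : ∀ t ∈ Set.Icc τ₀ τ₁, Integrable fun x => cutR N R x ^ 2 * Ent N m T k₀ u t x :=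
    fun t ht => ((hcη.pow 2).mul (h.Ent_continuous hki (hsub ht))).integrable_of_hasCompactSupport
      hc2.mul_right
  set K := Kf N m T u
  have dK : ∀ x, ∀ t ∈ Set.Icc τ₀ τ₁, HasDerivAt (fun s => K x s) (deriv (fun s => K x s) t) t :=
    fun x t ht => slice_hasDerivAt isOpen_Ioi h.Kf_smooth (hsub ht) x
  have hKpos : ∀ x, ∀ t ∈ Set.Icc τ₀ τ₁, 0 < K x t + ‖x‖ ^ 2 := fun x t ht => by
    rw [Kf_add]; exact h.Qf_pos (hsub ht) x
  set G : Euc N → ℝ → ℝ := fun x t => cutR N R x ^ 2 *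
    (((K x t - k₀) * (K x t + ‖x‖ ^ 2) ^ (-(1 / (1 - m) + 1))) * deriv (fun s => K x s) t) with hG
  have key := fub (F := fun x t => cutR N R x ^ 2 * Ent N m T k₀ u t x) (G := G) (R := 2 * R) h01
    (fun x t ht => (HasDerivAt.comp t (h₂ := fun s => Psi m k₀ (‖x‖ ^ 2) s) (h := fun s => K x s)
      (Psi_hasDerivAt hp (hKpos x t ht)) (dK x t ht)).const_mul _)
    (by
      have cK : ContinuousOn (fun q : Euc N × ℝ => K q.1 q.2) (Set.univ ×ˢ Set.Icc τ₀ τ₁) :=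
        h.Kf_smooth.continuousOn.mono (Set.prod_mono_right hsub)
      have cd := (slice_deriv_continuousOn isOpen_Ioi h.Kf_smooth).mono
        (Set.prod_mono_right (s := Set.univ) hsub)
      have cn : ContinuousOn (fun q : Euc N × ℝ => ‖q.1‖ ^ 2) (Set.univ ×ˢ Set.Icc τ₀ τ₁) := by
        fun_prop
      have cη : ContinuousOn (fun q : Euc N × ℝ => cutR N R q.1 ^ 2) (Set.univ ×ˢ Set.Icc τ₀ τ₁) :=
        ((hcη.pow 2).comp continuous_fst).continuousOn
      exact cη.mul (((cK.sub continuousOn_const).mul ((cK.add cn).rpow_const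
        fun q hq => Or.inl (hKpos q.1 q.2 hq.2).ne')).mul cd))
    (fun x hx t _ => by simp only [hG]; rw [cutR_eq_zero hR0 hx.le]; simp)
    (hInt _ ⟨le_rfl, h01⟩) (hInt _ ⟨h01, le_rfl⟩)
  rw [key.1]
  -- the pointwise-in-time dissipation bound
  have bound : ∀ t ∈ Set.Icc τ₀ τ₁, (∫ x, G x t) ≤
      m / Cst N m * ((∑ _i : Fin N, 2 * A1) * tailq N m R - b / 2) := by
    intro t ht
    have hτ := hsub ht
    have e : ∀ x, G x t = m / Cst N m * (cutR N R x ^ 2 * ((K x t - k₀) *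
        Qf N m T u x t ^ (-(1 / (1 - m) + 1)) * (Qf N m T u x t * lapl (fun z => K z t) x
        - 1 / (1 - m) * ∑ i, pd i (fun z => Qf N m T u z t) x * pd i (fun z => K z t) x))) := by
      intro x
      simp only [hG]
      rw [Kf_add, (h.Kf_evol hτ x).deriv]; ring
    rw [integral_congr_ae (Eventually.of_forall e), integral_const_mul]
    have hmC : 0 ≤ m / Cst N m := by positivity
    refine mul_le_mul_of_nonneg_left ?_ hmC
    refine (diss_ineq (cutR_contDiff (n := 2) R) (cutR_compact hR0) (h.Kf_slice hτ)
      (h.Qf_slice hτ) (h.Qf_pos hτ)).trans ?_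
    rw [Finset.sum_sub_distrib]
    have hbt := hb t ht
    unfold locE at hbt
    have err : ∀ i, 2 * (∫ x, Qf N m T u x t ^ (-(1 / (1 - m))) * (K x t - k₀) ^ 2 *
        pd i (cutR N R) x ^ 2) ≤ 2 * A1 * tailq N m R := by
      intro i
      rw [mul_assoc]
      refine mul_le_mul_of_nonneg_left ?_ (by norm_num)
      unfold tailq
      rw [← integral_const_mul]
      refine integral_mono_of_nonneg (Eventually.of_forall fun x => ?_)
        ((hp.qw_integrable.indicator (measurableSet_outer R)).const_mul A1)
        (Eventually.of_forall fun x => ?_)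
      · have := (Real.rpow_pos_of_pos (h.Qf_pos hτ x) (-(1 / (1 - m)))).le
        simp only [Pi.zero_apply]; positivity
      · simp only
        by_cases hx : R ≤ ‖x‖
        · rw [Set.indicator_of_mem (by exact hx), ← qw_eq, hA1]
          have hkx := h.Kf_mem hτ x
          have b1 := (HB _ hkx _ (sq_nonneg ‖x‖)).2
          rw [Kf_add] at b1
          have b2 : (K x t - k₀) ^ 2 ≤ (k₁ - k₂) ^ 2 := by
            apply sq_le_sq'
            · have := hkx.1; have := hk0.2; simp only [K]; linarith
            · have := hkx.2; have := hk0.1; simp only [K]; linarith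
          have b3 : pd i (cutR N R) x ^ 2 ≤ M * (1 + ‖x‖ ^ 2)⁻¹ := by
            rw [← div_eq_mul_inv, le_div_iff₀ (by positivity)]
            exact (hM R hR x).1 i
          have q0 : 0 ≤ Qf N m T u x t ^ (-(1 / (1 - m))) :=
            (Real.rpow_pos_of_pos (h.Qf_pos hτ x) _).le
          calc _ ≤ (B * (1 + ‖x‖ ^ 2) ^ (-(1 / (1 - m)))) * (k₁ - k₂) ^ 2 * (M * (1 + ‖x‖ ^ 2)⁻¹) := by
                gcongr
            _ = _ := by ring
        · rw [Set.indicator_of_notMem (by exact hx), pd_cutR_inner hR0 (not_le.1 hx)]; simp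
    have := Finset.sum_le_sum fun i (_ : i ∈ Finset.univ) => err i
    rw [← Finset.sum_mul] at this
    simp only [← Finset.mul_sum] at this hbt ⊢
    simp only [K] at this ⊢
    simp only [Finset.sum_const, Finset.card_univ, Fintype.card_fin, nsmul_eq_mul] at this ⊢
    linarith
  have := intervalIntegral.integral_mono_on h01 key.2 intervalIntegrable_const bound
  rw [intervalIntegral.integral_const, smul_eq_mul] at this
  exact this

lemma Trap.Ent_bounds (h : Trap N m T k₁ k₂ u) (hk0 : k₀ ∈ Set.Icc k₂ k₁) :
    ∃ c₁ c₂ : ℝ, 0 < c₁ ∧ 0 < c₂ ∧ ∀ τ ∈ Set.Ioi (-Real.log T), ∀ x : Euc N,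
      c₁ * ((Kf N m T u x τ - k₀) ^ 2 * qw N m x) ≤ Ent N m T k₀ u τ x ∧
      Ent N m T k₀ u τ x ≤ c₂ * ((Kf N m T u x τ - k₀) ^ 2 * qw N m x) := by
  obtain ⟨c₁, c₂, h1, h2, H⟩ := Psi_bounds h.par h.hk2 hk0
  exact ⟨c₁, c₂, h1, h2, fun τ hτ x => H _ (h.Kf_mem hτ x) x⟩

lemma Trap.Kf_sub_sq (h : Trap N m T k₁ k₂ u) (hk0 : k₀ ∈ Set.Icc k₂ k₁) {τ : ℝ}
    (hτ : τ ∈ Set.Ioi (-Real.log T)) (x : Euc N) :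
    (Kf N m T u x τ - k₀) ^ 2 ≤ (k₁ - k₂) ^ 2 := by
  have hkx := h.Kf_mem hτ x
  apply sq_le_sq'
  · linarith [hkx.1, hk0.2]
  · linarith [hkx.2, hk0.1]

lemma Trap.Ent_nonneg (h : Trap N m T k₁ k₂ u) (hk0 : k₀ ∈ Set.Icc k₂ k₁) {τ : ℝ}
    (hτ : τ ∈ Set.Ioi (-Real.log T)) (x : Euc N) : 0 ≤ Ent N m T k₀ u τ x := by
  obtain ⟨c₁, c₂, h1, h2, H⟩ := h.Ent_bounds hk0
  have := qw_pos (m := m) x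
  exact le_trans (by positivity) (H τ hτ x).1

lemma Trap.Ent_le (h : Trap N m T k₁ k₂ u) (hk0 : k₀ ∈ Set.Icc k₂ k₁) :
    ∃ c : ℝ, 0 < c ∧ ∀ τ ∈ Set.Ioi (-Real.log T), ∀ x : Euc N,
      Ent N m T k₀ u τ x ≤ c * qw N m x := by
  obtain ⟨c₁, c₂, h1, h2, H⟩ := h.Ent_bounds hk0
  have : 0 < k₁ - k₂ := by linarith [h.hk12]
  refine ⟨c₂ * (k₁ - k₂) ^ 2, by positivity, fun τ hτ x => (H τ hτ x).2.trans ?_⟩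
  have := qw_pos (m := m) x
  rw [mul_assoc]
  exact mul_le_mul_of_nonneg_left (mul_le_mul_of_nonneg_right (h.Kf_sub_sq hk0 hτ x) this.le) h2.le

lemma Trap.Ent_integrable (h : Trap N m T k₁ k₂ u) (hk0 : k₀ ∈ Set.Icc k₂ k₁) {τ : ℝ}
    (hτ : τ ∈ Set.Ioi (-Real.log T)) : Integrable (Ent N m T k₀ u τ) := by
  obtain ⟨c, hc, H⟩ := h.Ent_le hk0
  refine (h.par.qw_integrable.const_mul c).mono'
    (h.Ent_continuous (h.hk2.trans_le hk0.1) hτ).aestronglyMeasurable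
    (Eventually.of_forall fun x => ?_)
  rw [Real.norm_eq_abs, abs_of_nonneg (h.Ent_nonneg hk0 hτ x)]
  exact H τ hτ x

/-- Removing the localization. -/
lemma Trap.ent_cut_tendsto (h : Trap N m T k₁ k₂ u) (hk0 : k₀ ∈ Set.Icc k₂ k₁) {τ : ℝ}
    (hτ : τ ∈ Set.Ioi (-Real.log T)) :
    Tendsto (fun R => ∫ x, cutR N R x ^ 2 * Ent N m T k₀ u τ x) atTop
      (𝓝 (∫ x, Ent N m T k₀ u τ x)) := by
  have hi := h.Ent_integrable hk0 hτ
  refine tendsto_integral_filter_of_dominated_convergence _ (Eventually.of_forall fun R => ?_)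
    (Eventually.of_forall fun R => Eventually.of_forall fun x => ?_) hi
    (Eventually.of_forall fun x => tendsto_const_nhds.congr' ?_)
  · exact (((cutR_contDiff (n := 2) R).continuous.pow 2).mul
      (h.Ent_continuous (h.hk2.trans_le hk0.1) hτ)).aestronglyMeasurable
  · have e := h.Ent_nonneg hk0 hτ x
    rw [Real.norm_eq_abs, abs_of_nonneg (by positivity)]
    have : cutR N R x ^ 2 ≤ 1 := pow_le_one₀ (cutR_nonneg R x) (cutR_le_one R x)
    nlinarith
  · filter_upwards [eventually_ge_atTop ‖x‖, eventually_gt_atTop 0] with R hR h0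
    rw [cutR_eq_one h0 hR]; ring

lemma Trap.locE_nonneg (h : Trap N m T k₁ k₂ u) {τ R : ℝ} (hτ : τ ∈ Set.Ioi (-Real.log T)) :
    0 ≤ locE N m T R u τ := by
  refine Finset.sum_nonneg fun i _ => integral_nonneg fun x => ?_
  have := (Real.rpow_pos_of_pos (h.Qf_pos hτ x) (-(1 / (1 - m)))).le
  simp only [Pi.zero_apply]; positivity

/-- The relative entropy is nonincreasing. -/
lemma Trap.ent_anti (h : Trap N m T k₁ k₂ u) (hk0 : k₀ ∈ Set.Icc k₂ k₁) {τ₀ τ₁ : ℝ}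
    (hτ₀ : τ₀ ∈ Set.Ioi (-Real.log T)) (h01 : τ₀ ≤ τ₁) :
    (∫ x, Ent N m T k₀ u τ₁ x) ≤ ∫ x, Ent N m T k₀ u τ₀ x := by
  obtain ⟨A, hA, H⟩ := h.ent_local hk0
  have hτ₁ : τ₁ ∈ Set.Ioi (-Real.log T) := (Set.mem_Ioi.1 hτ₀).trans_le h01
  have l1 := (h.ent_cut_tendsto hk0 hτ₁).sub (h.ent_cut_tendsto hk0 hτ₀)
  have l2 : Tendsto (fun R => (τ₁ - τ₀) * (m / Cst N m * (A * tailq N m R - 0 / 2))) atTop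
      (𝓝 ((τ₁ - τ₀) * (m / Cst N m * (A * 0 - 0 / 2)))) :=
    ((((tailq_tendsto h.par).const_mul A).sub_const _).const_mul _).const_mul _
  have := le_of_tendsto_of_tendsto l1 l2 (by
    filter_upwards [eventually_ge_atTop 1] with R hR
    exact H R hR τ₀ hτ₀ τ₁ h01 0 fun t ht => h.locE_nonneg ((Set.mem_Ioi.1 hτ₀).trans_le ht.1))
  simp at this
  linarith

/-- At arbitrarily late times the local Dirichlet energy is arbitrarily small. -/
lemma Trap.exists_small (h : Trap N m T k₁ k₂ u) {R δ τ₀ : ℝ}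
    (hδ : 0 < δ) (hτ₀ : τ₀ ∈ Set.Ioi (-Real.log T)) :
    ∃ τ, τ₀ ≤ τ ∧ ∑ i, (∫ x in Metric.ball (0 : Euc N) R, pd i (fun z => Kf N m T u z τ) x ^ 2) ≤ δ := by
  by_contra hcon
  push Not at hcon
  have hp := h.par
  have hC := hp.C_pos
  have hm0 := hp.hm0
  have hk0 : k₁ ∈ Set.Icc k₂ k₁ := ⟨h.hk12.le, le_rfl⟩
  obtain ⟨A, hA, H⟩ := h.ent_local hk0
  set c := (k₁ + R ^ 2) ^ (-(1 / (1 - m)))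
  have hk1 : 0 < k₁ := h.hk2.trans h.hk12
  have hc : 0 < c := Real.rpow_pos_of_pos (by positivity) _
  have ev : ∀ᶠ R' in atTop, A * tailq N m R' < c * δ / 4 := by
    have := (tailq_tendsto (N := N) hp).const_mul A
    rw [mul_zero] at this
    exact this.eventually (gt_mem_nhds (by positivity))
  obtain ⟨R', hR', hR1, hRR⟩ := (ev.and ((eventually_ge_atTop 1).and (eventually_ge_atTop R))).exists
  have hR0 : 0 < R' := by linarith
  have lb : ∀ t, τ₀ ≤ t → c * δ ≤ locE N m T R' u t := by
    intro t ht
    have hτ : t ∈ Set.Ioi (-Real.log T) := (Set.mem_Ioi.1 hτ₀).trans_le ht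
    have := (hcon t ht).le
    refine (mul_le_mul_of_nonneg_left this hc.le).trans ?_
    unfold locE
    rw [Finset.mul_sum]
    refine Finset.sum_le_sum fun i _ => ?_
    have cp : Continuous (pd i fun z => Kf N m T u z t) :=
      ((h.Kf_slice hτ).pd (k := 1) (by norm_num) i).continuous
    rw [← integral_const_mul, ← integral_indicator Metric.isOpen_ball.measurableSet]
    have hc2 : HasCompactSupport fun x => cutR N R' x ^ 2 :=
      HasCompactSupport.comp_left (g := fun z : ℝ => z ^ 2) (cutR_compact hR0) (by norm_num)
    have cQ : Continuous fun x => Qf N m T u x t ^ (-(1 / (1 - m))) :=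
      (h.Qf_slice hτ).continuous.rpow_const fun x => Or.inl (h.Qf_pos hτ x).ne'
    have cη : Continuous (cutR N R') := (cutR_contDiff (n := 2) R').continuous
    refine integral_mono_of_nonneg (Eventually.of_forall fun x => ?_) ?_
      (Eventually.of_forall fun x => ?_)
    · exact Set.indicator_nonneg (fun x _ => by positivity) x
    · have h1 : HasCompactSupport fun x => cutR N R' x ^ 2 * Qf N m T u x t ^ (-(1 / (1 - m))) :=
        hc2.mul_right
      exact Continuous.integrable_of_hasCompactSupport (by fun_prop)
        (h1.mul_right (f' := fun x => pd i (fun z => Kf N m T u z t) x ^ 2))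
    · have q0 : 0 < Qf N m T u x t ^ (-(1 / (1 - m))) := Real.rpow_pos_of_pos (h.Qf_pos hτ x) _
      simp only
      by_cases hx : x ∈ Metric.ball (0 : Euc N) R
      · rw [Set.indicator_of_mem hx]
        have hxn : ‖x‖ < R := by simpa using hx
        rw [cutR_eq_one hR0 (by linarith), one_pow, one_mul]
        have : c ≤ Qf N m T u x t ^ (-(1 / (1 - m))) := by
          refine Real.rpow_le_rpow_of_nonpos (h.Qf_pos hτ x) ?_ (by linarith [hp.p_pos])
          rw [← Kf_add]
          have := (h.Kf_mem hτ x).2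
          have := norm_nonneg x
          nlinarith
        gcongr
      · rw [Set.indicator_of_notMem hx]; positivity
  set E0 := ∫ x, cutR N R' x ^ 2 * Ent N m T k₁ u τ₀ x
  have up : ∀ τ₁, τ₀ ≤ τ₁ → (τ₁ - τ₀) * (m / Cst N m * (c * δ / 4)) ≤ E0 := by
    intro τ₁ h01
    have h1 := H R' hR1 τ₀ hτ₀ τ₁ h01 (c * δ) fun t ht => lb t ht.1
    have h2 : 0 ≤ ∫ x, cutR N R' x ^ 2 * Ent N m T k₁ u τ₁ x :=
      integral_nonneg fun x => mul_nonneg (sq_nonneg _)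
        (h.Ent_nonneg hk0 ((Set.mem_Ioi.1 hτ₀).trans_le h01) x)
    have h3 : (τ₁ - τ₀) * (m / Cst N m * (A * tailq N m R' - c * δ / 2))
        ≤ (τ₁ - τ₀) * (m / Cst N m * -(c * δ / 4)) := by
      have : 0 ≤ τ₁ - τ₀ := by linarith
      gcongr
      linarith
    have h4 : (τ₁ - τ₀) * (m / Cst N m * -(c * δ / 4)) = -((τ₁ - τ₀) * (m / Cst N m * (c * δ / 4))) := by
      ring
    linarith
  have hκ : 0 < m / Cst N m * (c * δ / 4) := by positivity
  set κ := m / Cst N m * (c * δ / 4)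
  have hE0 : 0 ≤ E0 := by simpa using up τ₀ le_rfl
  have := up (τ₀ + (E0 + 1) / κ) (by have : 0 ≤ (E0 + 1) / κ := by positivity
                                     linarith)
  rw [add_sub_cancel_left, div_mul_cancel₀ _ hκ.ne'] at this
  linarith

end entropyflow

/-! ### An `L¹` Poincaré inequality -/

section poincare
variable {N : ℕ}

/-- The `ℓ¹` norm of the gradient, as an extended nonnegative real. -/
def gradN (f : Euc N → ℝ) (x : Euc N) : ENNReal := ENNReal.ofReal (∑ i, |pd i f x|)

lemma gradN_continuous {f : Euc N → ℝ} (hf : ContDiff ℝ 2 f) : Continuous (gradN f) :=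
  ENNReal.continuous_ofReal.comp (continuous_finsetSum _ fun i _ =>
    (hf.pd (k := 1) (by norm_num) i).continuous.abs)

/-- The increment of `f` along `v` is at most the integral of the gradient along the segment. -/
lemma incr_le {f : Euc N → ℝ} (hf : ContDiff ℝ 2 f) (y v : Euc N) {L : ℝ} (hv : ‖v‖ ≤ L) :
    ENNReal.ofReal |f (y + v) - f y| ≤
      ENNReal.ofReal L * ∫⁻ t in Set.Ioc (0:ℝ) 1, gradN f (y + t • v) := by
  have hL : 0 ≤ L := (norm_nonneg v).trans hv
  have cpd : ∀ i, Continuous (pd i f) := fun i => (hf.pd (k := 1) (by norm_num) i).continuous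
  have cF : Continuous fun t : ℝ => ∑ i, |pd i f (y + t • v)| :=
    continuous_finsetSum _ fun i _ => ((cpd i).comp (by fun_prop)).abs
  have cD : Continuous fun t : ℝ => ∑ i, v i * pd i f (y + t • v) :=
    continuous_finsetSum _ fun i _ => continuous_const.mul ((cpd i).comp (by fun_prop))
  have hd : ∀ t : ℝ, HasDerivAt (fun t : ℝ => f (y + t • v)) (∑ i, v i * pd i f (y + t • v)) t := by
    intro t
    rw [← fderiv_eq_sum]
    have h1 : HasDerivAt (fun t : ℝ => y + t • v) v t := by
      simpa using ((hasDerivAt_id t).smul_const v).const_add y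
    exact ((hf.differentiable (by norm_num)) _).hasFDerivAt.comp_hasDerivAt t h1
  have e := intervalIntegral.integral_eq_sub_of_hasDerivAt (a := 0) (b := 1) (fun t _ => hd t)
    (cD.intervalIntegrable _ _)
  simp only [one_smul, zero_smul, add_zero] at e
  have h1 : |f (y + v) - f y| ≤ ∫ t in (0:ℝ)..1, L * ∑ i, |pd i f (y + t • v)| := by
    rw [← e, ← Real.norm_eq_abs]
    refine intervalIntegral.norm_integral_le_of_norm_le zero_le_one
      (Eventually.of_forall fun t _ => ?_) ((cF.const_mul L).intervalIntegrable _ _)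
    rw [Real.norm_eq_abs, Finset.mul_sum]
    refine (Finset.abs_sum_le_sum_abs _ _).trans (Finset.sum_le_sum fun i _ => ?_)
    rw [abs_mul]
    exact mul_le_mul_of_nonneg_right ((abs_coord_le _ _).trans hv) (abs_nonneg _)
  refine (ENNReal.ofReal_le_ofReal h1).trans ?_
  rw [intervalIntegral.integral_const_mul, ENNReal.ofReal_mul hL]
  refine mul_le_mul_right ?_ _
  rw [intervalIntegral.integral_of_le zero_le_one, ofReal_integral_eq_lintegral_ofReal]
  · rfl
  · exact (cF.intervalIntegrable 0 1).1
  · exact Eventually.of_forall fun t => Finset.sum_nonneg fun i _ => abs_nonneg _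

/-- Tonelli for the line integrals of the gradient. -/
lemma poincare_swap {g : Euc N → ENNReal} (cg : Continuous g) (R : ℝ) :
    ∫⁻ y in Metric.ball (0 : Euc N) R, ∫⁻ v in Metric.ball (0 : Euc N) (2 * R),
      ENNReal.ofReal (2 * R) * ∫⁻ t in Set.Ioc (0:ℝ) 1, g (y + t • v) =
    ENNReal.ofReal (2 * R) * ∫⁻ v in Metric.ball (0 : Euc N) (2 * R),
      ∫⁻ t in Set.Ioc (0:ℝ) 1, ∫⁻ y in Metric.ball (0 : Euc N) R, g (y + t • v) := by
  have m1 : Measurable fun q : (Euc N × Euc N) × ℝ => g (q.1.1 + q.2 • q.1.2) :=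
    (cg.comp (by fun_prop)).measurable
  have m2 : Measurable fun q : Euc N × Euc N =>
      ∫⁻ t in Set.Ioc (0:ℝ) 1, g (q.1 + t • q.2) :=
    Measurable.lintegral_prod_right' (ν := volume.restrict (Set.Ioc (0:ℝ) 1)) m1
  have m3 : Measurable fun y : Euc N => ∫⁻ v in Metric.ball (0 : Euc N) (2 * R),
      ∫⁻ t in Set.Ioc (0:ℝ) 1, g (y + t • v) :=
    Measurable.lintegral_prod_right' (ν := volume.restrict (Metric.ball (0 : Euc N) (2 * R))) m2
  have e1 : ∀ y : Euc N, ∫⁻ v in Metric.ball (0 : Euc N) (2 * R),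
      ENNReal.ofReal (2 * R) * ∫⁻ t in Set.Ioc (0:ℝ) 1, g (y + t • v)
      = ENNReal.ofReal (2 * R) * ∫⁻ v in Metric.ball (0 : Euc N) (2 * R),
        ∫⁻ t in Set.Ioc (0:ℝ) 1, g (y + t • v) := fun y =>
    lintegral_const_mul _ (m2.comp measurable_prodMk_left)
  rw [lintegral_congr e1, lintegral_const_mul _ m3]
  refine congrArg _ ((lintegral_lintegral_swap (f := fun (y v : Euc N) =>
    ∫⁻ t in Set.Ioc (0:ℝ) 1, g (y + t • v)) m2.aemeasurable).trans ?_)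
  refine lintegral_congr fun v => ?_
  have m4 : Measurable fun q : Euc N × ℝ => g (q.1 + q.2 • v) :=
    (cg.comp (by fun_prop)).measurable
  exact lintegral_lintegral_swap (f := fun (y : Euc N) (t : ℝ) => g (y + t • v)) m4.aemeasurable

/-- The Poincaré inequality in the form of a double integral of increments. -/
lemma poincare_avg {f : Euc N → ℝ} (hf : ContDiff ℝ 2 f) (R : ℝ) :
    ∫⁻ y in Metric.ball (0 : Euc N) R, ∫⁻ v in Metric.ball (0 : Euc N) (2 * R),
      ENNReal.ofReal |f (y + v) - f y| ≤
    ENNReal.ofReal (2 * R) * (volume (Metric.ball (0 : Euc N) (2 * R)) *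
      ∫⁻ z in Metric.ball (0 : Euc N) (3 * R), gradN f z) := by
  have cg := gradN_continuous hf
  calc _ ≤ ∫⁻ y in Metric.ball (0 : Euc N) R, ∫⁻ v in Metric.ball (0 : Euc N) (2 * R),
      ENNReal.ofReal (2 * R) * ∫⁻ t in Set.Ioc (0:ℝ) 1, gradN f (y + t • v) := by
        refine lintegral_mono fun y => setLIntegral_mono' measurableSet_ball fun v hv => ?_
        exact incr_le hf y v (mem_ball_zero_iff.1 hv).le
    _ = ENNReal.ofReal (2 * R) * ∫⁻ v in Metric.ball (0 : Euc N) (2 * R),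
          ∫⁻ t in Set.Ioc (0:ℝ) 1, ∫⁻ y in Metric.ball (0 : Euc N) R, gradN f (y + t • v) := by
        exact poincare_swap cg R
    _ ≤ ENNReal.ofReal (2 * R) * ∫⁻ v in Metric.ball (0 : Euc N) (2 * R),
          ∫⁻ t in Set.Ioc (0:ℝ) 1, ∫⁻ z in Metric.ball (0 : Euc N) (3 * R), gradN f z := by
        refine mul_le_mul_right (setLIntegral_mono' measurableSet_ball fun v hv =>
          setLIntegral_mono' measurableSet_Ioc fun t ht => ?_) _
        rw [← lintegral_indicator measurableSet_ball, ← lintegral_indicator measurableSet_ball,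
          ← lintegral_add_right_eq_self (Set.indicator (Metric.ball 0 (3 * R)) (gradN f)) (t • v)]
        refine lintegral_mono fun y => ?_
        by_cases hy : y ∈ Metric.ball (0 : Euc N) R
        · rw [Set.indicator_of_mem hy, Set.indicator_of_mem]
          have h1 := mem_ball_zero_iff.1 hy
          have h2 := mem_ball_zero_iff.1 hv
          rw [mem_ball_zero_iff]
          have h3 : ‖t • v‖ ≤ 1 * ‖v‖ := by
            rw [norm_smul, Real.norm_eq_abs, abs_of_pos ht.1]
            exact mul_le_mul_of_nonneg_right ht.2 (norm_nonneg _)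
          linarith [norm_add_le y (t • v)]
        · rw [Set.indicator_of_notMem hy]; exact zero_le
    _ = _ := by
        simp [mul_comm]

/-- An `L¹` Poincaré inequality on balls, with the average replaced by a value of the function. -/
lemma poincare (N : ℕ) {R : ℝ} (hR : 0 < R) : ∃ c : ℝ, 0 < c ∧ ∀ f : Euc N → ℝ, ContDiff ℝ 2 f →
    ∃ y, ∫⁻ x in Metric.ball (0 : Euc N) R, ENNReal.ofReal |f x - f y| ≤
      ENNReal.ofReal c * ∫⁻ z in Metric.ball (0 : Euc N) (3 * R), gradN f z := by
  set V := volume (Metric.ball (0 : Euc N) R)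
  set V2 := volume (Metric.ball (0 : Euc N) (2 * R))
  have hV0 : V ≠ 0 := (Metric.measure_ball_pos _ _ hR).ne'
  have hV1 : V ≠ ⊤ := measure_ball_lt_top.ne
  have hV20 : V2 ≠ 0 := (Metric.measure_ball_pos _ _ (by linarith)).ne'
  have hV21 : V2 ≠ ⊤ := measure_ball_lt_top.ne
  have hfin : ENNReal.ofReal (2 * R) * V2 / V ≠ ⊤ :=
    ENNReal.div_ne_top (ENNReal.mul_ne_top ENNReal.ofReal_ne_top hV21) hV0
  refine ⟨(ENNReal.ofReal (2 * R) * V2 / V).toReal, ENNReal.toReal_pos ?_ hfin, fun f hf => ?_⟩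
  · refine (ENNReal.div_pos (mul_ne_zero ?_ hV20) hV1).ne'
    simpa using hR
  rw [ENNReal.ofReal_toReal hfin]
  have ha := poincare_avg hf R
  have cf := hf.continuous
  have m2 : Measurable fun q : Euc N × Euc N => ENNReal.ofReal |f (q.1 + q.2) - f q.1| :=
    (ENNReal.continuous_ofReal.comp (by fun_prop)).measurable
  obtain ⟨y, hy, hy2⟩ := exists_le_setLAverage (μ := volume) (s := Metric.ball (0 : Euc N) R) hV0 hV1
    (f := fun y => ∫⁻ v in Metric.ball (0 : Euc N) (2 * R), ENNReal.ofReal |f (y + v) - f y|)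
    (m2.lintegral_prod_right').aemeasurable
  rw [setLAverage_eq] at hy2
  refine ⟨y, ?_⟩
  calc _ ≤ ∫⁻ v in Metric.ball (0 : Euc N) (2 * R), ENNReal.ofReal |f (y + v) - f y| := by
        rw [← lintegral_indicator measurableSet_ball, ← lintegral_indicator measurableSet_ball,
          ← lintegral_add_left_eq_self (Set.indicator (Metric.ball 0 R) _) y]
        refine lintegral_mono fun v => ?_
        by_cases hv : y + v ∈ Metric.ball (0 : Euc N) R
        · rw [Set.indicator_of_mem hv, Set.indicator_of_mem]
          have h1 := mem_ball_zero_iff.1 hv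
          have h2 := mem_ball_zero_iff.1 hy
          rw [mem_ball_zero_iff]
          have : v = (y + v) - y := by abel
          rw [this]
          linarith [norm_sub_le (y + v) y]
        · rw [Set.indicator_of_notMem hv]; exact zero_le
    _ ≤ _ := hy2
    _ ≤ _ := by
        refine (ENNReal.div_le_div_right ha _).trans (le_of_eq ?_)
        simp only [div_eq_mul_inv]; ring

end poincare

/-! ### Convergence in `L¹` -/

section decay
variable {N : ℕ} {m T k₁ k₂ k₀ : ℝ} {u : Euc N → ℝ → ℝ}

/-- Two-sided bound for the dependence of the profile on its parameter: `-∂ₖ B̃_k` is comparable to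
the weight `qw`. -/
lemma BbTil_cmp (hp : Par N m) (hk2 : 0 < k₂) :
    ∃ A A' : ℝ, 0 < A ∧ 0 < A' ∧ ∀ a ∈ Set.Icc k₂ k₁, ∀ b ∈ Set.Icc k₂ k₁, ∀ x : Euc N, a ≤ b →
      BbTil N m a x - BbTil N m b x ≤ A * ((b - a) * qw N m x) ∧
      A' * ((b - a) * qw N m x) ≤ BbTil N m a x - BbTil N m b x := by
  have hC := hp.C_pos
  have hpp := hp.p_pos
  obtain ⟨hA', hA, H⟩ := weight_bounds (r := 1 / (1 - m) + 1) (k₁ := k₁) (by linarith) hk2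
  set p := 1 / (1 - m) with hpdef
  refine ⟨Cst N m ^ p * p * min 1 k₂ ^ (-(p + 1)), Cst N m ^ p * p * max 1 k₁ ^ (-(p + 1)),
    by positivity, by positivity, fun a ha b hb x hab => ?_⟩
  rcases hab.eq_or_lt with rfl | hlt
  · simp
  have hpos : ∀ z ∈ Set.Icc a b, 0 < z + ‖x‖ ^ 2 := fun z hz => by
    have := hk2.trans_le (ha.1.trans hz.1); positivity
  have hd : ∀ z ∈ Set.Icc a b, HasDerivAt (fun z => (z + ‖x‖ ^ 2) ^ (-p))
      (1 * (-p) * (z + ‖x‖ ^ 2) ^ (-p - 1)) z := fun z hz =>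
    ((hasDerivAt_id z).add_const _).rpow_const (Or.inl (hpos z hz).ne')
  obtain ⟨ξ, hξ, e⟩ := exists_hasDerivAt_eq_slope _ _ hlt
    (fun z hz => (hd z hz).continuousAt.continuousWithinAt)
    (fun z hz => hd z ⟨hz.1.le, hz.2.le⟩)
  have hba : 0 < b - a := by linarith
  rw [eq_div_iff hba.ne'] at e
  have hξk : ξ ∈ Set.Icc k₂ k₁ := ⟨ha.1.trans hξ.1.le, hξ.2.le.trans hb.2⟩
  obtain ⟨lo, hi⟩ := H ξ hξk _ (sq_nonneg ‖x‖)
  rw [BbTil_eq hp (hk2.trans_le ha.1), BbTil_eq hp (hk2.trans_le hb.1), ← mul_sub]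
  have e2 : (a + ‖x‖ ^ 2) ^ (-p) - (b + ‖x‖ ^ 2) ^ (-p) = p * (b - a) * (ξ + ‖x‖ ^ 2) ^ (-(p + 1)) := by
    have : -(p + 1) = -p - 1 := by ring
    rw [this]; linarith
  rw [e2]
  have hCp : 0 < Cst N m ^ p := by positivity
  unfold qw
  rw [← hpdef]
  constructor
  · calc _ ≤ Cst N m ^ p * (p * (b - a) * (min 1 k₂ ^ (-(p + 1)) * (1 + ‖x‖ ^ 2) ^ (-(p + 1)))) := by
          gcongr
      _ = _ := by ring
  · calc _ = Cst N m ^ p * (p * (b - a) * (max 1 k₁ ^ (-(p + 1)) * (1 + ‖x‖ ^ 2) ^ (-(p + 1)))) := by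
          ring
      _ ≤ _ := by gcongr

lemma BbTil_abs (hp : Par N m) (hk2 : 0 < k₂) :
    ∃ A : ℝ, 0 < A ∧ ∀ a ∈ Set.Icc k₂ k₁, ∀ b ∈ Set.Icc k₂ k₁, ∀ x : Euc N,
      |BbTil N m a x - BbTil N m b x| ≤ A * (|a - b| * qw N m x) := by
  obtain ⟨A, A', hA, hA', H⟩ := BbTil_cmp (N := N) (k₁ := k₁) hp hk2
  refine ⟨A, hA, fun a ha b hb x => ?_⟩
  have hq := qw_pos (m := m) x
  rcases le_total a b with hab | hab
  · obtain ⟨h1, h2⟩ := H a ha b hb x hab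
    have : 0 ≤ A' * ((b - a) * qw N m x) := by
      have : 0 ≤ b - a := by linarith
      positivity
    rw [abs_of_nonneg (by linarith), abs_of_nonpos (by linarith), neg_sub]; exact h1
  · obtain ⟨h1, h2⟩ := H b hb a ha x hab
    have : 0 ≤ A' * ((a - b) * qw N m x) := by
      have : 0 ≤ a - b := by linarith
      positivity
    rw [abs_of_nonpos (by linarith), abs_of_nonneg (by linarith), neg_sub]; exact h1

lemma Trap.Kf_dev_integrable (h : Trap N m T k₁ k₂ u) {τ : ℝ} (hτ : τ ∈ Set.Ioi (-Real.log T))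
    {a : ℝ} (ha : a ∈ Set.Icc k₂ k₁) : Integrable fun x => |Kf N m T u x τ - a| * qw N m x := by
  refine (h.par.qw_integrable.const_mul (k₁ - k₂)).mono'
    ((((h.Kf_slice hτ).continuous.sub continuous_const).abs).mul qw_continuous).aestronglyMeasurable
    (Eventually.of_forall fun x => ?_)
  have hq := qw_pos (m := m) x
  rw [Real.norm_eq_abs, abs_of_nonneg (by positivity)]
  have hK := h.Kf_mem hτ x
  refine mul_le_mul_of_nonneg_right (abs_le.2 ⟨?_, ?_⟩) hq.le <;> linarith [hK.1, hK.2, ha.1, ha.2]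

/-- At arbitrarily late times `K` is close, in the weighted `L¹` norm, to a constant. -/
lemma Trap.near_const (h : Trap N m T k₁ k₂ u) {ζ τ₀ : ℝ} (hζ : 0 < ζ)
    (hτ₀ : τ₀ ∈ Set.Ioi (-Real.log T)) :
    ∃ τ, τ₀ ≤ τ ∧ ∃ a ∈ Set.Icc k₂ k₁, (∫ x, |Kf N m T u x τ - a| * qw N m x) ≤ ζ := by
  have hkk : 0 < k₁ - k₂ := by linarith [h.hk12]
  obtain ⟨R, hR, hR1⟩ : ∃ R, (k₁ - k₂) * tailq N m R ≤ ζ / 2 ∧ 0 < R := by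
    have h1 := (tailq_tendsto h.par).const_mul (k₁ - k₂)
    rw [mul_zero] at h1
    obtain ⟨R, hR, hR1⟩ := ((h1.eventually (gt_mem_nhds (half_pos hζ))).and
      (eventually_gt_atTop 0)).exists
    exact ⟨R, hR.le, hR1⟩
  obtain ⟨c, hc, HP⟩ := poincare N hR1
  set V := (volume (Metric.ball (0 : Euc N) (3 * R))).toReal
  have hV : 0 < V := ENNReal.toReal_pos (Metric.measure_ball_pos _ _ (by linarith)).ne'
    measure_ball_lt_top.ne
  -- thresholds: `c (N η V + δ / η) ≤ ζ / 2`
  set η := ζ / (4 * c * ((N + 1) * V)) with hη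
  have hη0 : 0 < η := by positivity
  set δ := η * ζ / (4 * c) with hδ
  have hδ0 : 0 < δ := by positivity
  obtain ⟨τ, hτ0, hτs⟩ := h.exists_small (R := 3 * R) hδ0 hτ₀
  have hτ : τ ∈ Set.Ioi (-Real.log T) := (Set.mem_Ioi.1 hτ₀).trans_le hτ0
  have hKs := h.Kf_slice hτ
  obtain ⟨y, hy⟩ := HP _ hKs
  refine ⟨τ, hτ0, Kf N m T u y τ, h.Kf_mem hτ y, ?_⟩
  set a := Kf N m T u y τ
  have ha : a ∈ Set.Icc k₂ k₁ := h.Kf_mem hτ y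
  have cpd : ∀ i, Continuous (pd i fun z => Kf N m T u z τ) := fun i =>
    (hKs.pd (k := 1) (by norm_num) i).continuous
  have cpl : ∀ {g : Euc N → ℝ} (R : ℝ), Continuous g → IntegrableOn g (Metric.ball 0 R) := fun R hg =>
    (hg.continuousOn.integrableOn_compact (isCompact_closedBall 0 R)).mono_set
      Metric.ball_subset_closedBall
  have cK : Continuous fun x => |Kf N m T u x τ - a| := (hKs.continuous.sub continuous_const).abs
  have cg : Continuous fun x => ∑ i, |pd i (fun z => Kf N m T u z τ) x| :=
    continuous_finsetSum _ fun i _ => (cpd i).abs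
  have hy2 : (∫ x in Metric.ball 0 R, |Kf N m T u x τ - a|) ≤
      c * ∫ x in Metric.ball 0 (3 * R), ∑ i, |pd i (fun z => Kf N m T u z τ) x| := by
    rw [← ofReal_integral_eq_lintegral_ofReal (cpl R cK) (Eventually.of_forall fun x => abs_nonneg _)]
      at hy
    unfold gradN at hy
    have n0 : ∀ x, 0 ≤ ∑ i, |pd i (fun z => Kf N m T u z τ) x| := fun x =>
      Finset.sum_nonneg fun i _ => abs_nonneg _
    rw [← ofReal_integral_eq_lintegral_ofReal (cpl _ cg) (Eventually.of_forall n0),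
      ← ENNReal.ofReal_mul hc.le] at hy
    exact (ENNReal.ofReal_le_ofReal_iff (mul_nonneg hc.le (integral_nonneg n0))).1 hy
  have hg : (∫ x in Metric.ball 0 (3 * R), ∑ i, |pd i (fun z => Kf N m T u z τ) x|)
      ≤ N * (η * V) + δ / η := by
    have cc : ∀ i, Continuous fun x => η + pd i (fun z => Kf N m T u z τ) x ^ 2 / η := fun i =>
      continuous_const.add (((cpd i).pow 2).div_const _)
    rw [integral_finsetSum _ fun i _ => cpl _ (cpd i).abs]
    calc _ ≤ ∑ i : Fin N, (η * V + (∫ x in Metric.ball (0 : Euc N) (3 * R),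
          pd i (fun z => Kf N m T u z τ) x ^ 2) / η) := by
          refine Finset.sum_le_sum fun i _ => ?_
          refine (integral_mono (cpl _ (cpd i).abs) (cpl _ (cc i)) fun x => ?_).trans (le_of_eq ?_)
          · simp only
            set z := pd i (fun z => Kf N m T u z τ) x
            rw [← sub_nonneg]
            have : η + z ^ 2 / η - |z| = ((η - |z| / 2) ^ 2 + 3 / 4 * |z| ^ 2) / η := by
              rw [← sq_abs z]; field_simp; ring
            rw [this]; positivity
          · have c2 : Continuous fun x => pd i (fun z => Kf N m T u z τ) x ^ 2 / η :=
              ((cpd i).pow 2).div_const _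
            rw [integral_add (cpl _ continuous_const) (cpl _ c2),
              integral_div η (fun x => pd i (fun z => Kf N m T u z τ) x ^ 2), setIntegral_const,
              smul_eq_mul, mul_comm]
            rfl
      _ = N * (η * V) + (∑ i, (∫ x in Metric.ball (0 : Euc N) (3 * R),
          pd i (fun z => Kf N m T u z τ) x ^ 2)) / η := by
          rw [Finset.sum_add_distrib, Finset.sum_div]; simp
      _ ≤ _ := by gcongr
  have hb : c * (N * (η * V) + δ / η) ≤ ζ / 2 := by
    have e1 : c * (δ / η) = ζ / 4 := by rw [hδ]; field_simp
    have e2 : c * ((N + 1) * (η * V)) = ζ / 4 := by rw [hη]; field_simp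
    have : 0 ≤ c * (η * V) := by positivity
    nlinarith
  have split : (∫ x, |Kf N m T u x τ - a| * qw N m x) ≤
      (∫ x in Metric.ball 0 R, |Kf N m T u x τ - a|) + (k₁ - k₂) * tailq N m R := by
    unfold tailq
    rw [← integral_indicator measurableSet_ball, ← integral_const_mul, ← integral_add
      ((integrable_indicator_iff measurableSet_ball).2 (cpl R cK))
      ((h.par.qw_integrable.indicator (measurableSet_outer R)).const_mul _)]
    refine integral_mono (h.Kf_dev_integrable hτ ha)
      (((integrable_indicator_iff measurableSet_ball).2 (cpl R cK)).add
      ((h.par.qw_integrable.indicator (measurableSet_outer R)).const_mul _)) fun x => ?_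
    have hq := qw_pos (m := m) x
    have hd : |Kf N m T u x τ - a| ≤ k₁ - k₂ := by
      have hK := h.Kf_mem hτ x
      refine (abs_le.2 ⟨?_, ?_⟩) <;> linarith [hK.1, hK.2, ha.1, ha.2]
    simp only
    by_cases hx : R ≤ ‖x‖
    · rw [Set.indicator_of_notMem (by simpa using hx), Set.indicator_of_mem (by exact hx), zero_add]
      gcongr
    · rw [Set.indicator_of_mem (by simpa using hx), Set.indicator_of_notMem (by exact hx)]
      have q1 : qw N m x ≤ 1 := by
        unfold qw
        refine Real.rpow_le_one_of_one_le_of_nonpos (by nlinarith [norm_nonneg x]) ?_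
        linarith [h.par.p_pos]
      have := abs_nonneg (Kf N m T u x τ - a)
      nlinarith
  have := mul_le_mul_of_nonneg_left hg hc.le
  linarith

/-- Relative mass conservation in the rescaled variables; the Jacobian is absorbed by `β = -Nγ`. -/
lemma Setup.resc_mass (h : Setup N m T k₁ k₂ k₀ u) {τ : ℝ} (hτ : τ ∈ Set.Ioi (-Real.log T)) :
    (∫ y, (rescaleSol N m T u y τ - BbTil N m k₀ y)) = 0 := by
  have hk0 : 0 < k₀ := h.hk2.trans_le h.hk0.1
  have e : ∀ y, rescaleSol N m T u y τ - BbTil N m k₀ y = Real.exp (betaC N m * τ) *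
      (fun x => u x (T - Real.exp (-τ)) - Bb N m T k₀ x (T - Real.exp (-τ)))
        (Real.exp (-gammaC N m * τ) • y) := by
    intro y
    rw [← rescale_Bb h.par (T := T) hk0 y τ]
    unfold rescaleSol; ring
  rw [integral_congr_ae (Eventually.of_forall e), integral_const_mul]
  have e2 := Measure.integral_comp_smul volume
    (fun x => u x (T - Real.exp (-τ)) - Bb N m T k₀ x (T - Real.exp (-τ)))
    (Real.exp (-gammaC N m * τ))
  rw [h.mass _ (mem_time h.hT hτ), smul_zero] at e2
  rw [e2, mul_zero]

/-- The entropy tends to zero. By monotonicity it suffices to find one late time at which it is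
small. At a time at which `K` is close to a constant `c`, the rescaled solution is close to `B̃_c` in
`L¹`; vanishing relative mass then forces `c` to be close to `k₀`, since `k ↦ B̃_k` is strictly
monotone with the quantitative bound of `BbTil_cmp`. -/
lemma Setup.ent_tendsto (h : Setup N m T k₁ k₂ k₀ u) :
    Tendsto (fun τ => ∫ x, Ent N m T k₀ u τ x) atTop (𝓝 0) := by
  have hp := h.par
  obtain ⟨A, A', hA, hA', H⟩ := BbTil_cmp (N := N) (k₁ := k₁) hp h.hk2
  obtain ⟨A₁, hA₁, H₁⟩ := BbTil_abs (N := N) (k₁ := k₁) hp h.hk2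
  obtain ⟨c₁, c₂, hc1, hc2, HE⟩ := h.Ent_bounds h.hk0
  have hkk : 0 < k₁ - k₂ := by linarith [h.hk12]
  rw [Metric.tendsto_atTop]
  intro ε hε
  -- `ζ` is chosen so that `c₂ (k₁ - k₂) (1 + A₁ / A') ζ = ε / 2`
  set ζ := ε / (2 * (c₂ * (k₁ - k₂) * (1 + A₁ / A')))
  have hζ : 0 < ζ := by positivity
  have hτ₀ : -Real.log T + 1 ∈ Set.Ioi (-Real.log T) := by simp
  obtain ⟨τ, hτ0, a, ha, hτa⟩ := h.near_const hζ hτ₀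
  have hτ : τ ∈ Set.Ioi (-Real.log T) := (Set.mem_Ioi.1 hτ₀).trans_le hτ0
  set K := fun x => Kf N m T u x τ with hK
  set I := ∫ x : Euc N, qw N m x
  have hi := h.Kf_dev_integrable hτ ha
  have hIa := h.Kf_dev_integrable hτ h.hk0
  have hBi : ∀ b ∈ Set.Icc k₂ k₁, ∀ c ∈ Set.Icc k₂ k₁,
      Integrable fun x : Euc N => BbTil N m b x - BbTil N m c x := by
    intro b hb c hc
    have cB : ∀ k ∈ Set.Icc k₂ k₁, Continuous (BbTil N m k : Euc N → ℝ) := by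
      intro k hk
      have : 0 < k := h.hk2.trans_le hk.1
      have e : (BbTil N m k : Euc N → ℝ) = fun x => Cst N m ^ (1 / (1 - m)) *
        (k + ‖x‖ ^ 2) ^ (-(1 / (1 - m))) := funext fun x => BbTil_eq hp this x
      rw [e]
      exact continuous_const.mul (Continuous.rpow_const (by fun_prop) fun x => Or.inl (by positivity))
    refine ((hp.qw_integrable.const_mul |b - c|).const_mul A₁).mono'
      ((cB b hb).sub (cB c hc)).aestronglyMeasurable (Eventually.of_forall fun x => ?_)
    exact H₁ b hb c hc x
  have hRa : Integrable fun x => rescaleSol N m T u x τ - BbTil N m a x := by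
    have cr : Continuous fun x => rescaleSol N m T u x τ :=
      ((slice_contDiff h.resc_smooth hτ).of_le two_le_top).continuous
    have cB : Continuous (BbTil N m a : Euc N → ℝ) := by
      have : 0 < a := h.hk2.trans_le ha.1
      have e : (BbTil N m a : Euc N → ℝ) = fun x => Cst N m ^ (1 / (1 - m)) *
        (a + ‖x‖ ^ 2) ^ (-(1 / (1 - m))) := funext fun x => BbTil_eq hp this x
      rw [e]
      exact continuous_const.mul (Continuous.rpow_const (by fun_prop) fun x => Or.inl (by positivity))
    refine (hi.const_mul A₁).mono' (cr.sub cB).aestronglyMeasurable (Eventually.of_forall fun x => ?_)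
    rw [h.resc_eq hτ x]
    exact H₁ _ (h.Kf_mem hτ x) _ ha x
  have s1 : |∫ x : Euc N, (BbTil N m a x - BbTil N m k₀ x)| ≤ A₁ * ζ := by
    have e : (∫ x : Euc N, (BbTil N m a x - BbTil N m k₀ x)) =
        -∫ x, (rescaleSol N m T u x τ - BbTil N m a x) := by
      have := h.resc_mass hτ
      have e2 : ∀ x, rescaleSol N m T u x τ - BbTil N m k₀ x = (rescaleSol N m T u x τ - BbTil N m a x)
        + (BbTil N m a x - BbTil N m k₀ x) := fun x => by ring
      rw [integral_congr_ae (Eventually.of_forall e2), integral_add hRa (hBi a ha _ h.hk0)] at this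
      linarith
    rw [e, abs_neg, ← Real.norm_eq_abs]
    refine (norm_integral_le_of_norm_le (hi.const_mul A₁) (Eventually.of_forall fun x => ?_)).trans ?_
    · rw [h.resc_eq hτ x]
      exact H₁ _ (h.Kf_mem hτ x) _ ha x
    · rw [integral_const_mul]
      exact mul_le_mul_of_nonneg_left hτa hA₁.le
  have hq0 : ∀ x : Euc N, 0 ≤ qw N m x := fun x => (qw_pos x).le
  have s2 : A' * (|a - k₀| * I) ≤ A₁ * ζ := by
    have gen : ∀ b ∈ Set.Icc k₂ k₁, ∀ c ∈ Set.Icc k₂ k₁, b ≤ c →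
        A' * ((c - b) * I) ≤ ∫ x : Euc N, (BbTil N m b x - BbTil N m c x) := by
      intro b hb c hc hbc
      rw [← integral_const_mul, ← integral_const_mul]
      exact integral_mono ((hp.qw_integrable.const_mul _).const_mul _) (hBi b hb c hc)
        fun x => (H b hb c hc x hbc).2
    rcases le_total a k₀ with hab | hab
    · rw [abs_of_nonpos (by linarith), neg_sub]
      exact (gen a ha _ h.hk0 hab).trans ((le_abs_self _).trans s1)
    · rw [abs_of_nonneg (by linarith)]
      refine (gen _ h.hk0 a ha hab).trans (le_trans ?_ s1)
      rw [← abs_neg, ← integral_neg]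
      simp only [neg_sub]
      exact le_abs_self _
  have s3 : (∫ x, |K x - k₀| * qw N m x) ≤ (1 + A₁ / A') * ζ := by
    have : (∫ x, |K x - k₀| * qw N m x) ≤ (∫ x, |K x - a| * qw N m x) + |a - k₀| * I := by
      rw [← integral_const_mul, ← integral_add hi (hp.qw_integrable.const_mul _)]
      refine integral_mono hIa (hi.add (hp.qw_integrable.const_mul _)) fun x => ?_
      have : |K x - k₀| ≤ |K x - a| + |a - k₀| := abs_sub_le _ _ _
      have := mul_le_mul_of_nonneg_right this (hq0 x)
      rw [add_mul] at this
      exact this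
    have h2 : |a - k₀| * I ≤ A₁ / A' * ζ := by
      rw [div_mul_eq_mul_div, le_div_iff₀ hA']; linarith
    linarith
  have s4 : (∫ x, Ent N m T k₀ u τ x) ≤ ε / 2 := by
    calc _ ≤ ∫ x, c₂ * ((k₁ - k₂) * (|K x - k₀| * qw N m x)) := by
          refine integral_mono (h.Ent_integrable h.hk0 hτ) ((hIa.const_mul _).const_mul _) fun x => ?_
          refine ((HE τ hτ x).2).trans (mul_le_mul_of_nonneg_left ?_ hc2.le)
          rw [← mul_assoc, ← sq_abs, sq]
          refine mul_le_mul_of_nonneg_right (mul_le_mul_of_nonneg_right ?_ (abs_nonneg _)) (hq0 x)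
          have hKx := h.Kf_mem hτ x
          refine (abs_le.2 ⟨?_, ?_⟩) <;> linarith [hKx.1, hKx.2, h.hk0.1, h.hk0.2]
      _ ≤ c₂ * ((k₁ - k₂) * ((1 + A₁ / A') * ζ)) := by
          rw [integral_const_mul, integral_const_mul]; gcongr
      _ = ε / 2 := by simp only [ζ]; field_simp
  refine ⟨τ, fun τ' hτ' => ?_⟩
  have hτ'm : τ' ∈ Set.Ioi (-Real.log T) := (Set.mem_Ioi.1 hτ).trans_le hτ'
  rw [Real.dist_eq, sub_zero, abs_of_nonneg (integral_nonneg fun x => h.Ent_nonneg h.hk0 hτ'm x)]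
  have := h.ent_anti h.hk0 hτ hτ'
  linarith

/-- `L¹` convergence of the rescaled solution. -/
lemma Setup.L1_tendsto (h : Setup N m T k₁ k₂ k₀ u) :
    Tendsto (fun τ => ∫ x, |rescaleSol N m T u x τ - BbTil N m k₀ x|) atTop (𝓝 0) := by
  have hp := h.par
  obtain ⟨A₁, hA₁, H₁⟩ := BbTil_abs (N := N) (k₁ := k₁) hp h.hk2
  obtain ⟨c₁, c₂, hc1, hc2, HE⟩ := h.Ent_bounds h.hk0
  set I := ∫ x : Euc N, qw N m x
  have hI : 0 ≤ I := integral_nonneg fun x => (qw_pos x).le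
  have hq0 : ∀ x : Euc N, 0 ≤ qw N m x := fun x => (qw_pos x).le
  have key : ∀ η : ℝ, 0 < η → ∀ τ ∈ Set.Ioi (-Real.log T),
      (∫ x, |rescaleSol N m T u x τ - BbTil N m k₀ x|) ≤
        A₁ * (η * I + (∫ x, Ent N m T k₀ u τ x) / (c₁ * η)) := by
    intro η hη τ hτ
    have i2 := (h.Ent_integrable h.hk0 hτ).div_const (c₁ * η)
    have i1 := hp.qw_integrable.const_mul η
    rw [← integral_const_mul, ← integral_div, ← integral_add i1 i2, ← integral_const_mul]
    refine integral_mono_of_nonneg (Eventually.of_forall fun x => abs_nonneg _)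
      ((i1.add i2).const_mul _) (Eventually.of_forall fun x => ?_)
    simp only
    rw [h.resc_eq hτ x]
    refine (H₁ _ (h.Kf_mem hτ x) _ h.hk0 x).trans (mul_le_mul_of_nonneg_left ?_ hA₁.le)
    set z := Kf N m T u x τ - k₀ with hz
    have h1 : |z| ≤ η + z ^ 2 / η := by
      rw [← sub_nonneg]
      have : η + z ^ 2 / η - |z| = ((η - |z| / 2) ^ 2 + 3 / 4 * |z| ^ 2) / η := by
        rw [← sq_abs z]; field_simp; ring
      rw [this]; positivity
    have h2 : z ^ 2 / η * qw N m x ≤ Ent N m T k₀ u τ x / (c₁ * η) := by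
      rw [le_div_iff₀ (by positivity)]
      have := (HE τ hτ x).1
      rw [← hz] at this
      calc _ = c₁ * (z ^ 2 * qw N m x) := by field_simp
        _ ≤ _ := this
    have := mul_le_mul_of_nonneg_right h1 (hq0 x)
    rw [add_mul] at this
    linarith
  rw [Metric.tendsto_atTop]
  intro ε hε
  set η := ε / (4 * A₁ * (I + 1)) with hη
  have hη0 : 0 < η := by positivity
  have hE := (Metric.tendsto_atTop.1 h.ent_tendsto) (ε * (c₁ * η) / (4 * A₁)) (by positivity)
  obtain ⟨τ₀, hτ₀⟩ := hE
  refine ⟨max τ₀ (-Real.log T + 1), fun τ hτ => ?_⟩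
  have hτm : τ ∈ Set.Ioi (-Real.log T) := by
    have := (le_max_right _ _).trans hτ
    rw [Set.mem_Ioi]; linarith
  have hb := hτ₀ τ ((le_max_left _ _).trans hτ)
  rw [Real.dist_eq, sub_zero, abs_of_nonneg (integral_nonneg fun x => h.Ent_nonneg h.hk0 hτm x)] at hb
  rw [Real.dist_eq, sub_zero, abs_of_nonneg (integral_nonneg fun x => abs_nonneg _)]
  refine (key η hη0 τ hτm).trans_lt ?_
  have e1 : A₁ * (η * (I + 1)) = ε / 4 := by rw [hη]; field_simp
  have e2 : A₁ * ((∫ x, Ent N m T k₀ u τ x) / (c₁ * η)) ≤ ε / 4 := by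
    rw [mul_div_assoc', div_le_iff₀ (by positivity)]
    rw [lt_div_iff₀ (by positivity)] at hb
    linarith
  have : 0 < A₁ * η := by positivity
  nlinarith

end decay

/-! ### Monotonicity in time -/

section monotone
variable {N : ℕ} {m T k₁ k₂ : ℝ} {u : Euc N → ℝ → ℝ}

/-- A comparison far away in space: at comparable times the upper Barenblatt barrier, slightly
damped, lies below the lower one. -/
lemma barrier_far (h : Trap N m T k₁ k₂ u) {r l L s R : ℝ} (hr : 0 < r) (hrs : r ≤ s) (hrl : r ≤ l)
    (hs : s < T) (hl : l < T) (hL : 1 < L) (hR : k₁ * (T - s) ^ (2 * gammaC N m) < (L - 1) * R ^ 2)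
    (hR0 : 0 ≤ R) {x : Euc N} (hx : R ≤ ‖x‖) :
    L ^ (-(1 / (1 - m))) * u x l < u x r := by
  have hp := h.par
  have hC := hp.C_pos
  have hk1 : 0 < k₁ := h.hk2.trans h.hk12
  have hr' : r ∈ Set.Ioo 0 T := ⟨hr, by linarith⟩
  have hl' : l ∈ Set.Ioo 0 T := ⟨by linarith, hl⟩
  have hL0 : 0 < L := by linarith
  refine lt_of_le_of_lt (mul_le_mul_of_nonneg_left (h.hi x l hl') (Real.rpow_pos_of_pos hL0 _).le)
    (lt_of_lt_of_le ?_ (h.lo x r hr'))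
  have q1 := Qd_pos (N := N) (m := m) hk1 hr'.2 x
  have q2 := Qd_pos (N := N) (m := m) h.hk2 hl x
  have hTl : 0 < T - l := by linarith
  have hTr : 0 < T - r := by linarith
  unfold Bb
  change L ^ (-(1 / (1 - m))) * (Cst N m * (T - l) / Qd N m T k₂ x l) ^ (1 / (1 - m)) <
    (Cst N m * (T - r) / Qd N m T k₁ x r) ^ (1 / (1 - m))
  rw [Real.rpow_neg hL0.le, ← Real.inv_rpow hL0.le, ← Real.mul_rpow (by positivity) (by positivity)]
  refine Real.rpow_lt_rpow (by positivity) ?_ hp.p_pos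
  have e : L⁻¹ * (Cst N m * (T - l) / Qd N m T k₂ x l) = Cst N m * (T - l) / (L * Qd N m T k₂ x l) := by
    field_simp
  rw [e, div_lt_div_iff₀ (by positivity) q1]
  have g : (T - r) ^ (2 * gammaC N m) ≤ (T - s) ^ (2 * gammaC N m) :=
    Real.rpow_le_rpow_of_nonpos (by linarith) (by linarith) (by linarith [hp.gamma_neg])
  have x2 : R ^ 2 ≤ ‖x‖ ^ 2 := by gcongr
  have qq : Qd N m T k₁ x r < L * Qd N m T k₂ x l := by
    unfold Qd
    have a1 : 0 < (T - l) ^ (2 * gammaC N m) := Real.rpow_pos_of_pos hTl _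
    have a2 : 0 < L * (k₂ * (T - l) ^ (2 * gammaC N m)) := by have := h.hk2; positivity
    have a3 := mul_le_mul_of_nonneg_left g hk1.le
    have a4 := mul_le_mul_of_nonneg_left x2 (show 0 ≤ L - 1 by linarith)
    nlinarith
  calc _ < Cst N m * (T - l) * (L * Qd N m T k₂ x l) := by gcongr
    _ ≤ _ := by gcongr

lemma deriv_nonpos_left {g : ℝ → ℝ} {g' a b : ℝ} (hab : a < b) (hg : HasDerivAt g g' b)
    (h0 : g b = 0) (hpos : ∀ r ∈ Set.Ico a b, 0 < g r) : g' ≤ 0 := by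
  by_contra hcon
  push Not at hcon
  have ev := (eventually_nhdsWithin_sign_eq_of_deriv_pos (by rw [hg.deriv]; exact hcon) h0).filter_mono
    (nhdsWithin_le_nhds (s := Set.Iio b))
  have ev2 : ∀ᶠ r in 𝓝[<] b, r ∈ Set.Ico a b := Ico_mem_nhdsLT hab
  obtain ⟨r, hr1, hr2⟩ := (ev.and ev2).exists
  rw [sign_pos (hpos r hr2), sign_neg (by linarith [hr2.2])] at hr1
  exact absurd hr1 (by decide)

/-- Put `φ(s) = ε + L (s - ε) + b (s - ε)²`. Then `φ' (s) ^ (-1/(1-m)) u(x, φ(s))` is a strict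
subsolution because `φ'' > 0`, it is strictly below `u` at time `ε` because `L > 1`, and it stays
below `u` for large `x` by `barrier_far`. Hence there is no first touching point. -/
lemma Trap.time_core (h : Trap N m T k₁ k₂ u) {ε s L b : ℝ} (hε : 0 < ε) (hεs : ε < s)
    (hL : 1 < L) (hb : 0 < b) (hT : ε + L * (s - ε) + b * (s - ε) ^ 2 < T) (x : Euc N) :
    (L + 2 * b * (s - ε)) ^ (-(1 / (1 - m))) * u x (ε + L * (s - ε) + b * (s - ε) ^ 2) ≤ u x s := by
  have hp := h.par
  set p := 1 / (1 - m) with hpdef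
  have hpp : 0 < p := hp.p_pos
  set Λ : ℝ → ℝ := fun r => ε + L * (r - ε) + b * (r - ε) ^ 2 with hΛ
  set D1 : ℝ → ℝ := fun r => L + 2 * b * (r - ε) with hD1
  set D : Euc N × ℝ → ℝ := fun q => u q.1 q.2 - D1 q.2 ^ (-p) * u q.1 (Λ q.2) with hD
  have hsT : s < T := by nlinarith [mul_pos hb (pow_pos (sub_pos.2 hεs) 2), mul_pos (sub_pos.2 hL) (sub_pos.2 hεs)]
  have hD1p : ∀ r ∈ Set.Icc ε s, L ≤ D1 r := fun r hr => by
    have : 0 ≤ r - ε := by linarith [hr.1]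
    simp only [hD1]; nlinarith [mul_nonneg hb.le this]
  have hΛr : ∀ r ∈ Set.Icc ε s, r ≤ Λ r ∧ Λ r < T := fun r hr => by
    have h1 : 0 ≤ r - ε := by linarith [hr.1]
    have h2 : r - ε ≤ s - ε := by linarith [hr.2]
    have h3 : 0 ≤ b * (r - ε) ^ 2 := by positivity
    have h4 : b * (r - ε) ^ 2 ≤ b * (s - ε) ^ 2 := by gcongr
    have h5 : L * (r - ε) ≤ L * (s - ε) := by gcongr
    refine ⟨?_, lt_of_le_of_lt ?_ hT⟩
    · simp only [hΛ]; nlinarith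
    · simp only [hΛ]; linarith
  have hrI : ∀ r ∈ Set.Icc ε s, r ∈ Set.Ioo 0 T := fun r hr => ⟨hε.trans_le hr.1, hr.2.trans_lt hsT⟩
  have hΛI : ∀ r ∈ Set.Icc ε s, Λ r ∈ Set.Ioo 0 T := fun r hr =>
    ⟨(hrI r hr).1.trans_le (hΛr r hr).1, (hΛr r hr).2⟩
  have cD : ContinuousOn D (Set.univ ×ˢ Set.Icc ε s) := by
    have cu := h.sol.smooth.continuousOn
    refine (cu.mono (Set.prod_mono_right fun r hr => hrI r hr)).sub (ContinuousOn.mul ?_ ?_)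
    · exact ContinuousOn.rpow_const (by fun_prop) fun q hq =>
        Or.inl (by have := hD1p q.2 hq.2; exact (by linarith : 0 < D1 q.2).ne')
    · exact cu.comp (f := fun q : Euc N × ℝ => (q.1, Λ q.2)) (by fun_prop)
        fun q hq => ⟨trivial, hΛI _ hq.2⟩
  -- positivity for large `x`
  have hk1 : 0 < k₁ := h.hk2.trans h.hk12
  obtain ⟨R, hR0, hR⟩ : ∃ R : ℝ, 0 ≤ R ∧ k₁ * (T - s) ^ (2 * gammaC N m) < (L - 1) * R ^ 2 := by
    have hX : 0 < k₁ * (T - s) ^ (2 * gammaC N m) :=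
      mul_pos hk1 (Real.rpow_pos_of_pos (by linarith) _)
    refine ⟨√((k₁ * (T - s) ^ (2 * gammaC N m) + 1) / (L - 1)), Real.sqrt_nonneg _, ?_⟩
    have hL1 : 0 < L - 1 := by linarith
    rw [Real.sq_sqrt (by positivity), mul_div_cancel₀ _ hL1.ne']; linarith
  have far : ∀ y : Euc N, R ≤ ‖y‖ → ∀ r ∈ Set.Icc ε s, 0 < D (y, r) := by
    intro y hy r hr
    have h1 := barrier_far h (hrI r hr).1 hr.2 (hΛr r hr).1 hsT (hΛr r hr).2 hL hR hR0 hy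
    have h2 : D1 r ^ (-p) ≤ L ^ (-p) :=
      Real.rpow_le_rpow_of_nonpos (by linarith) (hD1p r hr) (by linarith)
    have h3 := mul_le_mul_of_nonneg_right h2 (h.sol.pos y _ (hΛI r hr)).le
    simp only [hD]
    linarith
  by_contra hcon
  push Not at hcon
  have hsI : s ∈ Set.Icc ε s := ⟨hεs.le, le_rfl⟩
  have hxs : D (x, s) ≤ 0 := by simp only [hD, hD1, hΛ]; linarith
  set Z := (Metric.closedBall (0 : Euc N) R ×ˢ Set.Icc ε s) ∩ D ⁻¹' Set.Iic 0 with hZ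
  have cZ : IsCompact Z := by
    have c0 : IsCompact (Metric.closedBall (0 : Euc N) R ×ˢ Set.Icc ε s) :=
      (isCompact_closedBall _ _).prod isCompact_Icc
    exact c0.of_isClosed_subset ((cD.mono (Set.prod_mono_left (Set.subset_univ _))).preimage_isClosed_of_isClosed
      c0.isClosed isClosed_Iic) Set.inter_subset_left
  have neZ : Z.Nonempty := by
    refine ⟨(x, s), ⟨?_, hsI⟩, hxs⟩
    by_contra hx
    have := far x (by have : ¬ ‖x‖ ≤ R := by simpa using hx
                      linarith) s hsI
    linarith
  obtain ⟨⟨x₁, r₁⟩, ⟨⟨hx1, hr1⟩, hD1z⟩, hmin⟩ := cZ.exists_isMinOn neZ continuous_snd.continuousOn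
  simp only at hx1 hr1
  have hDle : D (x₁, r₁) ≤ 0 := hD1z
  have before : ∀ y : Euc N, ∀ r ∈ Set.Ico ε r₁, 0 < D (y, r) := by
    intro y r hr
    have hrs : r ∈ Set.Icc ε s := ⟨hr.1, hr.2.le.trans hr1.2⟩
    by_cases hy : R ≤ ‖y‖
    · exact far y hy r hrs
    by_contra hc
    have hin : (y, r) ∈ Z := ⟨⟨by simpa using (not_le.1 hy).le, hrs⟩, not_lt.1 hc⟩
    have := hmin hin
    simp only [Set.mem_ofPred_eq] at this
    linarith [hr.2]
  -- the touching time is not the initial one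
  have hr1ε : ε < r₁ := by
    rcases hr1.1.eq_or_lt with he | hlt
    · exfalso
      subst he
      have hup := h.sol.pos x₁ ε ⟨hε, hεs.trans hsT⟩
      have e1 : D (x₁, ε) = u x₁ ε - L ^ (-p) * u x₁ ε := by
        simp [hD, hD1, hΛ]
      have e2 : L ^ (-p) < 1 := Real.rpow_lt_one_of_one_lt_of_neg hL (by linarith)
      rw [e1] at hDle
      nlinarith
    · exact hlt
  have hge : ∀ y : Euc N, 0 ≤ D (y, r₁) := by
    intro y
    have c1 : ContinuousWithinAt (fun r => D (y, r)) (Set.Icc ε s) r₁ :=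
      (cD.comp (f := fun r : ℝ => (y, r)) (by fun_prop) (fun r hr => ⟨trivial, hr⟩)) r₁ hr1
    have c2 : Tendsto (fun r => D (y, r)) (𝓝[<] r₁) (𝓝 (D (y, r₁))) := by
      refine c1.tendsto.mono_left ?_
      rw [nhdsWithin_le_iff]
      filter_upwards [Ico_mem_nhdsLT hr1ε] with r hr
      exact ⟨hr.1, hr.2.le.trans hr1.2⟩
    refine ge_of_tendsto c2 ?_
    filter_upwards [Ico_mem_nhdsLT hr1ε] with r hr
    exact (before y r hr).le
  have hD0 : D (x₁, r₁) = 0 := le_antisymm hDle (hge x₁)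
  have hrI1 := hrI r₁ hr1
  have hΛI1 := hΛI r₁ hr1
  set d := D1 r₁ with hd
  have hdp : 0 < d := by linarith [hD1p r₁ hr1]
  have hdpp : 0 < d ^ (-p) := Real.rpow_pos_of_pos hdp _
  -- spatial information
  have hlap : 0 ≤ lapl (fun y => u y r₁ ^ m) x₁ - (d ^ (-p)) ^ m * lapl (fun y => u y (Λ r₁) ^ m) x₁ := by
    have s1 := (h.sol.slice_rpow hrI1 m).of_le two_le_top
    have s2 := (h.sol.slice_rpow hΛI1 m).of_le two_le_top
    rw [← lapl_const_mul s2, ← lapl_sub s1 (contDiff_const.mul s2)]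
    refine lapl_nonneg_of_min (s1.sub (contDiff_const.mul s2)) fun y => ?_
    have e : ∀ y, (d ^ (-p)) ^ m * u y (Λ r₁) ^ m = (d ^ (-p) * u y (Λ r₁)) ^ m := fun y =>
      (Real.mul_rpow hdpp.le (h.sol.pos y _ hΛI1).le).symm
    simp only [e]
    have e1 : u x₁ r₁ = d ^ (-p) * u x₁ (Λ r₁) := by
      have := hD0
      simp only [hD] at this
      linarith
    rw [← e1, sub_self]
    have e2 : d ^ (-p) * u y (Λ r₁) ≤ u y r₁ := by
      have := hge y
      simp only [hD] at this
      linarith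
    have := Real.rpow_le_rpow (mul_pos hdpp (h.sol.pos y _ hΛI1)).le e2 hp.hm0.le
    linarith
  -- temporal information
  have hder : HasDerivAt (fun r => D (x₁, r)) (lapl (fun y => u y r₁ ^ m) x₁ -
      (2 * b * (-p) * d ^ (-p - 1) * u x₁ (Λ r₁)
        + d ^ (-p) * (lapl (fun y => u y (Λ r₁) ^ m) x₁ * d))) r₁ := by
    have dΛ : HasDerivAt Λ d r₁ := by
      have h1 := (hasDerivAt_id r₁).sub_const ε
      have h2 := ((h1.const_mul L).const_add ε).add ((h1.pow 2).const_mul b)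
      refine h2.congr_deriv ?_
      simp [hd, hD1]; ring
    have dD1 : HasDerivAt D1 (2 * b) r₁ := by
      have h1 := (hasDerivAt_id r₁).sub_const ε
      simpa [hD1] using (h1.const_mul (2 * b)).const_add L
    have t1 : HasDerivAt (fun r => u x₁ r) (lapl (fun y => u y r₁ ^ m) x₁) r₁ := by
      rw [← h.sol.pde _ _ hrI1]
      exact slice_hasDerivAt isOpen_Ioo h.sol.smooth hrI1 x₁
    have t2 : HasDerivAt (fun r => u x₁ r) (lapl (fun y => u y (Λ r₁) ^ m) x₁) (Λ r₁) := by
      rw [← h.sol.pde _ _ hΛI1]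
      exact slice_hasDerivAt isOpen_Ioo h.sol.smooth hΛI1 x₁
    exact t1.sub ((dD1.rpow_const (Or.inl hdp.ne')).mul (HasDerivAt.comp r₁ t2 dΛ))
  have hle := deriv_nonpos_left hr1ε hder hD0 (before x₁)
  have e3 : (d ^ (-p)) ^ m = d ^ (-p) * d := by
    rw [← Real.rpow_mul hdp.le]
    nth_rw 3 [← Real.rpow_one d]
    rw [← Real.rpow_add hdp]
    congr 1
    have := hp.pm
    rw [← hpdef] at this
    linarith
  rw [e3] at hlap
  have : 0 < 2 * b * p * d ^ (-p - 1) * u x₁ (Λ r₁) := by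
    have := Real.rpow_pos_of_pos hdp (-p - 1)
    have := h.sol.pos x₁ _ hΛI1
    positivity
  nlinarith

/-- Time monotonicity: `t ↦ t ^ (-1/(1-m)) * u(x,t)` is nonincreasing. -/
lemma Trap.time_mono (h : Trap N m T k₁ k₂ u) {s t : ℝ} (hs : 0 < s) (hst : s < t) (ht : t < T)
    (x : Euc N) : u x t ≤ (t / s) ^ (1 / (1 - m)) * u x s := by
  have hp := h.par
  have hpp := hp.p_pos
  have us := h.sol.pos x s ⟨hs, hst.trans ht⟩
  -- fixed starting time `ε`
  have A : ∀ ε : ℝ, 0 < ε → ε < s → u x t ≤ ((t - ε) / (s - ε)) ^ (1 / (1 - m)) * u x s := by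
    intro ε hε hεs
    have hse : 0 < s - ε := by linarith
    have B : ∀ᶠ b in 𝓝[>] (0:ℝ), u x t ≤ ((t - ε) / (s - ε) + b * (s - ε)) ^ (1 / (1 - m)) * u x s := by
      have hl : Tendsto (fun b : ℝ => (t - ε) / (s - ε) - b * (s - ε)) (𝓝[>] 0)
          (𝓝 ((t - ε) / (s - ε) - 0 * (s - ε))) :=
        (Continuous.tendsto (by fun_prop) 0).mono_left nhdsWithin_le_nhds
      have h1 : 1 < (t - ε) / (s - ε) - 0 * (s - ε) := by
        rw [zero_mul, sub_zero, one_lt_div hse]; linarith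
      filter_upwards [hl.eventually (lt_mem_nhds h1), self_mem_nhdsWithin] with b hb hb0
      have hb0' : 0 < b := hb0
      have e : ε + ((t - ε) / (s - ε) - b * (s - ε)) * (s - ε) + b * (s - ε) ^ 2 = t := by
        field_simp; ring
      have := h.time_core hε hεs hb hb0' (by rw [e]; exact ht) x
      rw [e] at this
      have e2 : (t - ε) / (s - ε) - b * (s - ε) + 2 * b * (s - ε) = (t - ε) / (s - ε) + b * (s - ε) := by
        ring
      rw [e2, Real.rpow_neg (by have := mul_pos hb0' hse; linarith), inv_mul_le_iff₀] at this
      · exact this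
      · exact Real.rpow_pos_of_pos (by have := mul_pos hb0' hse; linarith) _
    have hc : Tendsto (fun b : ℝ => ((t - ε) / (s - ε) + b * (s - ε)) ^ (1 / (1 - m)) * u x s) (𝓝[>] 0)
        (𝓝 (((t - ε) / (s - ε) + 0 * (s - ε)) ^ (1 / (1 - m)) * u x s)) := by
      refine Tendsto.mono_left ?_ nhdsWithin_le_nhds
      refine Continuous.tendsto (f := fun b : ℝ => ((t - ε) / (s - ε) + b * (s - ε)) ^ (1 / (1 - m)) * u x s) ?_ 0
      exact (Continuous.rpow_const (by fun_prop) fun _ => Or.inr hpp.le).mul continuous_const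
    have := ge_of_tendsto hc B
    simpa using this
  have hc : Tendsto (fun ε : ℝ => ((t - ε) / (s - ε)) ^ (1 / (1 - m)) * u x s) (𝓝[>] 0)
      (𝓝 (((t - 0) / (s - 0)) ^ (1 / (1 - m)) * u x s)) := by
    refine Tendsto.mono_left ?_ nhdsWithin_le_nhds
    refine Tendsto.mul_const _ (Tendsto.rpow_const ?_ (Or.inr hpp.le))
    exact ((tendsto_const_nhds.sub tendsto_id).div (tendsto_const_nhds.sub tendsto_id) (by simpa using hs.ne'))
  have := ge_of_tendsto hc (by
    filter_upwards [Ioo_mem_nhdsGT hs] with ε hε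
    exact A ε hε.1 hε.2)
  simpa using this

end monotone

/-! ### Regularized Newtonian kernels -/

section newtonkernel
variable {N : ℕ} {m T k₁ k₂ k₀ : ℝ} {u : Euc N → ℝ → ℝ}

/-- The regularized Newtonian kernel `(κ² + |y - x₀|²) ^ (-(N-2)/2)` with pole `x₀`; it increases to
the Newtonian kernel `|y - x₀| ^ (2-N)` as `κ` tends to `0`. -/
def bub (N : ℕ) (κ : ℝ) (x₀ y : Euc N) : ℝ := (κ ^ 2 + ‖y - x₀‖ ^ 2) ^ (-(((N : ℝ) - 2) / 2))

lemma bub_base {κ : ℝ} (hκ : 0 < κ) (r : ℝ) :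
    ContDiff ℝ (⊤ : ℕ∞) (fun y : Euc N => (κ ^ 2 + ‖y‖ ^ 2) ^ r) :=
  (contDiff_const.add (contDiff_norm_sq ℝ)).rpow_const_of_ne fun y => by positivity

lemma bub_contDiff {κ : ℝ} (hκ : 0 < κ) (x₀ : Euc N) : ContDiff ℝ (⊤ : ℕ∞) (bub N κ x₀) :=
  (bub_base hκ _).comp (contDiff_id.sub contDiff_const)

lemma bub_eq (κ : ℝ) (x₀ : Euc N) : bub N κ x₀ = fun y => (fun z : Euc N =>
    (κ ^ 2 + ‖z‖ ^ 2) ^ (-(((N : ℝ) - 2) / 2))) ((1 : ℝ) • y + -x₀) := by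
  funext y; simp [bub, sub_eq_add_neg]

/-- For this exponent the Laplacian of the bubble has a sign and is integrable. -/
lemma lapl_bub {κ : ℝ} (hκ : 0 < κ) (x₀ y : Euc N) :
    lapl (bub N κ x₀) y = -(N * (N - 2) * κ ^ 2 *
      (κ ^ 2 + ‖y - x₀‖ ^ 2) ^ (-(((N : ℝ) + 2) / 2))) := by
  rw [bub_eq, lapl_affine ((bub_base hκ _).of_le two_le_top), lapl_bubble (by positivity)]
  have e : (1 : ℝ) • y + -x₀ = y - x₀ := by simp [sub_eq_add_neg]
  rw [e]
  have hq : 0 < κ ^ 2 + ‖y - x₀‖ ^ 2 := by positivity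
  have e1 : (κ ^ 2 + ‖y - x₀‖ ^ 2) ^ (-(((N : ℝ) - 2) / 2) - 1)
      = (κ ^ 2 + ‖y - x₀‖ ^ 2) * (κ ^ 2 + ‖y - x₀‖ ^ 2) ^ (-(((N : ℝ) + 2) / 2)) := by
    rw [show -(((N : ℝ) - 2) / 2) - 1 = 1 + -(((N : ℝ) + 2) / 2) by ring, Real.rpow_add hq,
      Real.rpow_one]
  rw [e1, show -(((N : ℝ) - 2) / 2) - 2 = -(((N : ℝ) + 2) / 2) by ring]
  ring

/-- The hypotheses of `weakdiff` hold for a regularized fundamental solution. -/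
lemma bub_bounds (hN : 3 ≤ (N : ℝ)) {κ : ℝ} (hκ : 0 < κ) (x₀ : Euc N) : ∃ B : ℝ,
    (∀ x, |bub N κ x₀ x| ≤ B) ∧ (∀ x i, (pd i (bub N κ x₀) x) ^ 2 * (1 + ‖x‖ ^ 2) ≤ B) ∧
    (∀ x, |lapl (bub N κ x₀) x| * (1 + ‖x‖ ^ 2) ≤ B) := by
  set r : ℝ := -(((N : ℝ) - 2) / 2) with hr
  have hr0 : r ≤ 0 := by rw [hr]; linarith
  set P : ℝ := 2 * (1 + ‖x₀‖ ^ 2) * (1 + 1 / κ ^ 2) with hP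
  have hP0 : 0 < P := by positivity
  have hq : ∀ x : Euc N, 0 < κ ^ 2 + ‖x - x₀‖ ^ 2 := fun x => by positivity
  have hPq : ∀ x : Euc N, 1 + ‖x‖ ^ 2 ≤ P * (κ ^ 2 + ‖x - x₀‖ ^ 2) := by
    intro x
    have h1 : ‖x‖ ≤ ‖x₀‖ + ‖x - x₀‖ := by
      have := norm_add_le x₀ (x - x₀)
      rwa [add_sub_cancel] at this
    have h2 : 1 + ‖x‖ ^ 2 ≤ 2 * (1 + ‖x₀‖ ^ 2) * (1 + ‖x - x₀‖ ^ 2) := by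
      have h3 : ‖x‖ ^ 2 ≤ (‖x₀‖ + ‖x - x₀‖) ^ 2 := by gcongr
      nlinarith [sq_nonneg (‖x₀‖ - ‖x - x₀‖), mul_nonneg (sq_nonneg ‖x₀‖) (sq_nonneg ‖x - x₀‖)]
    have h4 : 1 + ‖x - x₀‖ ^ 2 ≤ (1 + 1 / κ ^ 2) * (κ ^ 2 + ‖x - x₀‖ ^ 2) := by
      have : (1 + 1 / κ ^ 2) * (κ ^ 2 + ‖x - x₀‖ ^ 2)
        = 1 + ‖x - x₀‖ ^ 2 + (κ ^ 2 + ‖x - x₀‖ ^ 2 / κ ^ 2) := by field_simp; ring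
      rw [this]
      have : 0 ≤ κ ^ 2 + ‖x - x₀‖ ^ 2 / κ ^ 2 := by positivity
      linarith
    calc _ ≤ _ := h2
      _ ≤ 2 * (1 + ‖x₀‖ ^ 2) * ((1 + 1 / κ ^ 2) * (κ ^ 2 + ‖x - x₀‖ ^ 2)) := by gcongr
      _ = _ := by rw [hP]; ring
  have hmono : ∀ (s : ℝ), s ≤ 0 → ∀ x : Euc N, (κ ^ 2 + ‖x - x₀‖ ^ 2) ^ s ≤ (κ ^ 2) ^ s :=
    fun s hs x => Real.rpow_le_rpow_of_nonpos (by positivity)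
      (by linarith [sq_nonneg ‖x - x₀‖]) hs
  refine ⟨(κ ^ 2) ^ r + 4 * r ^ 2 * P * (κ ^ 2) ^ (2 * r)
    + N * (N - 2) * κ ^ 2 * P * (κ ^ 2) ^ (r - 1), ?_, ?_, ?_⟩
  · intro x
    have h1 := hmono r hr0 x
    have h2 : 0 < bub N κ x₀ x := by unfold bub; positivity
    rw [abs_of_pos h2]
    have h3 : 0 ≤ 4 * r ^ 2 * P * (κ ^ 2) ^ (2 * r) := by positivity
    have h4 : 0 ≤ N * (N - 2) * κ ^ 2 * P * (κ ^ 2) ^ (r - 1) := by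
      have : 0 ≤ (N : ℝ) - 2 := by linarith
      positivity
    unfold bub
    linarith
  · intro x i
    have h1 : pd i (bub N κ x₀) x = r * (κ ^ 2 + ‖x - x₀‖ ^ 2) ^ (r - 1) * (2 * (x - x₀) i) := by
      rw [bub_eq, pd_affine i 1 (-x₀)
        (((bub_base hκ _).differentiable (by simp)).differentiableAt)]
      have e : (1 : ℝ) • x + -x₀ = x - x₀ := by simp [sub_eq_add_neg]
      have hd : DifferentiableAt ℝ (fun y : Euc N => ‖y‖ ^ 2) (x - x₀) :=
        ((contDiff_norm_sq ℝ).differentiable (n := 1) (by simp)).differentiableAt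
      have hc : DifferentiableAt ℝ (fun _ : Euc N => κ ^ 2) (x - x₀) := differentiableAt_const _
      rw [e, pd_rpow (f := fun y : Euc N => κ ^ 2 + ‖y‖ ^ 2) i _ (hq x) (hc.add hd),
        pd_add i hc hd, pd_normsq, pd_const, zero_add, one_mul]
    have h2 : ((x - x₀) i) ^ 2 ≤ κ ^ 2 + ‖x - x₀‖ ^ 2 := by
      have := abs_coord_le (x - x₀) i
      have h3 : |(x - x₀) i| ^ 2 ≤ ‖x - x₀‖ ^ 2 := by gcongr
      rw [sq_abs] at h3
      linarith [sq_nonneg κ]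
    have h3 : ((κ ^ 2 + ‖x - x₀‖ ^ 2) ^ (r - 1)) ^ 2 * (κ ^ 2 + ‖x - x₀‖ ^ 2)
        * (κ ^ 2 + ‖x - x₀‖ ^ 2) = (κ ^ 2 + ‖x - x₀‖ ^ 2) ^ (2 * r) := by
      rw [Real.rpow_sub_one (hq x).ne', two_mul, Real.rpow_add (hq x)]
      have := (hq x).ne'
      field_simp
    have h4 : 0 ≤ (κ ^ 2) ^ r := by positivity
    have h5 : 0 ≤ N * (N - 2) * κ ^ 2 * P * (κ ^ 2) ^ (r - 1) := by
      have : 0 ≤ (N : ℝ) - 2 := by linarith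
      positivity
    have h6 : (pd i (bub N κ x₀) x) ^ 2 * (1 + ‖x‖ ^ 2)
        ≤ 4 * r ^ 2 * P * (κ ^ 2) ^ (2 * r) := by
      rw [h1]
      calc (r * (κ ^ 2 + ‖x - x₀‖ ^ 2) ^ (r - 1) * (2 * (x - x₀) i)) ^ 2 * (1 + ‖x‖ ^ 2)
          = 4 * r ^ 2 * (((κ ^ 2 + ‖x - x₀‖ ^ 2) ^ (r - 1)) ^ 2 * ((x - x₀) i) ^ 2
            * (1 + ‖x‖ ^ 2)) := by ring
        _ ≤ 4 * r ^ 2 * (((κ ^ 2 + ‖x - x₀‖ ^ 2) ^ (r - 1)) ^ 2 * (κ ^ 2 + ‖x - x₀‖ ^ 2)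
            * (P * (κ ^ 2 + ‖x - x₀‖ ^ 2))) := by
          have := hPq x
          have := hq x
          gcongr
        _ = 4 * r ^ 2 * P * (κ ^ 2 + ‖x - x₀‖ ^ 2) ^ (2 * r) := by rw [← h3]; ring
        _ ≤ _ := by
          have := hmono (2 * r) (by linarith) x
          gcongr
    linarith
  · intro x
    rw [lapl_bub hκ, abs_neg]
    have hN2 : 0 ≤ (N : ℝ) - 2 := by linarith
    rw [abs_of_nonneg (by have := hq x; positivity)]
    have h4 : 0 ≤ (κ ^ 2) ^ r := by positivity
    have h5 : 0 ≤ 4 * r ^ 2 * P * (κ ^ 2) ^ (2 * r) := by positivity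
    have h3 : (κ ^ 2 + ‖x - x₀‖ ^ 2) ^ (-(((N : ℝ) + 2) / 2)) * (κ ^ 2 + ‖x - x₀‖ ^ 2)
        = (κ ^ 2 + ‖x - x₀‖ ^ 2) ^ (r - 1) := by
      rw [← Real.rpow_add_one (hq x).ne']
      congr 1; rw [hr]; ring
    have h6 : N * (N - 2) * κ ^ 2 * (κ ^ 2 + ‖x - x₀‖ ^ 2) ^ (-(((N : ℝ) + 2) / 2))
        * (1 + ‖x‖ ^ 2) ≤ N * (N - 2) * κ ^ 2 * P * (κ ^ 2) ^ (r - 1) := by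
      calc _ ≤ N * (N - 2) * κ ^ 2 * (κ ^ 2 + ‖x - x₀‖ ^ 2) ^ (-(((N : ℝ) + 2) / 2))
            * (P * (κ ^ 2 + ‖x - x₀‖ ^ 2)) := by
            have := hPq x
            have := hq x
            gcongr
        _ = N * (N - 2) * κ ^ 2 * P * (κ ^ 2 + ‖x - x₀‖ ^ 2) ^ (r - 1) := by rw [← h3]; ring
        _ ≤ _ := by
          have := hmono (r - 1) (by linarith) x
          gcongr
    linarith

/-- The kernel `-Δ bub` at unit scale. -/
def rhoK (N : ℕ) (z : Euc N) : ℝ := N * (N - 2) * (1 + ‖z‖ ^ 2) ^ (-(((N : ℝ) + 2) / 2))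

lemma rhoK_pos (hN : 3 ≤ (N : ℝ)) (z : Euc N) : 0 < rhoK N z := by
  unfold rhoK
  have : 0 < (N : ℝ) - 2 := by linarith
  have : 0 < (N : ℝ) := by linarith
  positivity

lemma rhoK_continuous : Continuous (rhoK N) := by
  unfold rhoK
  exact continuous_const.mul ((continuous_const.add (continuous_norm.pow 2)).rpow_const
    fun y => Or.inl (ne_of_gt (by positivity : (0 : ℝ) < 1 + ‖y‖ ^ 2)))

lemma rhoK_integrable : Integrable (rhoK N) := by
  unfold rhoK
  refine Integrable.const_mul ?_ _
  have := integrable_rpow_neg_one_add_norm_sq (E := Euc N) (μ := volume) (r := (N : ℝ) + 2)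
    (by simp)
  refine this.congr (Eventually.of_forall fun x => ?_)
  simp only
  congr 1; ring

lemma rhoK_mass (hN : 3 ≤ (N : ℝ)) : 0 < ∫ z, rhoK N z := by
  rw [integral_pos_iff_support_of_nonneg (fun z => (rhoK_pos hN z).le) rhoK_integrable]
  have : Function.support (rhoK N) = Set.univ := by
    ext z; simp [(rhoK_pos hN z).ne']
  rw [this]
  exact isOpen_univ.measure_pos _ Set.univ_nonempty

/-- Rescaling concentrates `-Δ bub` at `x₀`. -/
lemma lapl_bub_integral {κ : ℝ} (hκ : 0 < κ) (x₀ : Euc N) (g : Euc N → ℝ) :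
    (∫ y, g y * lapl (bub N κ x₀) y) = -∫ z, g (x₀ + κ • z) * rhoK N z := by
  set F : Euc N → ℝ := fun y => g (x₀ + y) * (N * (N - 2) * κ ^ 2 *
    (κ ^ 2 + ‖y‖ ^ 2) ^ (-(((N : ℝ) + 2) / 2))) with hF
  have e1 : (∫ y, g y * lapl (bub N κ x₀) y) = -∫ y, F (y - x₀) := by
    rw [← integral_neg]
    refine integral_congr_ae (Eventually.of_forall fun y => ?_)
    simp only [hF, lapl_bub hκ, add_sub_cancel]
    ring
  have e2 : (∫ y, F (y - x₀)) = ∫ y, F y := integral_sub_right_eq_self F x₀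
  have e3 := Measure.integral_comp_smul volume F κ
  have e4 : ∀ z : Euc N, F (κ • z) = (κ ^ N)⁻¹ * (g (x₀ + κ • z) * rhoK N z) := by
    intro z
    simp only [hF, rhoK]
    have : κ ^ 2 + ‖κ • z‖ ^ 2 = κ ^ 2 * (1 + ‖z‖ ^ 2) := by
      rw [norm_smul, Real.norm_eq_abs, mul_pow, sq_abs]; ring
    rw [this, Real.mul_rpow (by positivity) (by positivity)]
    have h2 : (κ ^ 2) ^ (-(((N : ℝ) + 2) / 2)) = (κ ^ 2)⁻¹ * (κ ^ N)⁻¹ := by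
      rw [← Real.rpow_natCast κ 2, ← Real.rpow_mul hκ.le, ← Real.rpow_natCast κ N,
        ← Real.rpow_neg hκ.le, ← Real.rpow_neg hκ.le, ← Real.rpow_add hκ]
      congr 1; push_cast; ring
    rw [h2]
    field_simp
  have e5 : (∫ z, F (κ • z)) = (κ ^ N)⁻¹ * ∫ z, g (x₀ + κ • z) * rhoK N z := by
    rw [← integral_const_mul]
    exact integral_congr_ae (Eventually.of_forall e4)
  rw [e1, e2]
  rw [e5] at e3
  have hk : 0 < (κ ^ N)⁻¹ := by positivity
  simp only [finrank_euclideanSpace, Fintype.card_fin, abs_of_pos hk, smul_eq_mul] at e3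
  rw [mul_left_cancel₀ hk.ne' e3]

end newtonkernel

/-! ### Smallness of Newtonian potentials -/

section potential
variable {N : ℕ} {m T k₁ k₂ k₀ : ℝ} {u : Euc N → ℝ → ℝ}

/-- The fundamental solution (without its constant), cut off outside the ball of radius `r`. -/
def singK (N : ℕ) (r : ℝ) : Euc N → ℝ :=
  (Metric.ball (0 : Euc N) r).indicator fun z => ‖z‖ ^ (-((N : ℝ) - 2))

lemma singK_integrable (hN : 3 ≤ (N : ℝ)) (r : ℝ) : Integrable (singK N r) := by
  have hN' : 3 ≤ N := by exact_mod_cast hN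
  have h1 : IntegrableOn (fun z : Euc N => ‖z‖ ^ (-((N : ℝ) - 2))) (Metric.ball 0 r) := by
    refine integrableOn_ball_of_norm_le_rpow (C := 1) (α := (N : ℝ) - 2) ?_ ?_ ?_ ?_
    · simp; omega
    · simp
    · refine Eventually.of_forall fun x => ?_
      rw [one_mul, Real.norm_eq_abs, abs_of_nonneg (by positivity)]
    · exact (measurable_norm.pow_const _).aestronglyMeasurable
  exact h1.integrable_indicator Metric.isOpen_ball.measurableSet

lemma singK_nonneg (r : ℝ) (z : Euc N) : 0 ≤ singK N r z :=
  Set.indicator_nonneg (fun z _ => by positivity) z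

lemma singK_scale {r : ℝ} (hr : 0 < r) : (∫ z, singK N r z) = r ^ 2 * ∫ z, singK N 1 z := by
  have e3 := Measure.integral_comp_smul volume (singK N r) r
  have e4 : ∀ z : Euc N, singK N r (r • z) = r ^ (-((N : ℝ) - 2)) * singK N 1 z := by
    intro z
    unfold singK
    by_cases hz : ‖z‖ < 1
    · rw [Set.indicator_of_mem, Set.indicator_of_mem, norm_smul, Real.norm_eq_abs, abs_of_pos hr,
        Real.mul_rpow hr.le (norm_nonneg _)]
      · simpa using hz
      · simp only [mem_ball_zero_iff, norm_smul, Real.norm_eq_abs, abs_of_pos hr]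
        nlinarith
    · rw [Set.indicator_of_notMem, Set.indicator_of_notMem, mul_zero]
      · simpa using hz
      · simp only [mem_ball_zero_iff, norm_smul, Real.norm_eq_abs, abs_of_pos hr]
        nlinarith
  rw [integral_congr_ae (Eventually.of_forall e4), integral_const_mul] at e3
  have hk : 0 < (r ^ N)⁻¹ := by positivity
  simp only [finrank_euclideanSpace, Fintype.card_fin, abs_of_pos hk, smul_eq_mul] at e3
  have e5 : r ^ (-((N : ℝ) - 2)) = (r ^ N)⁻¹ * r ^ 2 := by
    rw [← Real.rpow_natCast r N, ← Real.rpow_neg hr.le, ← Real.rpow_natCast r 2,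
      ← Real.rpow_add hr]
    congr 1; push_cast; ring
  rw [e5, mul_assoc] at e3
  exact (mul_left_cancel₀ hk.ne' e3).symm

lemma bub_le (hN : 3 ≤ (N : ℝ)) (κ : ℝ) {x₀ x : Euc N} (hx : x ≠ x₀) :
    bub N κ x₀ x ≤ ‖x - x₀‖ ^ (-((N : ℝ) - 2)) := by
  have hp : 0 < ‖x - x₀‖ := norm_pos_iff.2 (sub_ne_zero.2 hx)
  have e : ‖x - x₀‖ ^ (-((N : ℝ) - 2)) = (‖x - x₀‖ ^ 2) ^ (-(((N : ℝ) - 2) / 2)) := by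
    rw [← Real.rpow_natCast ‖x - x₀‖ 2, ← Real.rpow_mul hp.le]
    congr 1; push_cast; ring
  rw [e]
  exact Real.rpow_le_rpow_of_nonpos (by positivity) (by linarith [sq_nonneg κ]) (by linarith)

/-- The Newtonian potential of `g` is controlled by its sup norm near the pole and its `L¹` norm
away from it, uniformly in the regularization and in the pole. -/
lemma bub_int_bound (hN : 3 ≤ (N : ℝ)) {κ : ℝ} (hκ : 0 < κ) (x₀ : Euc N) {g : Euc N → ℝ} {F r : ℝ}
    (hg : Integrable g) (hF : ∀ x, |g x| ≤ F) (hr : 0 < r) :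
    |∫ x, g x * bub N κ x₀ x| ≤ F * (r ^ 2 * ∫ z, singK N 1 z)
      + r ^ (-((N : ℝ) - 2)) * ∫ x, |g x| := by
  have hN' : 3 ≤ N := by exact_mod_cast hN
  have : Nonempty (Fin N) := ⟨⟨0, by omega⟩⟩
  have hF0 : 0 ≤ F := (abs_nonneg _).trans (hF 0)
  have hi1 : Integrable fun x => F * singK N r (x - x₀) :=
    ((singK_integrable hN r).comp_sub_right x₀).const_mul F
  have hi2 : Integrable fun x => r ^ (-((N : ℝ) - 2)) * |g x| := hg.abs.const_mul _
  have key : ∀ᵐ x : Euc N, ‖g x * bub N κ x₀ x‖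
      ≤ F * singK N r (x - x₀) + r ^ (-((N : ℝ) - 2)) * |g x| := by
    have hne : ∀ᵐ x : Euc N, x ≠ x₀ := by simp [ae_iff, measure_singleton]
    filter_upwards [hne] with x hx
    have hb : 0 < bub N κ x₀ x := by unfold bub; positivity
    rw [norm_mul, Real.norm_eq_abs, Real.norm_eq_abs, abs_of_pos hb]
    by_cases hxr : ‖x - x₀‖ < r
    · have : singK N r (x - x₀) = ‖x - x₀‖ ^ (-((N : ℝ) - 2)) := by
        unfold singK
        rw [Set.indicator_of_mem (by simpa using hxr)]
      rw [this]
      have h1 : |g x| * bub N κ x₀ x ≤ F * ‖x - x₀‖ ^ (-((N : ℝ) - 2)) :=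
        mul_le_mul (hF x) (bub_le hN κ hx) hb.le hF0
      have h2 : 0 ≤ r ^ (-((N : ℝ) - 2)) * |g x| := by positivity
      linarith
    · have h1 : bub N κ x₀ x ≤ r ^ (-((N : ℝ) - 2)) := (bub_le hN κ hx).trans
        (Real.rpow_le_rpow_of_nonpos hr (not_lt.1 hxr) (by linarith))
      have h2 := mul_le_mul_of_nonneg_left h1 (abs_nonneg (g x))
      have h3 := mul_nonneg hF0 (singK_nonneg r (x - x₀))
      linarith
  have h1 := norm_integral_le_of_norm_le (hi1.add hi2) key
  have e1 : (∫ x, (F * singK N r (x - x₀) + r ^ (-((N : ℝ) - 2)) * |g x|))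
      = F * (r ^ 2 * ∫ z, singK N 1 z) + r ^ (-((N : ℝ) - 2)) * ∫ x, |g x| := by
    rw [integral_add hi1 hi2, integral_const_mul, integral_const_mul, ← singK_scale hr,
      integral_sub_right_eq_self (singK N r) x₀]
  rw [← e1]
  exact h1

/-- The Newtonian potential of `u - B` tends to zero at the self-similar rate. -/
lemma Setup.newton_small (h : Setup N m T k₁ k₂ k₀ u) {θ : ℝ} (hθ : 0 < θ) :
    ∃ σ, 0 < σ ∧ ∀ t ∈ Set.Ioo 0 T, T - t ≤ σ → ∀ κ : ℝ, 0 < κ → ∀ x₀ : Euc N,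
      |∫ x, (u x t - Bb N m T k₀ x t) * bub N κ x₀ x|
        ≤ θ * (T - t) ^ (-((N - 2) * gammaC N m)) := by
  have hN := h.par.N3
  have hk0 : 0 < k₀ := h.hk2.trans_le h.hk0.1
  obtain ⟨A, hA, H⟩ := BbTil_abs (N := N) (k₁ := k₁) h.par h.hk2
  set F := A * (k₁ - k₂) with hF
  have hF0 : 0 < F := mul_pos hA (by linarith [h.hk12])
  set J := ∫ z, singK N 1 z with hJ
  have hJ0 : 0 ≤ J := integral_nonneg fun z => singK_nonneg 1 z
  set r := Real.sqrt (θ / (2 * (F * J + 1))) with hr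
  have hr0 : 0 < r := Real.sqrt_pos.2 (by positivity)
  have hr2 : F * (r ^ 2 * J) ≤ θ / 2 := by
    rw [hr, Real.sq_sqrt (by positivity)]
    have : F * (θ / (2 * (F * J + 1)) * J) = θ / 2 * (F * J / (F * J + 1)) := by
      field_simp
    rw [this]
    have h1 : F * J / (F * J + 1) ≤ 1 := by
      rw [div_le_one (by positivity)]; linarith
    nlinarith
  have hL := (h.L1_tendsto.const_mul (r ^ (-((N : ℝ) - 2))))
  rw [mul_zero] at hL
  obtain ⟨τ₀, hτ₀⟩ := eventually_atTop.1 (hL.eventually (ge_mem_nhds (half_pos hθ)))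
  refine ⟨Real.exp (-τ₀), Real.exp_pos _, fun t ht hts κ hκ x₀ => ?_⟩
  have hs : 0 < T - t := by linarith [ht.2]
  set s := T - t with hsd
  set τ := -Real.log s with hτ
  have hes : Real.exp (-τ) = s := by rw [hτ, neg_neg, Real.exp_log hs]
  have htt : T - Real.exp (-τ) = t := by rw [hes, hsd]; ring
  have hττ : τ₀ ≤ τ := by
    have := Real.log_le_log hs hts
    rw [Real.log_exp] at this
    linarith
  have hτm : τ ∈ Set.Ioi (-Real.log T) := by
    have := Real.log_lt_log hs (show s < T by linarith [ht.1])
    simp only [Set.mem_Ioi]; linarith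
  have hexp : ∀ a : ℝ, Real.exp (a * τ) = s ^ (-a) := by
    intro a
    rw [Real.rpow_def_of_pos hs, hτ]; congr 1; ring
  set g : Euc N → ℝ := fun x => u x t - Bb N m T k₀ x t with hg
  -- self-similar form of `g`
  have e : ∀ y, rescaleSol N m T u y τ - BbTil N m k₀ y = s ^ (-betaC N m) *
      g (s ^ gammaC N m • y) := by
    intro y
    rw [← rescale_Bb h.par (T := T) hk0 y τ]
    unfold rescaleSol
    rw [htt, hexp, hexp, neg_neg]; ring
  have hβ : betaC N m = -(N * gammaC N m) := h.par.beta_eq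
  have hsβ : 0 < s ^ (-betaC N m) := Real.rpow_pos_of_pos hs _
  have hsg : 0 < s ^ gammaC N m := Real.rpow_pos_of_pos hs _
  have hgF : ∀ x, |g x| ≤ s ^ betaC N m * F := by
    intro x
    have h1 := e ((s ^ gammaC N m)⁻¹ • x)
    rw [smul_smul, mul_inv_cancel₀ hsg.ne', one_smul] at h1
    have h2 := H _ (h.Kf_mem hτm ((s ^ gammaC N m)⁻¹ • x)) _ h.hk0 ((s ^ gammaC N m)⁻¹ • x)
    rw [← h.resc_eq hτm, h1, abs_mul, abs_of_pos hsβ] at h2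
    have h3 : |Kf N m T u ((s ^ gammaC N m)⁻¹ • x) τ - k₀| ≤ k₁ - k₂ := by
      have a1 := h.Kf_mem hτm ((s ^ gammaC N m)⁻¹ • x)
      have a2 := h.hk0
      rw [abs_le]; constructor <;> linarith [a1.1, a1.2, a2.1, a2.2]
    have h4 : qw N m ((s ^ gammaC N m)⁻¹ • x) ≤ 1 := by
      unfold qw
      apply Real.rpow_le_one_of_one_le_of_nonpos
      · linarith [sq_nonneg ‖(s ^ gammaC N m)⁻¹ • x‖]
      · linarith [h.par.p_pos]
    have h5 : s ^ (-betaC N m) * |g x| ≤ F := by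
      refine h2.trans ?_
      rw [hF]
      have := (qw_pos (m := m) ((s ^ gammaC N m)⁻¹ • x)).le
      have h6 : |Kf N m T u ((s ^ gammaC N m)⁻¹ • x) τ - k₀| * qw N m ((s ^ gammaC N m)⁻¹ • x)
        ≤ (k₁ - k₂) * 1 := mul_le_mul h3 h4 this (by linarith [h.hk12])
      rw [mul_one] at h6
      exact mul_le_mul_of_nonneg_left h6 hA.le
    rw [Real.rpow_neg hs.le, inv_mul_le_iff₀ (Real.rpow_pos_of_pos hs _)] at h5
    exact h5
  have hgi : Integrable g := by
    obtain ⟨A', hA', HA⟩ := h.toTrap.diff h.hk0 ht.2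
    refine (h.par.qw_integrable.const_mul A').mono' ?_
      (Eventually.of_forall fun x => (HA t ht.1 le_rfl x).1)
    exact ((h.sol.slice ht).continuous.sub
      (Bb_continuous h.par hk0 ht.2)).aestronglyMeasurable
  have hL1 : (∫ y, |rescaleSol N m T u y τ - BbTil N m k₀ y|) = ∫ x, |g x| := by
    have e1 : ∀ y, |rescaleSol N m T u y τ - BbTil N m k₀ y| = s ^ (-betaC N m) *
      (fun x => |g x|) (s ^ gammaC N m • y) := by
      intro y; rw [e, abs_mul, abs_of_pos hsβ]
    rw [integral_congr_ae (Eventually.of_forall e1), integral_const_mul]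
    rw [Measure.integral_comp_smul volume (fun x => |g x|) (s ^ gammaC N m)]
    rw [finrank_euclideanSpace, Fintype.card_fin, abs_of_pos (by positivity), smul_eq_mul,
      ← mul_assoc, ← Real.rpow_natCast, ← Real.rpow_mul hs.le, ← Real.rpow_neg hs.le,
      ← Real.rpow_add hs]
    rw [show -betaC N m + -(gammaC N m * N) = 0 by rw [hβ]; ring, Real.rpow_zero, one_mul]
  have hb := bub_int_bound hN hκ x₀ hgi hgF (r := s ^ gammaC N m * r) (by positivity)
  refine hb.trans ?_
  have hτL := hτ₀ τ hττ
  rw [hL1] at hτL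
  set e₀ : ℝ := -((N - 2) * gammaC N m) with he₀
  have q1 : s ^ betaC N m * F * ((s ^ gammaC N m * r) ^ 2 * J) = s ^ e₀ * (F * (r ^ 2 * J)) := by
    have : s ^ e₀ = s ^ betaC N m * (s ^ gammaC N m) ^ 2 := by
      rw [← Real.rpow_natCast (s ^ gammaC N m), ← Real.rpow_mul hs.le, ← Real.rpow_add hs]
      congr 1; rw [he₀, hβ]; push_cast; ring
    rw [this]; ring
  have q2 : (s ^ gammaC N m * r) ^ (-((N : ℝ) - 2)) * ∫ x, |g x|
      = s ^ e₀ * (r ^ (-((N : ℝ) - 2)) * ∫ x, |g x|) := by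
    rw [Real.mul_rpow hsg.le hr0.le, ← Real.rpow_mul hs.le, mul_assoc]
    congr 2; rw [he₀]; ring
  rw [q1, q2]
  have hse : 0 < s ^ e₀ := Real.rpow_pos_of_pos hs _
  nlinarith

end potential

/-! ### Smallness of time averages -/

section averages
variable {N : ℕ} {m T k₁ k₂ k₀ : ℝ} {u : Euc N → ℝ → ℝ}

/-- The kernels `-Δ bub` form an approximate identity, up to the constant `∫ rhoK`. -/
lemma mollify_tendsto {G : Euc N → ℝ → ℝ} {t₀ t₁ A : ℝ} (hN : 3 ≤ (N : ℝ)) (h01 : t₀ ≤ t₁)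
    (hc : ContinuousOn (fun p : Euc N × ℝ => G p.1 p.2) (Set.univ ×ˢ Set.Icc t₀ t₁))
    (hA : ∀ t ∈ Set.Icc t₀ t₁, ∀ x, |G x t| ≤ A) (x₀ : Euc N) :
    Tendsto (fun κ : ℝ => ∫ t in t₀..t₁, ∫ z, G (x₀ + κ • z) t * rhoK N z) (𝓝[>] 0)
      (𝓝 ((∫ z, rhoK N z) * ∫ t in t₀..t₁, G x₀ t)) := by
  have hbd : ∀ κ : ℝ, ∀ t ∈ Set.Icc t₀ t₁, ∀ z, ‖G (x₀ + κ • z) t * rhoK N z‖ ≤ A * rhoK N z := by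
    intro κ t ht z
    rw [norm_mul, Real.norm_eq_abs, Real.norm_eq_abs, abs_of_pos (rhoK_pos hN z)]
    exact mul_le_mul_of_nonneg_right (hA t ht _) (rhoK_pos hN z).le
  have hcx : ∀ t ∈ Set.Icc t₀ t₁, Continuous fun x => G x t := by
    intro t ht
    rw [← continuousOn_univ]
    exact hc.comp (f := fun x => (x, t)) (by fun_prop) fun x _ => ⟨trivial, ht⟩
  have hct : ∀ x, ContinuousOn (fun t => G x t) (Set.Icc t₀ t₁) := fun x =>
    hc.comp (f := fun t => (x, t)) (by fun_prop) fun t ht => ⟨trivial, ht⟩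
  have hmeas : ∀ κ : ℝ, ∀ t ∈ Set.Icc t₀ t₁,
      AEStronglyMeasurable (fun z => G (x₀ + κ • z) t * rhoK N z) volume := fun κ t ht =>
    (((hcx t ht).comp (by fun_prop : Continuous fun z : Euc N => x₀ + κ • z)).mul
      rhoK_continuous).aestronglyMeasurable
  have hlim : (∫ z, rhoK N z) * (∫ t in t₀..t₁, G x₀ t)
      = ∫ t in t₀..t₁, ∫ z, G x₀ t * rhoK N z := by
    simp_rw [integral_const_mul]
    rw [intervalIntegral.integral_mul_const, mul_comm]
  have hsub : Set.uIoc t₀ t₁ ⊆ Set.Icc t₀ t₁ := by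
    rw [Set.uIoc_of_le h01]; exact Set.Ioc_subset_Icc_self
  rw [hlim]
  refine intervalIntegral.tendsto_integral_filter_of_dominated_convergence
    (fun _ => A * ∫ z, rhoK N z) ?_ ?_ (by simp) ?_
  · refine Eventually.of_forall fun κ => ?_
    have : ContinuousOn (fun t => ∫ z, G (x₀ + κ • z) t * rhoK N z) (Set.Icc t₀ t₁) := by
      refine continuousOn_of_dominated (bound := fun z => A * rhoK N z) (hmeas κ)
        (fun t ht => Eventually.of_forall (hbd κ t ht)) (rhoK_integrable.const_mul A)
        (Eventually.of_forall fun z => (hct _).mul continuousOn_const)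
    exact (this.mono hsub).aestronglyMeasurable measurableSet_uIoc
  · refine Eventually.of_forall fun κ => Eventually.of_forall fun t ht => ?_
    rw [← integral_const_mul]
    exact norm_integral_le_of_norm_le (rhoK_integrable.const_mul A)
      (Eventually.of_forall (hbd κ t (hsub ht)))
  · refine Eventually.of_forall fun t ht => ?_
    refine tendsto_integral_filter_of_dominated_convergence (fun z => A * rhoK N z)
      (Eventually.of_forall fun κ => hmeas κ t (hsub ht))
      (Eventually.of_forall fun κ => Eventually.of_forall (hbd κ t (hsub ht)))
      (rhoK_integrable.const_mul A) (Eventually.of_forall fun z => ?_)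
    refine Tendsto.mul_const _ ?_
    have h1 : Continuous fun κ : ℝ => G (x₀ + κ • z) t :=
      (hcx t (hsub ht)).comp (by fun_prop)
    have h2 := h1.tendsto 0
    simp only [zero_smul, add_zero] at h2
    exact h2.mono_left nhdsWithin_le_nhds

/-- Time averages of `u ^ m - B ^ m` at a point are recovered from the Newtonian potential of
`u - B`, hence small at the self-similar rate. -/
lemma Setup.avg_small (h : Setup N m T k₁ k₂ k₀ u) {θ : ℝ} (hθ : 0 < θ) :
    ∃ σ, 0 < σ ∧ ∀ t₀ t₁, 0 < t₀ → t₀ ≤ t₁ → t₁ < T → T - t₀ ≤ σ → ∀ x₀ : Euc N,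
      |∫ t in t₀..t₁, (u x₀ t ^ m - Bb N m T k₀ x₀ t ^ m)|
        ≤ θ * (T - t₀) ^ (-((N - 2) * gammaC N m)) := by
  have hN := h.par.N3
  have hk0 : 0 < k₀ := h.hk2.trans_le h.hk0.1
  have hκ₀ := rhoK_mass hN
  obtain ⟨σ, hσ, H⟩ := h.newton_small (θ := θ * (∫ z, rhoK N z) / 2) (by positivity)
  refine ⟨σ, hσ, fun t₀ t₁ h0 h01 h1 hs x₀ => ?_⟩
  obtain ⟨A, hA, HA⟩ := h.toTrap.diff h.hk0 h1
  have hbc : ClassSol N m T (Bb N m T k₀) := Bb_classSol h.par hk0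
  set e : ℝ := -((N - 2) * gammaC N m) with he
  have he0 : 0 ≤ e := by
    have := mul_nonneg (show (0 : ℝ) ≤ N - 2 by linarith) (neg_pos.2 h.par.gamma_neg).le
    rw [he]; linarith
  set G : Euc N → ℝ → ℝ := fun x t => u x t ^ m - Bb N m T k₀ x t ^ m with hG
  have hsub : Set.Icc t₀ t₁ ⊆ Set.Ioo 0 T := fun t ht => ⟨h0.trans_le ht.1, ht.2.trans_lt h1⟩
  have hGA : ∀ t ∈ Set.Icc t₀ t₁, ∀ x, |G x t| ≤ A := by
    intro t ht x
    refine ((HA t (hsub ht).1 ht.2 x).2).trans ?_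
    have : (1 + ‖x‖ ^ 2) ^ (-(1 / (1 - m))) ≤ 1 :=
      Real.rpow_le_one_of_one_le_of_nonpos (by linarith [sq_nonneg ‖x‖])
        (by linarith [h.par.p_pos])
    nlinarith
  have hGc : ContinuousOn (fun p : Euc N × ℝ => G p.1 p.2) (Set.univ ×ˢ Set.Icc t₀ t₁) := by
    have hss : (Set.univ ×ˢ Set.Icc t₀ t₁ : Set (Euc N × ℝ)) ⊆ Set.univ ×ˢ Set.Ioo 0 T :=
      Set.prod_mono le_rfl hsub
    exact ((h.sol.smooth.continuousOn.mono hss).rpow_const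
      fun p hp => Or.inl (h.sol.pos p.1 p.2 (hss hp).2).ne').sub
      ((hbc.smooth.continuousOn.mono hss).rpow_const
      fun p hp => Or.inl (hbc.pos p.1 p.2 (hss hp).2).ne')
  have hlim := mollify_tendsto hN h01 hGc hGA x₀
  have hbound : ∀ᶠ κ : ℝ in 𝓝[>] 0, |∫ t in t₀..t₁, ∫ z, G (x₀ + κ • z) t * rhoK N z|
      ≤ (∫ z, rhoK N z) * (θ * (T - t₀) ^ e) := by
    filter_upwards [self_mem_nhdsWithin] with κ hκ
    obtain ⟨B, hB0, hB1, hB2⟩ := bub_bounds hN hκ x₀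
    have hw := weakdiff h.par h.sol hbc h0 h01 h1
      (fun t ht x => (HA t (hsub ht).1 ht.2 x).1) (fun t ht x => (HA t (hsub ht).1 ht.2 x).2)
      (bub_contDiff hκ x₀) hB0 hB1 hB2
    have e1 : (∫ t in t₀..t₁, ∫ x, (u x t ^ m - Bb N m T k₀ x t ^ m) * lapl (bub N κ x₀) x)
        = -∫ t in t₀..t₁, ∫ z, G (x₀ + κ • z) t * rhoK N z := by
      rw [← intervalIntegral.integral_neg]
      refine intervalIntegral.integral_congr fun t _ => ?_
      exact lapl_bub_integral hκ x₀ fun x => G x t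
    rw [e1] at hw
    have a0 := H t₀ ⟨h0, by linarith⟩ hs κ hκ x₀
    have a1 := H t₁ ⟨by linarith, h1⟩ (by linarith) κ hκ x₀
    have a2 : (T - t₁) ^ e ≤ (T - t₀) ^ e :=
      Real.rpow_le_rpow (by linarith) (by linarith) he0
    have a3 := mul_le_mul_of_nonneg_left a2
      (show 0 ≤ θ * (∫ z, rhoK N z) / 2 by positivity)
    rw [abs_le] at a0 a1 ⊢
    constructor <;> linarith [a0.1, a0.2, a1.1, a1.2]
  have hfin := le_of_tendsto hlim.abs hbound
  rw [abs_mul, abs_of_pos hκ₀] at hfin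
  exact le_of_mul_le_mul_left hfin hκ₀

end averages

/-! ### From time averages to pointwise bounds -/

section sandwich
variable {N : ℕ} {m T k₁ k₂ k₀ : ℝ} {u : Euc N → ℝ → ℝ}

lemma BbTil_radial (hp : Par N m) {k : ℝ} (hk : 0 < k) {x y : Euc N} (hxy : ‖x‖ ≤ ‖y‖) :
    BbTil N m k y ≤ BbTil N m k x := by
  have hC := hp.C_pos
  have := hp.p_pos
  unfold BbTil
  gcongr

/-- Along the self-similar time scale the Barenblatt solution loses at most the factor `l ^ β` between
the remaining times `s` and `l s`. -/
lemma Bb_time_le (hp : Par N m) {k s l : ℝ} (hk : 0 < k) (hs : 0 < s) (hl : 0 < l) (hl1 : l ≤ 1)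
    (x : Euc N) : l ^ betaC N m * Bb N m T k x (T - s) ≤ Bb N m T k x (T - l * s) := by
  rw [Bb_scale hp hk hs, Bb_scale hp hk (mul_pos hl hs), Real.mul_rpow hl.le hs.le, mul_assoc]
  have h1 : ‖(l * s) ^ (-gammaC N m) • x‖ ≤ ‖s ^ (-gammaC N m) • x‖ := by
    rw [norm_smul, norm_smul, Real.norm_eq_abs, Real.norm_eq_abs,
      abs_of_pos (by positivity), abs_of_pos (by positivity)]
    have h2 : (l * s) ^ (-gammaC N m) ≤ s ^ (-gammaC N m) :=
      Real.rpow_le_rpow (by positivity) (by nlinarith) (by linarith [hp.gamma_neg])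
    gcongr
  have := BbTil_radial hp hk h1
  gcongr

lemma Bb_time_ge (hp : Par N m) {k s l : ℝ} (hk : 0 < k) (hs : 0 < s) (hl : 1 ≤ l)
    (x : Euc N) : Bb N m T k x (T - l * s) ≤ l ^ betaC N m * Bb N m T k x (T - s) := by
  have hl0 : 0 < l := by linarith
  have h1 := Bb_time_le (T := T) hp hk (mul_pos hl0 hs) (inv_pos.2 hl0) (inv_le_one_of_one_le₀ hl) x
  rw [inv_mul_cancel_left₀ hl0.ne', Real.inv_rpow hl0.le,
    inv_mul_le_iff₀ (Real.rpow_pos_of_pos hl0 _)] at h1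
  exact h1

lemma Trap.time_int (h : Trap N m T k₁ k₂ u) (hk0 : 0 < k₀) {a b : ℝ} (ha : 0 < a) (hab : a ≤ b)
    (hb : b < T) (x : Euc N) :
    IntervalIntegrable (fun t => u x t ^ m - Bb N m T k₀ x t ^ m) volume a b := by
  have hbc : ClassSol N m T (Bb N m T k₀) := Bb_classSol h.par hk0
  have hsub : Set.Icc a b ⊆ Set.Ioo 0 T := fun t ht => ⟨ha.trans_le ht.1, ht.2.trans_lt hb⟩
  have hc : ∀ v : Euc N → ℝ → ℝ, ClassSol N m T v → ContinuousOn (fun t => v x t ^ m)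
      (Set.Icc a b) := fun v hv =>
    (hv.smooth.continuousOn.comp (f := fun t => (x, t)) (by fun_prop)
      fun t ht => ⟨trivial, hsub ht⟩).rpow_const fun t ht => Or.inl (hv.pos x t (hsub ht)).ne'
  exact ContinuousOn.intervalIntegrable_of_Icc hab ((hc _ h.sol).sub (hc _ hbc))

set_option maxHeartbeats 1000000 in
/-- Smallness of time averages becomes a pointwise comparison, because `u / t ^ (1 / (1 - m))` is
nonincreasing and the Barenblatt solution varies slowly on the self-similar time scale. -/
lemma Setup.sandwich (h : Setup N m T k₁ k₂ k₀ u) {θ : ℝ} (hθ : 0 < θ) :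
    ∃ τ₀, ∀ τ, τ₀ ≤ τ → τ ∈ Set.Ioi (-Real.log T) ∧ ∀ δ : ℝ, 0 < δ → δ ≤ 1 / 2 → ∀ y : Euc N,
      (1 - δ) ^ (betaC N m * m) * BbTil N m k₀ y ^ m
        ≤ (1 + δ) ^ (1 / (1 - m) * m) * rescaleSol N m T u y τ ^ m + θ / δ ∧
      (1 - δ) ^ (1 / (1 - m) * m) * rescaleSol N m T u y τ ^ m
        ≤ (1 + δ) ^ (betaC N m * m) * BbTil N m k₀ y ^ m + θ / δ := by
  have hN := h.par.N3
  have hp := h.par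
  have hT := h.hT
  have hm0 := hp.hm0
  have hpp := hp.p_pos
  have hk0 : 0 < k₀ := h.hk2.trans_le h.hk0.1
  set e : ℝ := -((N - 2) * gammaC N m) with he
  have he0 : 0 ≤ e := by
    have := mul_nonneg (show (0 : ℝ) ≤ N - 2 by linarith) (neg_pos.2 h.par.gamma_neg).le
    rw [he]; linarith
  have heβ : betaC N m * m + 1 = e := hp.beta_m
  obtain ⟨σ, hσ, H⟩ := h.avg_small (θ := θ / 2 ^ e) (by positivity)
  set σ' := min (σ / 2) (T / 2) with hσ'
  have hσ'0 : 0 < σ' := by positivity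
  refine ⟨-Real.log σ', fun τ hτ => ?_⟩
  set s := Real.exp (-τ) with hs
  have hs0 : 0 < s := Real.exp_pos _
  have hsσ : s ≤ σ' := by
    rw [hs, ← Real.le_log_iff_exp_le hσ'0]; linarith
  have hs1 : s ≤ σ / 2 := hsσ.trans (min_le_left _ _)
  have hs2 : s ≤ T / 2 := hsσ.trans (min_le_right _ _)
  have hτm : τ ∈ Set.Ioi (-Real.log T) := by
    have : Real.log s < Real.log T := Real.log_lt_log hs0 (by linarith)
    rw [hs, Real.log_exp] at this
    simp only [Set.mem_Ioi]; linarith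
  refine ⟨hτm, fun δ hδ hδ2 y => ?_⟩
  set x := Real.exp (-gammaC N m * τ) • y with hx
  set t := T - s with ht
  have ht0 : s ≤ t := by linarith
  have htm : t ∈ Set.Ioo 0 T := ⟨by linarith, by linarith⟩
  have hδs : δ * s ≤ s / 2 := by nlinarith
  have hδs0 : 0 < δ * s := by positivity
  have hE : 0 < Real.exp (betaC N m * τ) := Real.exp_pos _
  have hw : rescaleSol N m T u y τ ^ m = Real.exp (betaC N m * τ) ^ m * u x t ^ m := by
    unfold rescaleSol
    rw [Real.mul_rpow hE.le (h.sol.pos _ _ htm).le]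
  have hW : BbTil N m k₀ y ^ m = Real.exp (betaC N m * τ) ^ m * Bb N m T k₀ x t ^ m := by
    rw [← rescale_Bb hp (T := T) hk0 y τ]
    unfold rescaleSol
    rw [Real.mul_rpow hE.le (Bb_pos hp hk0 htm.2 _).le]
  -- the self-similar rates match
  have hrate : Real.exp (betaC N m * τ) ^ m * s ^ e = s := by
    rw [hs, ← Real.exp_mul, ← Real.exp_mul, ← Real.exp_add, ← heβ]
    congr 1; ring
  have hEm : 0 < Real.exp (betaC N m * τ) ^ m := by positivity
  have h2e : (1 : ℝ) ≤ 2 ^ e := Real.one_le_rpow (by norm_num) he0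
  have hse : 0 < s ^ e := Real.rpow_pos_of_pos hs0 _
  have fin : ∀ X Y : ℝ, δ * s * (X - Y) ≤ θ * s ^ e →
      Real.exp (betaC N m * τ) ^ m * X ≤ Real.exp (betaC N m * τ) ^ m * Y + θ / δ := by
    intro X Y hXY
    have h1 : X - Y ≤ θ * s ^ e / (δ * s) := by
      rw [le_div_iff₀ hδs0]; linarith
    have h2 := mul_le_mul_of_nonneg_left h1 hEm.le
    have h3 : Real.exp (betaC N m * τ) ^ m * (θ * s ^ e / (δ * s)) = θ / δ := by
      rw [show Real.exp (betaC N m * τ) ^ m * (θ * s ^ e / (δ * s))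
        = θ * (Real.exp (betaC N m * τ) ^ m * s ^ e) / (δ * s) by ring, hrate]
      field_simp
    linarith
  have pw : ∀ {a c v w : ℝ}, 0 ≤ v → 0 ≤ a → w ^ m ≤ (a ^ c * v) ^ m →
      w ^ m ≤ a ^ (c * m) * v ^ m := by
    intro a c v w hv ha hh
    rwa [Real.mul_rpow (by positivity) hv, ← Real.rpow_mul ha] at hh
  have pw' : ∀ {a c v w : ℝ}, 0 ≤ v → 0 ≤ a → (a ^ c * v) ^ m ≤ w ^ m →
      a ^ (c * m) * v ^ m ≤ w ^ m := by
    intro a c v w hv ha hh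
    rwa [Real.mul_rpow (by positivity) hv, ← Real.rpow_mul ha] at hh
  have hβ0 : 0 < betaC N m := by
    rw [hp.beta_eq]; have := hp.gamma_neg; nlinarith
  constructor
  · have hH := H t (t + δ * s) htm.1 (by linarith) (by linarith) (by linarith) x
    rw [show T - t = s by rw [ht]; ring] at hH
    have hH' : θ / 2 ^ e * s ^ e ≤ θ * s ^ e := by
      have : θ / 2 ^ e ≤ θ := div_le_self hθ.le h2e
      gcongr
    have hmon : ∀ r ∈ Set.Icc t (t + δ * s), u x r ^ m - Bb N m T k₀ x r ^ m
        ≤ (1 + δ) ^ (1 / (1 - m) * m) * u x t ^ m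
          - (1 - δ) ^ (betaC N m * m) * Bb N m T k₀ x t ^ m := by
      intro r hr
      have hrT : r < T := by linarith [hr.2]
      have hu := h.sol.pos x t htm
      have hur := h.sol.pos x r ⟨by linarith [hr.1, htm.1], hrT⟩
      have a1 : u x r ^ m ≤ (1 + δ) ^ (1 / (1 - m) * m) * u x t ^ m := by
        refine pw hu.le (by linarith) (Real.rpow_le_rpow hur.le ?_ hm0.le)
        rcases eq_or_lt_of_le hr.1 with hrt | hrt
        · rw [← hrt]
          have : 1 ≤ (1 + δ) ^ (1 / (1 - m)) := Real.one_le_rpow (by linarith) hpp.le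
          nlinarith
        · refine (h.toTrap.time_mono htm.1 hrt hrT x).trans ?_
          have h3 : r / t ≤ 1 + δ := by
            rw [div_le_iff₀ htm.1]
            have := hr.2
            nlinarith
          have h4 : 0 ≤ r / t := div_nonneg (by linarith [htm.1]) htm.1.le
          gcongr
      have a2 : (1 - δ) ^ (betaC N m * m) * Bb N m T k₀ x t ^ m ≤ Bb N m T k₀ x r ^ m := by
        have hB := Bb_pos hp hk0 htm.2 x
        refine pw' hB.le (by linarith) (Real.rpow_le_rpow (by
          have : 0 ≤ 1 - δ := by linarith
          positivity) ?_ hm0.le)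
        have h5 : 1 - δ ≤ (T - r) / s := by
          rw [le_div_iff₀ hs0]; have := hr.2; nlinarith
        have h6 := Bb_time_le (T := T) hp hk0 hs0 (l := (T - r) / s) (by linarith)
          (by rw [div_le_one hs0]; linarith [hr.1]) x
        rw [div_mul_cancel₀ _ hs0.ne', sub_sub_cancel] at h6
        refine le_trans ?_ h6
        have : (1 - δ) ^ betaC N m ≤ ((T - r) / s) ^ betaC N m :=
          Real.rpow_le_rpow (by linarith) h5 hβ0.le
        gcongr
      linarith
    have hI := intervalIntegral.integral_mono_on (show t ≤ t + δ * s by linarith)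
      (h.toTrap.time_int hk0 htm.1 (by linarith) (by linarith) x) intervalIntegrable_const hmon
    rw [intervalIntegral.integral_const, smul_eq_mul, add_sub_cancel_left] at hI
    rw [hw, hW]
    have := fin ((1 - δ) ^ (betaC N m * m) * Bb N m T k₀ x t ^ m)
      ((1 + δ) ^ (1 / (1 - m) * m) * u x t ^ m) (by linarith [(abs_le.1 hH).1])
    linarith
  · have hH := H (t - δ * s) t (by linarith) (by linarith) htm.2 (by linarith) x
    have hH' : θ / 2 ^ e * (T - (t - δ * s)) ^ e ≤ θ * s ^ e := by
      have h1 : (T - (t - δ * s)) ^ e ≤ (2 * s) ^ e :=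
        Real.rpow_le_rpow (by linarith) (by linarith) he0
      rw [Real.mul_rpow (by norm_num) hs0.le] at h1
      calc _ ≤ θ / 2 ^ e * (2 ^ e * s ^ e) := by gcongr
        _ = _ := by field_simp
    have hmon : ∀ r ∈ Set.Icc (t - δ * s) t, (1 - δ) ^ (1 / (1 - m) * m) * u x t ^ m
          - (1 + δ) ^ (betaC N m * m) * Bb N m T k₀ x t ^ m
          ≤ u x r ^ m - Bb N m T k₀ x r ^ m := by
      intro r hr
      have hr0 : 0 < r := by linarith [hr.1]
      have hrT : r < T := by linarith [hr.2]
      have hu := h.sol.pos x t htm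
      have hur := h.sol.pos x r ⟨hr0, hrT⟩
      have a1 : (1 - δ) ^ (1 / (1 - m) * m) * u x t ^ m ≤ u x r ^ m := by
        have hδ1 : 0 ≤ 1 - δ := by linarith
        refine pw' hu.le hδ1 (Real.rpow_le_rpow (by positivity) ?_ hm0.le)
        rcases eq_or_lt_of_le hr.2 with hrt | hrt
        · rw [hrt]
          have : (1 - δ) ^ (1 / (1 - m)) ≤ 1 :=
            Real.rpow_le_one hδ1 (by linarith) hpp.le
          nlinarith
        · have h1 := h.toTrap.time_mono hr0 hrt htm.2 x
          have h3 : (1 - δ) * (t / r) ≤ 1 := by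
            rw [← mul_div_assoc, div_le_one hr0]
            have := hr.1
            nlinarith
          have h4 : 0 ≤ t / r := div_nonneg htm.1.le hr0.le
          calc (1 - δ) ^ (1 / (1 - m)) * u x t
              ≤ (1 - δ) ^ (1 / (1 - m)) * ((t / r) ^ (1 / (1 - m)) * u x r) := by gcongr
            _ = ((1 - δ) * (t / r)) ^ (1 / (1 - m)) * u x r := by
              rw [Real.mul_rpow hδ1 h4, mul_assoc]
            _ ≤ 1 * u x r := by
              have := Real.rpow_le_one (mul_nonneg hδ1 h4) h3 hpp.le
              gcongr
            _ = _ := one_mul _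
      have a2 : Bb N m T k₀ x r ^ m ≤ (1 + δ) ^ (betaC N m * m) * Bb N m T k₀ x t ^ m := by
        have hB := Bb_pos hp hk0 htm.2 x
        refine pw hB.le (by linarith) (Real.rpow_le_rpow (Bb_pos hp hk0 hrT x).le ?_ hm0.le)
        have h5 : (T - r) / s ≤ 1 + δ := by
          rw [div_le_iff₀ hs0]; have := hr.1; nlinarith
        have h7 : 1 ≤ (T - r) / s := by rw [le_div_iff₀ hs0]; linarith [hr.2]
        have h6 := Bb_time_ge (T := T) hp hk0 hs0 (l := (T - r) / s) h7 x
        rw [div_mul_cancel₀ _ hs0.ne', sub_sub_cancel] at h6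
        refine h6.trans ?_
        have : ((T - r) / s) ^ betaC N m ≤ (1 + δ) ^ betaC N m :=
          Real.rpow_le_rpow (by linarith) h5 hβ0.le
        gcongr
      linarith
    have hI := intervalIntegral.integral_mono_on (show t - δ * s ≤ t by linarith)
      intervalIntegrable_const (h.toTrap.time_int hk0 (by linarith) (by linarith) htm.2 x) hmon
    rw [intervalIntegral.integral_const, smul_eq_mul, sub_sub_cancel] at hI
    rw [hw, hW]
    have := fin ((1 - δ) ^ (1 / (1 - m) * m) * u x t ^ m)
      ((1 + δ) ^ (betaC N m * m) * Bb N m T k₀ x t ^ m) (by linarith [(abs_le.1 hH).2])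
    linarith

end sandwich

/-! ### Uniform convergence -/

section conclusion
variable {N : ℕ} {m T k₁ k₂ k₀ : ℝ} {u : Euc N → ℝ → ℝ}

/-- Uniform convergence of the `m`-th powers: `δ` is fixed first, so that the factors `(1 ± δ) ^ c` in
`Setup.sandwich` are close to `1`, and then `θ` is taken small relative to `δ`. -/
lemma Setup.pow_unif (h : Setup N m T k₁ k₂ k₀ u) {ε : ℝ} (hε : 0 < ε) :
    ∃ τ₀, ∀ τ, τ₀ ≤ τ → τ ∈ Set.Ioi (-Real.log T) ∧ ∀ y : Euc N,
      |BbTil N m k₀ y ^ m - rescaleSol N m T u y τ ^ m| ≤ ε := by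
  have hp := h.par
  have hm0 := hp.hm0
  have hk0 : 0 < k₀ := h.hk2.trans_le h.hk0.1
  set M := BbTil N m k₂ (0 : Euc N) ^ m with hM
  have hM0 : 0 < M := Real.rpow_pos_of_pos (BbTil_pos hp h.hk2 _) _
  set q := 1 / (1 - m) * m with hq
  set b := betaC N m * m with hb
  have hq0 : 0 ≤ q := by have := hp.p_pos; positivity
  have hb0 : 0 ≤ b := by
    have : 0 < betaC N m := by
      rw [hp.beta_eq]; have := hp.gamma_neg; have := hp.N3; nlinarith
    positivity
  set φ : ℝ → ℝ := fun δ => M * ((1 + δ) ^ q - 1 + (1 - (1 - δ) ^ b) + (1 - (1 - δ) ^ q)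
    + ((1 + δ) ^ b - 1)) with hφ
  have hcont : ContinuousAt φ 0 := by
    have c1 : ∀ c : ℝ, ContinuousAt (fun δ : ℝ => (1 + δ) ^ c) 0 := fun c =>
      (continuousAt_const.add continuousAt_id).rpow_const (Or.inl (by simp))
    have c2 : ∀ c : ℝ, ContinuousAt (fun δ : ℝ => (1 - δ) ^ c) 0 := fun c =>
      (continuousAt_const.sub continuousAt_id).rpow_const (Or.inl (by simp))
    exact continuousAt_const.mul (((((c1 q).sub continuousAt_const).add
      (continuousAt_const.sub (c2 b))).add (continuousAt_const.sub (c2 q))).add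
      ((c1 b).sub continuousAt_const))
  have hφ0 : φ 0 = 0 := by simp [hφ]
  have hev : ∀ᶠ δ in 𝓝[>] (0 : ℝ), φ δ ≤ ε / 2 := by
    have := hcont.tendsto
    rw [hφ0] at this
    exact (this.mono_left nhdsWithin_le_nhds).eventually (ge_mem_nhds (half_pos hε))
  have hev2 : ∀ᶠ δ in 𝓝[>] (0 : ℝ), δ ∈ Set.Ioo (0 : ℝ) (1 / 2) :=
    Ioo_mem_nhdsGT (by norm_num)
  obtain ⟨δ, hδφ, hδ0, hδ1⟩ := (hev.and hev2).exists
  obtain ⟨τ₀, H⟩ := h.sandwich (θ := ε / 2 * δ) (by positivity)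
  refine ⟨τ₀, fun τ hτ => ⟨(H τ hτ).1, fun y => ?_⟩⟩
  have hτm := (H τ hτ).1
  obtain ⟨ha, hb'⟩ := (H τ hτ).2 δ hδ0 hδ1.le y
  rw [mul_div_cancel_right₀ _ hδ0.ne'] at ha hb'
  set w := rescaleSol N m T u y τ ^ m with hw
  set W := BbTil N m k₀ y ^ m with hW
  have hw0 : 0 < w := Real.rpow_pos_of_pos (h.resc_pos hτm y) _
  have hW0 : 0 < W := Real.rpow_pos_of_pos (BbTil_pos hp hk0 y) _
  have h0y : BbTil N m k₂ y ≤ BbTil N m k₂ (0 : Euc N) := BbTil_radial hp h.hk2 (by simp)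
  have hwM : w ≤ M :=
    Real.rpow_le_rpow (h.resc_pos hτm y).le ((h.resc_hi hτm y).trans h0y) hm0.le
  have hWM : W ≤ M := by
    refine Real.rpow_le_rpow (BbTil_pos hp hk0 y).le (le_trans ?_ h0y) hm0.le
    rw [← rescale_Bb hp (T := T) hk0 y τ, ← rescale_Bb hp (T := T) h.hk2 y τ]
    exact mul_le_mul_of_nonneg_left (Bb_antitone hp h.hk2 h.hk0.1 (mem_time h.hT hτm).2 _)
      (Real.exp_pos _).le
  have p1 : ∀ c : ℝ, 0 ≤ c → 0 ≤ (1 + δ) ^ c - 1 := fun c hc =>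
    sub_nonneg.2 (Real.one_le_rpow (by linarith) hc)
  have p2 : ∀ c : ℝ, 0 ≤ c → 0 ≤ 1 - (1 - δ) ^ c := fun c hc =>
    sub_nonneg.2 (Real.rpow_le_one (by linarith) (by linarith) hc)
  have r1 := mul_le_mul_of_nonneg_left hwM (p1 q hq0)
  have r2 := mul_le_mul_of_nonneg_left hWM (p2 b hb0)
  have r3 := mul_le_mul_of_nonneg_left hwM (p2 q hq0)
  have r4 := mul_le_mul_of_nonneg_left hWM (p1 b hb0)
  have s1 := mul_nonneg (p1 q hq0) hM0.le
  have s2 := mul_nonneg (p2 b hb0) hM0.le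
  have s3 := mul_nonneg (p2 q hq0) hM0.le
  have s4 := mul_nonneg (p1 b hb0) hM0.le
  simp only [hφ] at hδφ
  rw [abs_le]
  constructor <;> linarith

/-- Uniform convergence passes from `m`-th powers to the functions themselves, since `z ↦ z ^ (1/m)`
is uniformly continuous on bounded intervals. -/
lemma Setup.tendstoUniformly (h : Setup N m T k₁ k₂ k₀ u) :
    TendstoUniformly (fun (τ : ℝ) (x : Euc N) => rescaleSol N m T u x τ) (BbTil N m k₀) atTop := by
  have hp := h.par
  have hm0 := hp.hm0
  have hk0 : 0 < k₀ := h.hk2.trans_le h.hk0.1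
  set M := BbTil N m k₂ (0 : Euc N) ^ m with hM
  rw [Metric.tendstoUniformly_iff]
  intro ε hε
  have huc : UniformContinuousOn (fun z : ℝ => z ^ (1 / m)) (Set.Icc 0 M) :=
    isCompact_Icc.uniformContinuousOn_of_continuous
      (continuousOn_id.rpow_const fun z _ => Or.inr (by positivity))
  rw [Metric.uniformContinuousOn_iff] at huc
  obtain ⟨η, hη, HU⟩ := huc ε hε
  obtain ⟨τ₀, H⟩ := h.pow_unif (half_pos hη)
  filter_upwards [eventually_ge_atTop τ₀] with τ hτ y
  have hτm := (H τ hτ).1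
  have h1 := (H τ hτ).2 y
  have h0y : BbTil N m k₂ y ≤ BbTil N m k₂ (0 : Euc N) := BbTil_radial hp h.hk2 (by simp)
  have hv := h.resc_pos hτm y
  have hV := BbTil_pos hp hk0 y
  have hVM : BbTil N m k₀ y ≤ BbTil N m k₂ y := by
    rw [← rescale_Bb hp (T := T) hk0 y τ, ← rescale_Bb hp (T := T) h.hk2 y τ]
    exact mul_le_mul_of_nonneg_left (Bb_antitone hp h.hk2 h.hk0.1 (mem_time h.hT hτm).2 _)
      (Real.exp_pos _).le
  have h2 := HU (BbTil N m k₀ y ^ m)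
    ⟨by positivity, Real.rpow_le_rpow hV.le (hVM.trans h0y) hm0.le⟩
    (rescaleSol N m T u y τ ^ m)
    ⟨by positivity, Real.rpow_le_rpow hv.le ((h.resc_hi hτm y).trans h0y) hm0.le⟩
    (by rw [Real.dist_eq]; linarith)
  simp only [← Real.rpow_mul hv.le, ← Real.rpow_mul hV.le, mul_one_div_cancel hm0.ne',
    Real.rpow_one] at h2
  exact h2

/-- `Setup.L1_tendsto` for the extended-real valued integral, which involves no integrability
convention. -/
lemma Setup.L1_tendsto' (h : Setup N m T k₁ k₂ k₀ u) :
    Tendsto (fun τ : ℝ => ∫⁻ x, ENNReal.ofReal |rescaleSol N m T u x τ - BbTil N m k₀ x|) atTop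
      (𝓝 0) := by
  have h1 := ENNReal.tendsto_ofReal h.L1_tendsto
  rw [ENNReal.ofReal_zero] at h1
  refine h1.congr' ?_
  filter_upwards [eventually_gt_atTop (-Real.log T)] with τ hτ
  refine ofReal_integral_eq_lintegral_ofReal ?_ (Eventually.of_forall fun x => abs_nonneg _)
  obtain ⟨A, hA, H⟩ := BbTil_abs (N := N) (k₁ := k₁) h.par h.hk2
  have hk0 : 0 < k₀ := h.hk2.trans_le h.hk0.1
  have hτm : τ ∈ Set.Ioi (-Real.log T) := hτ
  have hc : Continuous fun x : Euc N => rescaleSol N m T u x τ - BbTil N m k₀ x := by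
    have e : ∀ x : Euc N, rescaleSol N m T u x τ - BbTil N m k₀ x
        = rescaleSol N m T u x τ - rescaleSol N m T (Bb N m T k₀) x τ := fun x => by
      rw [rescale_Bb h.par hk0]
    simp_rw [e]
    unfold rescaleSol
    exact (continuous_const.mul ((h.sol.slice (mem_time h.hT hτm)).continuous.comp
      (continuous_const_smul _))).sub (continuous_const.mul
      ((Bb_continuous h.par hk0 (mem_time h.hT hτm).2).comp (continuous_const_smul _)))
  refine (h.Kf_dev_integrable hτm h.hk0 |>.const_mul A).mono' hc.abs.aestronglyMeasurable
    (Eventually.of_forall fun x => ?_)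
  rw [Real.norm_eq_abs, abs_abs, h.resc_eq hτm]
  exact H _ (h.Kf_mem hτm x) _ h.hk0 x

end conclusion

/-- In the integrable range (N-4)/(N-2) < m < (N-2)/N, a solution trapped
between two Barenblatt solutions converges after rescaling, uniformly and in L¹, to the
rescaled Barenblatt profile B̃_{k₀}, where k₀ is the unique constant with
∫ (u₀ - B_{k₀}(·,0)) = 0. -/
theorem extinction_profile_integrable_case (N : ℕ) (hN : 3 ≤ N) (m T k₁ k₂ : ℝ)
    (hml : ((N : ℝ) - 4) / ((N : ℝ) - 2) < m) (hm1 : m < ((N : ℝ) - 2) / N)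
    (hm0 : 0 < m) (hT : 0 < T) (hk2 : 0 < k₂) (hk12 : k₂ < k₁)
    (u : Euc N → ℝ → ℝ) (u₀ : Euc N → ℝ)
    (hsol : IsFDESol N m T u u₀)
    (htrap0 : ∀ x : Euc N,
      (Cst N m * T / (k₁ + ‖x‖ ^ 2)) ^ (1 / (1 - m)) ≤ u₀ x ∧
        u₀ x ≤ (Cst N m * T / (k₂ + ‖x‖ ^ 2)) ^ (1 / (1 - m)))
    (htrap : ∀ x : Euc N, ∀ t ∈ Set.Ioo (0:ℝ) T,
      Bb N m T k₁ x t ≤ u x t ∧ u x t ≤ Bb N m T k₂ x t) :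
    ∃ k₀ : ℝ, 0 < k₀ ∧
      Integrable (fun x => u₀ x - Bb N m T k₀ x 0) volume ∧
      (∫ x, (u₀ x - Bb N m T k₀ x 0)) = 0 ∧
      (∀ k' : ℝ, 0 < k' → Integrable (fun x => u₀ x - Bb N m T k' x 0) volume →
        (∫ x, (u₀ x - Bb N m T k' x 0)) = 0 → k' = k₀) ∧
      TendstoUniformly (fun τ (x : Euc N) => rescaleSol N m T u x τ)
        (BbTil N m k₀) atTop ∧
      Tendsto (fun τ => ∫⁻ x, ENNReal.ofReal |rescaleSol N m T u x τ - BbTil N m k₀ x|)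
        atTop (nhds 0) := by
  have hp : Par N m := ⟨hN, hml, hm1, hm0⟩
  have htr : Trap N m T k₁ k₂ u := ⟨hp, hT, hk2, hk12, hsol.classSol,
    fun x t ht => (htrap x t ht).1, fun x t ht => (htrap x t ht).2⟩
  obtain ⟨k₀, hk, hi, hz, huniq⟩ := htr.exists_k0 hsol
  have hS : Setup N m T k₁ k₂ k₀ u := ⟨htr, hk, fun t ht => htr.mass hsol hk hz ht⟩
  exact ⟨k₀, hk2.trans_le hk.1, hi, hz, huniq, hS.tendstoUniformly, hS.L1_tendsto'⟩
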